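/- arXiv:1601.04032 — 2 statements merged into one kernel-verified Lean document; each statement's English description precedes it below -/
import Mathlib

section
/- Let α, β ∈ ℂ and let (p, q) be a transcendental solution on ℂ of the Hamiltonian system, i.e. p and q are meromorphic on ℂ, not rational, and satisfy p′ = −q² − z·p − α, q′ = p² + z·q + β wherever holomorphic. Then m(r, p) + m(r, q) = O(log r) as r → ∞, and consequently T(r, p) = N(r, p) + O(log r) and T(r, q) = N(r, q) + O(log r). -/
open Filter Topology Asymptotics

/-- The positive part of the logarithm, `log⁺ x = max 0 (log x)`. -/
noncomputable def logPlus (x : ℝ) : ℝ := max 0 (Real.log x)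

/-- The Nevanlinna proximity function
`m(r, f) = (2π)⁻¹ ∫₀^{2π} log⁺ |f(r e^{iθ})| dθ`. -/
noncomputable def proximity (f : ℂ → ℂ) (r : ℝ) : ℝ :=
  (2 * Real.pi)⁻¹ * ∫ θ in (0:ℝ)..(2 * Real.pi),
    logPlus ‖f ((r : ℂ) * Complex.exp ((θ : ℂ) * Complex.I))‖

/-- The multiplicity of `z₀` as a pole of `f`: the least `k` such that
`(z − z₀)^k · f(z)` has a finite limit at `z₀` (and `0` if there is no such `k`). -/
noncomputable def poleMult (f : ℂ → ℂ) (z₀ : ℂ) : ℕ :=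
  sInf {k : ℕ | ∃ c : ℂ, Tendsto (fun z => (z - z₀) ^ k * f z) (𝓝[≠] z₀) (𝓝 c)}

/-- The unintegrated counting function of poles,
`n(t, f) = Σ_{|z| ≤ t} (multiplicity of z as pole of f)`. -/
noncomputable def nPoles (f : ℂ → ℂ) (t : ℝ) : ℝ :=
  ∑ᶠ z ∈ Metric.closedBall (0 : ℂ) t, (poleMult f z : ℝ)

/-- The integrated counting function of poles,
`N(r, f) = ∫₀^r (n(t,f) − n(0,f))/t dt + n(0,f) log r`. -/
noncomputable def countingN (f : ℂ → ℂ) (r : ℝ) : ℝ :=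
  (∫ t in (0:ℝ)..r, (nPoles f t - nPoles f 0) / t) + nPoles f 0 * Real.log r

/-- The Nevanlinna characteristic `T(r, f) = m(r, f) + N(r, f)`. -/
noncomputable def nevT (f : ℂ → ℂ) (r : ℝ) : ℝ := proximity f r + countingN f r

/-- `(p, q)` is a (meromorphic) solution on `ℂ` of the Hamiltonian system
`p′ = −q² − z·p − α`, `q′ = p² + z·q + β`. -/
def IsHamSolution (α β : ℂ) (p q : ℂ → ℂ) : Prop :=
  MeromorphicOn p Set.univ ∧ MeromorphicOn q Set.univ ∧
    ∀ z : ℂ, AnalyticAt ℂ p z → AnalyticAt ℂ q z →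
      deriv p z = -(q z) ^ 2 - z * p z - α ∧ deriv q z = (p z) ^ 2 + z * q z + β

/-- A function is rational if it agrees with a quotient of polynomials away from
finitely many points. -/
def IsRationalFn (f : ℂ → ℂ) : Prop :=
  ∃ P Q : Polynomial ℂ, Q ≠ 0 ∧ ∀ᶠ z in Filter.cofinite, f z = P.eval z / Q.eval z

/-- `z₀` is a pole of `f`: `|f| → ∞` at `z₀`. -/
def IsPole (f : ℂ → ℂ) (z₀ : ℂ) : Prop :=
  Tendsto (fun z => ‖f z‖) (𝓝[≠] z₀) atTop

/-- `f` has residue `ρ` at a simple pole `z₀`: `(z − z₀)·f(z) → ρ` at `z₀`. -/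
def HasResidue (f : ℂ → ℂ) (z₀ ρ : ℂ) : Prop :=
  Tendsto (fun z => (z - z₀) * f z) (𝓝[≠] z₀) (𝓝 ρ)

/-- `n(r, S)`: the number of points of `S` in the closed disc of radius `r`. -/
noncomputable def setCount (S : Set ℂ) (r : ℝ) : ℝ :=
  ((S ∩ Metric.closedBall (0 : ℂ) r).ncard : ℝ)

/-- The closed sector `{t·e^{iθ} : t > 0, a ≤ θ ≤ b}`. -/
def ClosedSector (a b : ℝ) : Set ℂ :=
  {z | ∃ t θ : ℝ, 0 < t ∧ a ≤ θ ∧ θ ≤ b ∧ z = (t : ℂ) * Complex.exp ((θ : ℂ) * Complex.I)}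


lemma nf_analytic {f : ℂ → ℂ} {x : ℂ} {M : ℝ} (hf : MeromorphicNFAt f x)
    (h : ∃ᶠ z in 𝓝[≠] x, ‖f z‖ ≤ M) : AnalyticAt ℂ f x := by
  rw [← hf.meromorphicOrderAt_nonneg_iff_analyticAt]
  by_contra hneg
  push Not at hneg
  have ht := tendsto_cobounded_of_meromorphicOrderAt_neg hneg
  have h2 := (tendsto_norm_cobounded_atTop.comp ht).eventually (eventually_gt_atTop M)
  exact h (h2.mono fun z hz => not_le.mpr hz)

lemma ode_at {f g : ℂ → ℂ} {x : ℂ} (hf : AnalyticAt ℂ f x) (hg : ContinuousAt g x)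
    (h : ∀ᶠ z in 𝓝[≠] x, deriv f z = g z) : deriv f x = g x :=
  ((hf.deriv.continuousAt.eventuallyEq_nhds_iff_eventuallyEq_nhdsNE hg).1 h).eq_of_nhds

lemma boot_step {y : ℂ → ℂ} {z0 e : ℂ} {K t s A : ℝ} (hts : t ≤ s) (h0 : ‖y (z0 + t * e)‖ ≤ A + K * (t * ‖e‖))
    (hd : ∀ r ∈ Set.Icc t s, AnalyticAt ℂ y (z0 + r * e) ∧ ‖deriv y (z0 + r * e)‖ ≤ K) :
    ‖y (z0 + s * e)‖ ≤ A + K * (s * ‖e‖) := by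
  have h := norm_image_sub_le_of_norm_deriv_le_segment' (f := fun r : ℝ => y (z0 + r * e))
    (f' := fun r : ℝ => deriv y (z0 + r * e) * e) (a := t) (b := s) (C := K * ‖e‖) ?_ ?_ s ⟨hts, le_rfl⟩
  · have h1 := norm_le_norm_add_norm_sub' (y (z0 + s * e)) (y (z0 + t * e))
    nlinarith
  · intro r hr
    have h1 : HasDerivAt (fun w : ℂ => z0 + w * e) e (r : ℂ) := by
      simpa using ((hasDerivAt_id (r : ℂ)).mul_const e).const_add z0
    have h2 := (hd r hr).1.differentiableAt.hasDerivAt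
    have h3 := HasDerivAt.comp (r : ℂ) h2 h1
    exact h3.comp_ofReal.hasDerivWithinAt
  · intro r hr
    rw [norm_mul]
    exact mul_le_mul_of_nonneg_right (hd r ⟨hr.1, hr.2.le⟩).2 (norm_nonneg _)

theorem boot {y1 y2 : ℂ → ℂ} (n1 : ∀ x, MeromorphicNFAt y1 x) (n2 : ∀ x, MeromorphicNFAt y2 x)
    {F1 F2 : ℂ → ℂ → ℂ → ℂ} (c1 : Continuous fun t : ℂ × ℂ × ℂ => F1 t.1 t.2.1 t.2.2)
    (c2 : Continuous fun t : ℂ × ℂ × ℂ => F2 t.1 t.2.1 t.2.2)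
    (e1 : ∀ x, ∀ᶠ z in 𝓝[≠] x, deriv y1 z = F1 z (y1 z) (y2 z))
    (e2 : ∀ x, ∀ᶠ z in 𝓝[≠] x, deriv y2 z = F2 z (y1 z) (y2 z))
    {z0 : ℂ} {ρ M1 M2 K1 K2 : ℝ} (a1 : AnalyticAt ℂ y1 z0) (a2 : AnalyticAt ℂ y2 z0)
    (hK1 : 0 ≤ K1) (hK2 : 0 ≤ K2)
    (b1 : ∀ z a b, ‖z - z0‖ ≤ ρ → ‖a‖ ≤ M1 → ‖b‖ ≤ M2 → ‖F1 z a b‖ ≤ K1)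
    (b2 : ∀ z a b, ‖z - z0‖ ≤ ρ → ‖a‖ ≤ M1 → ‖b‖ ≤ M2 → ‖F2 z a b‖ ≤ K2)
    (s1 : ‖y1 z0‖ + K1 * ρ < M1) (s2 : ‖y2 z0‖ + K2 * ρ < M2) (x : ℂ) (hx : ‖x - z0‖ ≤ ρ) :
    AnalyticAt ℂ y1 x ∧ AnalyticAt ℂ y2 x ∧ ‖y1 x‖ ≤ ‖y1 z0‖ + K1 * ‖x - z0‖ ∧
      ‖y2 x‖ ≤ ‖y2 z0‖ + K2 * ‖x - z0‖ := by
  have E : ∀ z, AnalyticAt ℂ y1 z → AnalyticAt ℂ y2 z → 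
      deriv y1 z = F1 z (y1 z) (y2 z) ∧ deriv y2 z = F2 z (y1 z) (y2 z) := by
    intro z h1 h2
    have hc : ContinuousAt (fun z => ((z, y1 z, y2 z) : ℂ × ℂ × ℂ)) z :=
      continuousAt_id.prodMk (h1.continuousAt.prodMk h2.continuousAt)
    exact ⟨ode_at h1 (c1.continuousAt.comp hc) (e1 z), ode_at h2 (c2.continuousAt.comp hc) (e2 z)⟩
  by_cases hxz : x = z0
  · subst hxz; simp [a1, a2]
  set e := x - z0 with he
  have he0 : e ≠ 0 := sub_ne_zero.2 hxz
  have hep : 0 < ‖e‖ := norm_pos_iff.2 he0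
  have hγc : Continuous (fun t : ℝ => z0 + (t : ℂ) * e) := by fun_prop
  have hγi : Function.Injective (fun t : ℝ => z0 + (t : ℂ) * e) := by
    intro s t h
    simpa [he0] using h
  have hle : ∀ t : ℝ, t ∈ Set.Icc (0:ℝ) 1 → ‖(z0 + (t:ℂ) * e) - z0‖ ≤ ρ ∧ t * ‖e‖ ≤ ρ := by
    intro t ht
    have : ‖(z0 + (t:ℂ) * e) - z0‖ = t * ‖e‖ := by
      simp [abs_of_nonneg ht.1]
    rw [this]
    have : t * ‖e‖ ≤ ρ := by nlinarith [ht.2]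
    exact ⟨this, this⟩
  set S : Set ℝ := {t | AnalyticAt ℂ y1 (z0 + (t:ℂ) * e) ∧ AnalyticAt ℂ y2 (z0 + (t:ℂ) * e) ∧
    ‖y1 (z0 + (t:ℂ) * e)‖ ≤ ‖y1 z0‖ + K1 * (t * ‖e‖) ∧ ‖y2 (z0 + (t:ℂ) * e)‖ ≤ ‖y2 z0‖ + K2 * (t * ‖e‖)} with hS
  have hb : ∀ t ∈ S ∩ Set.Icc (0:ℝ) 1, ‖y1 (z0 + (t:ℂ) * e)‖ < M1 ∧ ‖y2 (z0 + (t:ℂ) * e)‖ < M2 := by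
    rintro t ⟨⟨-, -, h1, h2⟩, ht⟩
    have := (hle t ht).2
    constructor <;> nlinarith
  have hmain : Set.Icc (0:ℝ) 1 ⊆ S := by
    apply IsClosed.Icc_subset_of_forall_mem_nhdsWithin
    · rw [← closure_subset_iff_isClosed]
      intro t ht
      have htI : t ∈ Set.Icc (0:ℝ) 1 := by
        have := closure_mono (Set.inter_subset_right) ht
        rwa [isClosed_Icc.closure_eq] at this
      by_contra hnot
      have hfr : ∃ᶠ s in 𝓝[≠] t, s ∈ S ∩ Set.Icc (0:ℝ) 1 := by
        rw [mem_closure_iff_frequently] at ht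
        rw [frequently_nhdsWithin_iff]
        exact ht.mono fun s hs => ⟨hs, fun h => hnot (h ▸ hs)⟩
      have htend : Tendsto (fun t : ℝ => z0 + (t : ℂ) * e) (𝓝[≠] t) (𝓝[≠] (z0 + (t:ℂ) * e)) :=
        hγc.continuousAt.continuousWithinAt.tendsto_nhdsWithin fun s hs h => hs (hγi h)
      have A1 : AnalyticAt ℂ y1 (z0 + (t:ℂ) * e) :=
        nf_analytic (M := M1) (n1 _) (htend.frequently (hfr.mono fun s hs => (hb s hs).1.le))
      have A2 : AnalyticAt ℂ y2 (z0 + (t:ℂ) * e) :=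
        nf_analytic (M := M2) (n2 _) (htend.frequently (hfr.mono fun s hs => (hb s hs).2.le))
      refine hnot ⟨⟨A1, A2, ?_, ?_⟩, htI⟩
      · have T : Tendsto (fun s : ℝ => ‖y1 (z0 + (s:ℂ) * e)‖ - K1 * (s * ‖e‖)) (𝓝 t)
            (𝓝 (‖y1 (z0 + (t:ℂ) * e)‖ - K1 * (t * ‖e‖))) := by
          have : ContinuousAt (fun s : ℝ => y1 (z0 + (s:ℂ) * e)) t := 
            ContinuousAt.comp (f := fun s : ℝ => z0 + (s:ℂ) * e) A1.continuousAt hγc.continuousAt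
          exact (this.norm.sub (by fun_prop)).tendsto
        have := le_of_tendsto_of_frequently (b := ‖y1 z0‖) T ((frequently_nhdsWithin_iff.1 hfr).mono fun s hs => by
          have := hs.1.1.2.2.1; linarith)
        linarith
      · have T : Tendsto (fun s : ℝ => ‖y2 (z0 + (s:ℂ) * e)‖ - K2 * (s * ‖e‖)) (𝓝 t)
            (𝓝 (‖y2 (z0 + (t:ℂ) * e)‖ - K2 * (t * ‖e‖))) := by
          have : ContinuousAt (fun s : ℝ => y2 (z0 + (s:ℂ) * e)) t := 
            ContinuousAt.comp (f := fun s : ℝ => z0 + (s:ℂ) * e) A2.continuousAt hγc.continuousAt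
          exact (this.norm.sub (by fun_prop)).tendsto
        have := le_of_tendsto_of_frequently (b := ‖y2 z0‖) T ((frequently_nhdsWithin_iff.1 hfr).mono fun s hs => by
          have := hs.1.1.2.2.2; linarith)
        linarith
    · simp [hS, a1, a2]
    · rintro t ⟨htS, ht⟩
      obtain ⟨B1, B2⟩ := hb t ⟨htS, ht.1, ht.2.le⟩
      obtain ⟨A1, A2, L1, L2⟩ := htS
      have ev : ∀ᶠ z in 𝓝 (z0 + (t:ℂ) * e), AnalyticAt ℂ y1 z ∧ AnalyticAt ℂ y2 z ∧ ‖y1 z‖ < M1 ∧ ‖y2 z‖ < M2 := 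
        A1.eventually_analyticAt.and (A2.eventually_analyticAt.and
          ((A1.continuousAt.norm.eventually_lt continuousAt_const B1).and
           (A2.continuousAt.norm.eventually_lt continuousAt_const B2)))
      have ev2 := hγc.continuousAt.eventually ev
      obtain ⟨ε, hε, hball⟩ := Metric.eventually_nhds_iff.1 ev2
      have : Set.Ioo t (min 1 (t + ε)) ∈ 𝓝[>] t := Ioo_mem_nhdsGT (lt_min ht.2 (by linarith))
      filter_upwards [this] with s hs
      have hs1 : s < 1 := hs.2.trans_le (min_le_left _ _)
      have hs2 : s < t + ε := hs.2.trans_le (min_le_right _ _)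
      have key : ∀ r ∈ Set.Icc t s, AnalyticAt ℂ y1 (z0 + (r:ℂ) * e) ∧ AnalyticAt ℂ y2 (z0 + (r:ℂ) * e) ∧
         ‖deriv y1 (z0 + r * e)‖ ≤ K1 ∧ ‖deriv y2 (z0 + r * e)‖ ≤ K2 := by
        intro r hr
        have hd : dist r t < ε := by
          rw [Real.dist_eq, abs_lt]; constructor <;> linarith [hr.1, hr.2]
        obtain ⟨q1, q2, q3, q4⟩ := hball hd
        have hrI := (hle r ⟨ht.1.trans hr.1, by linarith [hr.2]⟩).1
        obtain ⟨d1, d2⟩ := E _ q1 q2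
        exact ⟨q1, q2, d1 ▸ b1 _ _ _ hrI q3.le q4.le, d2 ▸ b2 _ _ _ hrI q3.le q4.le⟩
      have ks := key s ⟨hs.1.le, le_rfl⟩
      exact ⟨ks.1, ks.2.1, boot_step hs.1.le L1 fun r hr => ⟨(key r hr).1, (key r hr).2.2.1⟩,
        boot_step hs.1.le L2 fun r hr => ⟨(key r hr).2.1, (key r hr).2.2.2⟩⟩
  have h1 := hmain (Set.right_mem_Icc.2 zero_le_one)
  have hx1 : z0 + ((1:ℝ):ℂ) * e = x := by simp [he]
  simp only [hS, Set.mem_ofPred_eq, hx1, one_mul] at h1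
  exact h1


structure HSys (α β : ℂ) (P Q : ℂ → ℂ) : Prop where
  nP : ∀ x, MeromorphicNFAt P x
  nQ : ∀ x, MeromorphicNFAt Q x
  ev : ∀ z, ∀ᶠ x in 𝓝[≠] z, AnalyticAt ℂ P x ∧ AnalyticAt ℂ Q x ∧
    deriv P x = -(Q x) ^ 2 - x * P x - α ∧ deriv Q x = (P x) ^ 2 + x * Q x + β

noncomputable def hamH (α β z p q : ℂ) : ℂ := (p ^ 3 + q ^ 3) / 3 + z * p * q + α * q + β * p

noncomputable def fS (κ z u v : ℂ) : ℂ := z + u * (-2 * κ + u * v)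
noncomputable def fQ (γ z σ : ℂ) : ℂ := σ ^ 2 / 2 + z * σ + γ
noncomputable def F1 (γ κ z u v : ℂ) : ℂ := 1 / 2 + u ^ 2 * fQ γ z (fS κ z u v)
noncomputable def F2 (γ κ z u v : ℂ) : ℂ := -2 * fQ γ z (fS κ z u v) * (-κ + u * v)
noncomputable def fG (γ κ z u v : ℂ) : ℂ := v / 4 + (fS κ z u v) ^ 3 / 12 + z * (fS κ z u v) ^ 2 / 4 + γ * (fS κ z u v) / 2

lemma chart_bounds {γ κ z u v : ℂ} {B : ℝ} (hB : 1 ≤ B) (hγ : ‖γ‖ ≤ 2 * B) (hκ : ‖κ‖ ≤ 3 * B)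
    (hz : ‖z‖ ≤ 2 * B) (hu : ‖u‖ ≤ 1 / (500 * B)) (hv : ‖v‖ ≤ 2000 * B ^ 3) :
    ‖fS κ z u v‖ ≤ 3 * B ∧ ‖fQ γ z (fS κ z u v)‖ ≤ 13 * B ^ 2 ∧ ‖F1 γ κ z u v - 1 / 2‖ ≤ 1 / 10 ∧
    ‖F2 γ κ z u v‖ ≤ 400 * B ^ 4 := by
  have hB0 : 0 < B := by linarith
  have hBB : B ≤ B ^ 2 := by nlinarith
  have huv : ‖u * v‖ ≤ 4 * B ^ 2 := by
    rw [norm_mul]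
    calc ‖u‖ * ‖v‖ ≤ 1 / (500 * B) * (2000 * B ^ 3) := by gcongr
      _ = 4 * B ^ 2 := by field_simp; norm_num
  have hw : ‖-2 * κ + u * v‖ ≤ 10 * B ^ 2 := by
    refine (norm_add_le _ _).trans ?_
    rw [norm_mul]
    rw [norm_mul] at huv ⊢
    norm_num
    linarith
  have hs : ‖u * (-2 * κ + u * v)‖ ≤ 1 * B := by
    rw [norm_mul]
    calc ‖u‖ * ‖-2 * κ + u * v‖ ≤ 1 / (500 * B) * (10 * B ^ 2) := by gcongr
      _ = 1 / 50 * B := by field_simp; norm_num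
      _ ≤ 1 * B := by linarith
  have hS : ‖fS κ z u v‖ ≤ 3 * B := by
    unfold fS
    refine (norm_add_le _ _).trans ?_
    linarith
  have hQ : ‖fQ γ z (fS κ z u v)‖ ≤ 13 * B ^ 2 := by
    unfold fQ
    generalize fS κ z u v = σ at hS
    calc ‖σ ^ 2 / 2 + z * σ + γ‖ ≤ ‖σ‖ ^ 2 / 2 + ‖z‖ * ‖σ‖ + ‖γ‖ := by
          refine (norm_add₃_le).trans ?_
          simp
      _ ≤ (3 * B) ^ 2 / 2 + (2 * B) * (3 * B) + 2 * B := by gcongr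
      _ ≤ 13 * B ^ 2 := by nlinarith
  refine ⟨hS, hQ, ?_, ?_⟩
  · unfold F1
    rw [add_sub_cancel_left, norm_mul, norm_pow]
    calc ‖u‖ ^ 2 * ‖fQ γ z (fS κ z u v)‖ ≤ (1 / (500 * B)) ^ 2 * (13 * B ^ 2) := by gcongr
      _ = 13 / 250000 := by field_simp; norm_num
      _ ≤ 1 / 10 := by norm_num
  · unfold F2
    rw [norm_mul, norm_mul]
    have : ‖-κ + u * v‖ ≤ 7 * B ^ 2 := by
      refine (norm_add_le _ _).trans ?_
      rw [norm_neg]; linarith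
    calc ‖(-2 : ℂ)‖ * ‖fQ γ z (fS κ z u v)‖ * ‖-κ + u * v‖ ≤ 2 * (13 * B ^ 2) * (7 * B ^ 2) := by
          gcongr; simp
      _ ≤ 400 * B ^ 4 := by nlinarith [pow_pos hB0 4]

lemma nf_eq {f g : ℂ → ℂ} {x : ℂ} (hf : MeromorphicNFAt f x) (hg : AnalyticAt ℂ g x)
    (h : f =ᶠ[𝓝[≠] x] g) : AnalyticAt ℂ f x ∧ f x = g x := by
  have := (hf.eventuallyEq_nhdsNE_iff_eventuallyEq_nhds hg.meromorphicNFAt).1 h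
  exact ⟨hg.congr this.symm, this.eq_of_nhds⟩

lemma ne_ev {p : ℂ → Prop} {x : ℂ} (h : ∀ᶠ z in 𝓝[≠] x, p z) : ∀ᶠ z in 𝓝[≠] x, ∀ᶠ y in 𝓝 z, p y := by
  have h2 := eventually_eventually_nhdsWithin.2 h
  filter_upwards [h2, self_mem_nhdsWithin] with z hz hzx
  rwa [isOpen_compl_singleton.nhdsWithin_eq hzx] at hz

/-- The chart coordinates near poles. -/
lemma chart_exists {α β : ℂ} {P Q : ℂ → ℂ} (h : HSys α β P Q) {z1 : ℂ} (hP : AnalyticAt ℂ P z1)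
    (hQ : AnalyticAt ℂ Q z1) (hd : P z1 - Q z1 ≠ 0) :
    ∃ u v : ℂ → ℂ, (∀ x, MeromorphicNFAt u x) ∧ (∀ x, MeromorphicNFAt v x) ∧
      AnalyticAt ℂ u z1 ∧ AnalyticAt ℂ v z1 ∧ u z1 = (P z1 - Q z1)⁻¹ ∧
      v z1 = (P z1 + Q z1 - z1) * (P z1 - Q z1) ^ 2 + 2 * (β - α - 1) * (P z1 - Q z1) ∧
      (∀ x, ∀ᶠ z in 𝓝[≠] x, deriv u z = F1 (α + β) (β - α - 1) z (u z) (v z)) ∧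
      (∀ x, ∀ᶠ z in 𝓝[≠] x, deriv v z = F2 (α + β) (β - α - 1) z (u z) (v z)) ∧
      (∀ x, ∀ᶠ z in 𝓝[≠] x, P z = (fS (β - α - 1) z (u z) (v z) + (u z)⁻¹) / 2 ∧
        Q z = (fS (β - α - 1) z (u z) (v z) - (u z)⁻¹) / 2) := by
  set κ := β - α - 1 with hκ
  set u0 : ℂ → ℂ := fun z => (P z - Q z)⁻¹ with hu0
  set v0 : ℂ → ℂ := fun z => (P z + Q z - z) * (P z - Q z) ^ 2 + 2 * κ * (P z - Q z) with hv0
  have mP : ∀ x, MeromorphicAt P x := fun x => (h.nP x).meromorphicAt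
  have mQ : ∀ x, MeromorphicAt Q x := fun x => (h.nQ x).meromorphicAt
  have md : ∀ x, MeromorphicAt (fun z => P z - Q z) x := fun x => (mP x).sub (mQ x)
  have mu : MeromorphicOn u0 Set.univ := fun x _ => (md x).inv
  have mv : MeromorphicOn v0 Set.univ := fun x _ =>
    ((((mP x).add (mQ x)).sub (MeromorphicAt.id x)).mul ((md x).pow 2)).add
      ((MeromorphicAt.const (2 * κ) x).mul (md x))
  have dne : ∀ x, ∀ᶠ z in 𝓝[≠] x, P z - Q z ≠ 0 := by
    intro x
    have hz1 : meromorphicOrderAt (fun z => P z - Q z) z1 ≠ ⊤ := by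
      rw [meromorphicOrderAt_ne_top_iff_eventually_ne_zero (md z1)]
      exact ((hP.continuousAt.sub hQ.continuousAt).eventually_ne hd).filter_mono nhdsWithin_le_nhds
    have := MeromorphicOn.meromorphicOrderAt_ne_top_of_isPreconnected (U := Set.univ)
      (f := fun z => P z - Q z) (fun x _ => md x) isPreconnected_univ (Set.mem_univ z1) (Set.mem_univ x) hz1
    exact (meromorphicOrderAt_ne_top_iff_eventually_ne_zero (md x)).1 this
  set u := toMeromorphicNFOn u0 Set.univ with hu
  set v := toMeromorphicNFOn v0 Set.univ with hv
  have nu : ∀ x, MeromorphicNFAt u x := fun x => meromorphicNFOn_toMeromorphicNFOn u0 Set.univ (Set.mem_univ x)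
  have nv : ∀ x, MeromorphicNFAt v x := fun x => meromorphicNFOn_toMeromorphicNFOn v0 Set.univ (Set.mem_univ x)
  have equ : ∀ x, ∀ᶠ z in 𝓝[≠] x, u z = u0 z := fun x =>
    (mu.toMeromorphicNFOn_eq_self_on_nhdsNE (Set.mem_univ x))
  have eqv : ∀ x, ∀ᶠ z in 𝓝[≠] x, v z = v0 z := fun x =>
    (mv.toMeromorphicNFOn_eq_self_on_nhdsNE (Set.mem_univ x))
  have au0 : AnalyticAt ℂ u0 z1 := (hP.sub hQ).inv hd
  have av0 : AnalyticAt ℂ v0 z1 := by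
    exact (((hP.add hQ).sub analyticAt_id).mul ((hP.sub hQ).pow 2)).add (analyticAt_const.mul (hP.sub hQ))
  have U1 := nf_eq (nu z1) au0 (equ z1)
  have V1 := nf_eq (nv z1) av0 (eqv z1)
  refine ⟨u, v, nu, nv, U1.1, V1.1, U1.2, V1.2, ?_, ?_, ?_⟩
  · intro x
    filter_upwards [h.ev x, dne x, ne_ev (equ x), ne_ev (eqv x)] with z ⟨aP, aQ, dP, dQ⟩ hdz eu ev
    have hder : HasDerivAt u0 (-(deriv P z - deriv Q z) / (P z - Q z) ^ 2) z :=
      (aP.differentiableAt.hasDerivAt.sub aQ.differentiableAt.hasDerivAt).inv hdz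
    have e1 : deriv u z = deriv u0 z := Filter.EventuallyEq.deriv_eq eu
    rw [e1, hder.deriv, eu.self_of_nhds, ev.self_of_nhds, dP, dQ]
    simp only [hu0, hv0, F1, fQ, fS, hκ]
    have h2 : (P z - Q z) ^ 2 ≠ 0 := pow_ne_zero 2 hdz
    generalize hD : P z - Q z = D at *
    have hPD : P z = D + Q z := by rw [← hD]; ring
    rw [hPD]
    field_simp
    ring
  · intro x
    filter_upwards [h.ev x, dne x, ne_ev (equ x), ne_ev (eqv x)] with z ⟨aP, aQ, dP, dQ⟩ hdz eu ev
    have hp := aP.differentiableAt.hasDerivAt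
    have hq := aQ.differentiableAt.hasDerivAt
    have hder : HasDerivAt v0 ((deriv P z + deriv Q z - 1) * (P z - Q z) ^ 2 + (P z + Q z - z) * 
        (2 * (P z - Q z) * (deriv P z - deriv Q z)) + 2 * κ * (deriv P z - deriv Q z)) z := by
      have := (((hp.add hq).sub (hasDerivAt_id z)).mul ((hp.sub hq).pow 2)).add ((hp.sub hq).const_mul (2 * κ))
      refine HasDerivAt.congr_deriv this ?_
      simp
    have e1 : deriv v z = deriv v0 z := Filter.EventuallyEq.deriv_eq ev
    rw [e1, hder.deriv, eu.self_of_nhds, ev.self_of_nhds, dP, dQ]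
    simp only [hu0, hv0, F2, fQ, fS, hκ]
    generalize hD : P z - Q z = D at *
    have hPD : P z = D + Q z := by rw [← hD]; ring
    rw [hPD]
    field_simp
    ring
  · intro x
    filter_upwards [dne x, equ x, eqv x] with z hdz eu ev
    rw [eu, ev]
    simp only [hu0, hv0, fS]
    constructor <;> (field_simp; ring)


def LocAt (P Q : ℂ → ℂ) (z : ℂ) (ρ B : ℝ) : Prop :=
  ∃ y, ∀ x, ‖x - z‖ ≤ ρ → x ≠ y → ‖P x‖ ≤ 20000 * B + 5 / ‖x - y‖ ∧ ‖Q x‖ ≤ 20000 * B + 5 / ‖x - y‖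

lemma fG_deriv {γ κ z : ℂ} {u v : ℂ → ℂ} (hu : HasDerivAt u (F1 γ κ z (u z) (v z)) z)
    (hv : HasDerivAt v (F2 γ κ z (u z) (v z)) z) :
    HasDerivAt (fun x => fG γ κ x (u x) (v x))
      ((fS κ z (u z) (v z)) ^ 2 / 4 + fQ γ z (fS κ z (u z) (v z)) / 2) z := by
  have hS : HasDerivAt (fun x => fS κ x (u x) (v x)) (u z * v z - κ + 1) z := by
    have := (hasDerivAt_id z).add (hu.mul ((hu.mul hv).const_add (-2 * κ)))
    refine HasDerivAt.congr_deriv this ?_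
    simp only [F1, F2]
    simp
    ring
  have := (((hv.div_const 4).add ((hS.pow 3).div_const 12)).add
    (((hasDerivAt_id z).mul (hS.pow 2)).div_const 4)).add ((hS.const_mul γ).div_const 2)
  refine HasDerivAt.congr_deriv this ?_
  simp only [F2, fQ, Pi.pow_apply]
  generalize fS κ z (u z) (v z) = σ
  simp
  ring

lemma chart_main {α β : ℂ} {P Q : ℂ → ℂ} (h : HSys α β P Q) {z1 : ℂ} {B : ℝ} (hB : 30000 ≤ B)
    (hα : ‖α‖ ≤ B) (hβ : ‖β‖ ≤ B) (hz : ‖z1‖ ≤ 3 / 2 * B)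
    (hP : AnalyticAt ℂ P z1) (hQ : AnalyticAt ℂ Q z1)
    (bP : ‖P z1‖ ≤ 10001 * B) (bQ : ‖Q z1‖ ≤ 10001 * B) (bH : ‖hamH α β z1 (P z1) (Q z1)‖ ≤ 2 * B ^ 3)
    (bS : ‖P z1 + Q z1‖ ≤ 13 * B) (bD : 10000 * B ≤ ‖P z1 - Q z1‖) :
    (∀ z2, ‖z2 - z1‖ = 1 / (1000 * B) → AnalyticAt ℂ P z2 ∧ AnalyticAt ℂ Q z2 ∧
      ‖P z2‖ ≤ 10000 * B ∧ ‖Q z2‖ ≤ 10000 * B ∧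
      ‖hamH α β z2 (P z2) (Q z2) - hamH α β z1 (P z1) (Q z1)‖ ≤ 20000 * B) ∧
    ∀ z, ‖z - z1‖ ≤ 1 / (1000 * B) → LocAt P Q z (1 / (1000 * B)) B := by
  have hB0 : 0 < B := by linarith
  have hB1 : 1 ≤ B := by linarith
  have hd : P z1 - Q z1 ≠ 0 := by
    rw [← norm_pos_iff]; nlinarith
  obtain ⟨u, v, nu, nv, au, av, hu1, hv1, eu, ev, ePQ⟩ := chart_exists h hP hQ hd
  set κ := β - α - 1 with hκ
  set γ := α + β with hγ
  have bγ : ‖γ‖ ≤ 2 * B := (norm_add_le _ _).trans (by linarith)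
  have bκ : ‖κ‖ ≤ 3 * B := by
    refine (norm_sub_le _ _).trans ?_
    have := norm_sub_le β α
    simp only [norm_one]
    linarith
  have bD2 : ‖P z1 - Q z1‖ ≤ 20002 * B := (norm_sub_le _ _).trans (by linarith)
  have bu : ‖u z1‖ ≤ 1 / (10000 * B) := by
    rw [hu1, norm_inv, ← one_div]
    exact one_div_le_one_div_of_le (by positivity) bD
  have bv : ‖v z1‖ ≤ 1200 * B ^ 3 := by
    have e : v z1 = 4 * (hamH α β z1 (P z1) (Q z1) - (P z1 - Q z1) / 2 -
        ((P z1 + Q z1) ^ 3 / 12 + z1 * (P z1 + Q z1) ^ 2 / 4 + γ * (P z1 + Q z1) / 2)) := by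
      rw [hv1]; simp only [hκ, hγ, hamH]; ring
    rw [e]
    generalize hamH α β z1 (P z1) (Q z1) = Hm at bH
    generalize P z1 - Q z1 = D at *
    generalize P z1 + Q z1 = σ at *
    have b1 : ‖σ ^ 3 / 12 + z1 * σ ^ 2 / 4 + γ * σ / 2‖ ≤ 285 * B ^ 3 := by
      calc _ ≤ ‖σ‖ ^ 3 / 12 + ‖z1‖ * ‖σ‖ ^ 2 / 4 + ‖γ‖ * ‖σ‖ / 2 := by
            refine norm_add₃_le.trans ?_
            simp
        _ ≤ (13 * B) ^ 3 / 12 + (3 / 2 * B) * (13 * B) ^ 2 / 4 + (2 * B) * (13 * B) / 2 := by gcongr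
        _ ≤ 285 * B ^ 3 := by nlinarith [pow_pos hB0 2]
    have b2 : ‖D / 2‖ ≤ B ^ 3 := by
      rw [norm_div]; norm_num
      have : B * 30000 ≤ B ^ 3 := by nlinarith [pow_pos hB0 2]
      linarith
    rw [norm_mul]
    have := norm_sub_le (Hm - D / 2) (σ ^ 3 / 12 + z1 * σ ^ 2 / 4 + γ * σ / 2)
    have := norm_sub_le Hm (D / 2)
    norm_num
    have : 0 < B ^ 3 := by positivity
    linarith
  have zb : ∀ x : ℂ, ‖x - z1‖ ≤ 1 / (500 * B) → ‖x‖ ≤ 2 * B := by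
    intro x hx
    have h1 : 1 / (500 * B) ≤ B / 2 := by
      rw [div_le_iff₀ (by positivity)]; nlinarith
    have := norm_le_norm_add_norm_sub' x z1
    linarith
  have cF1 : Continuous fun t : ℂ × ℂ × ℂ => F1 γ κ t.1 t.2.1 t.2.2 := by
    unfold F1 fQ fS; fun_prop
  have cF2 : Continuous fun t : ℂ × ℂ × ℂ => F2 γ κ t.1 t.2.1 t.2.2 := by
    unfold F2 fQ fS; fun_prop
  have bt := boot nu nv cF1 cF2 eu ev (z0 := z1) (ρ := 1 / (500 * B)) (M1 := 1 / (500 * B))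
    (M2 := 2000 * B ^ 3) (K1 := 6 / 10) (K2 := 400 * B ^ 4) au av (by norm_num) (by positivity)
    (by
      intro z a b hz' ha hb
      have := (chart_bounds hB1 bγ bκ (zb z hz') ha hb).2.2.1
      have h3 := norm_le_norm_add_norm_sub' (F1 γ κ z a b) (1 / 2)
      have h4 : ‖(1 / 2 : ℂ)‖ = 1 / 2 := by simp
      linarith)
    (fun z a b hz' ha hb => (chart_bounds hB1 bγ bκ (zb z hz') ha hb).2.2.2)
    (by
      have : 1 / (10000 * B) = 1 / 20 * (1 / (500 * B)) := by field_simp; norm_num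
      have : 0 < 1 / (500 * B) := by positivity
      linarith)
    (by
      have : 400 * B ^ 4 * (1 / (500 * B)) = 4 / 5 * B ^ 3 := by field_simp; norm_num
      have : 0 < B ^ 3 := by positivity
      linarith)
  have facts : ∀ x, ‖x - z1‖ ≤ 1 / (500 * B) → AnalyticAt ℂ u x ∧ AnalyticAt ℂ v x ∧
      HasDerivAt u (F1 γ κ x (u x) (v x)) x ∧ HasDerivAt v (F2 γ κ x (u x) (v x)) x ∧
      ‖fS κ x (u x) (v x)‖ ≤ 3 * B ∧ ‖fQ γ x (fS κ x (u x) (v x))‖ ≤ 13 * B ^ 2 ∧ 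
      ‖F1 γ κ x (u x) (v x) - 1 / 2‖ ≤ 1 / 10 := by
    intro x hx
    obtain ⟨a1, a2, b1, b2⟩ := bt x hx
    have hc : ContinuousAt (fun z => ((z, u z, v z) : ℂ × ℂ × ℂ)) x :=
      continuousAt_id.prodMk (a1.continuousAt.prodMk a2.continuousAt)
    have d1 : deriv u x = F1 γ κ x (u x) (v x) := ode_at a1 (cF1.continuousAt.comp hc) (eu x)
    have d2 : deriv v x = F2 γ κ x (u x) (v x) := ode_at a2 (cF2.continuousAt.comp hc) (ev x)
    have c1 : ‖u x‖ ≤ 1 / (500 * B) := by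
      have : 1 / (10000 * B) = 1 / 20 * (1 / (500 * B)) := by field_simp; norm_num
      have : 0 < 1 / (500 * B) := by positivity
      linarith
    have c2 : ‖v x‖ ≤ 2000 * B ^ 3 := by
      have h5 : 400 * B ^ 4 * (1 / (500 * B)) = 4 / 5 * B ^ 3 := by field_simp; norm_num
      have : 0 < B ^ 3 := by positivity
      have : 400 * B ^ 4 * ‖x - z1‖ ≤ 400 * B ^ 4 * (1 / (500 * B)) := by gcongr
      linarith
    obtain ⟨q1, q2, q3, q4⟩ := chart_bounds hB1 bγ bκ (zb x hx) c1 c2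
    exact ⟨a1, a2, d1 ▸ a1.differentiableAt.hasDerivAt, d2 ▸ a2.differentiableAt.hasDerivAt, q1, q2, q3⟩
  have key : ∀ x y, ‖x - z1‖ ≤ 1 / (500 * B) → ‖y - z1‖ ≤ 1 / (500 * B) → 4 / 10 * ‖x - y‖ ≤ ‖u x - u y‖ := by
    intro x y hx hy
    have := (convex_closedBall z1 (1 / (500 * B))).norm_image_sub_le_of_norm_hasDerivWithin_le
      (f := fun x => u x - x / 2) (f' := fun x => F1 γ κ x (u x) (v x) - 1 / 2) (C := 1 / 10)
      (fun w hw => ((facts w (by simpa [dist_eq_norm] using hw)).2.2.1.sub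
        ((hasDerivAt_id w).div_const 2)).hasDerivWithinAt)
      (fun w hw => (facts w (by simpa [dist_eq_norm] using hw)).2.2.2.2.2.2)
      (show y ∈ Metric.closedBall z1 (1 / (500 * B)) by simpa [dist_eq_norm] using hy)
      (show x ∈ Metric.closedBall z1 (1 / (500 * B)) by simpa [dist_eq_norm] using hx)
    have e : (x - y) / 2 = (u x - u y) - ((u x - x / 2) - (u y - y / 2)) := by ring
    have h2 := norm_sub_le (u x - u y) ((u x - x / 2) - (u y - y / 2))
    rw [← e, norm_div] at h2
    norm_num at h2
    linarith
  have keyG : ∀ x, ‖x - z1‖ ≤ 1 / (500 * B) → ‖fG γ κ x (u x) (v x) - fG γ κ z1 (u z1) (v z1)‖ ≤ 9 * B ^ 2 * ‖x - z1‖ := by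
    intro x hx
    exact (convex_closedBall z1 (1 / (500 * B))).norm_image_sub_le_of_norm_hasDerivWithin_le
      (f := fun x => fG γ κ x (u x) (v x)) (C := 9 * B ^ 2)
      (fun w hw => (fG_deriv (facts w (by simpa [dist_eq_norm] using hw)).2.2.1
        (facts w (by simpa [dist_eq_norm] using hw)).2.2.2.1).hasDerivWithinAt)
      (fun w hw => by
        have f := facts w (by simpa [dist_eq_norm] using hw)
        have f1 := f.2.2.2.2.1
        have f2 := f.2.2.2.2.2.1
        refine (norm_add_le _ _).trans ?_
        rw [norm_div, norm_div, norm_pow]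
        norm_num
        have : ‖fS κ w (u w) (v w)‖ ^ 2 ≤ (3 * B) ^ 2 := by gcongr
        nlinarith)
      (show z1 ∈ Metric.closedBall z1 (1 / (500 * B)) by
        exact Metric.mem_closedBall_self (by positivity))
      (show x ∈ Metric.closedBall z1 (1 / (500 * B)) by simpa [dist_eq_norm] using hx)
  have rel : ∀ x, ‖x - z1‖ ≤ 1 / (500 * B) → u x ≠ 0 → AnalyticAt ℂ P x ∧ AnalyticAt ℂ Q x ∧
      P x = (fS κ x (u x) (v x) + (u x)⁻¹) / 2 ∧ Q x = (fS κ x (u x) (v x) - (u x)⁻¹) / 2 := by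
    intro x hx hux
    obtain ⟨a1, a2, -⟩ := facts x hx
    have aS : AnalyticAt ℂ (fun z => fS κ z (u z) (v z)) x := by
      unfold fS
      exact analyticAt_id.add (a1.mul (analyticAt_const.add (a1.mul a2)))
    have r1 := nf_eq (h.nP x) (g := fun z => (fS κ z (u z) (v z) + (u z)⁻¹) / 2)
      ((aS.add (a1.inv hux)).div analyticAt_const (by norm_num)) ((ePQ x).mono fun z hz => hz.1)
    have r2 := nf_eq (h.nQ x) (g := fun z => (fS κ z (u z) (v z) - (u z)⁻¹) / 2)
      ((aS.sub (a1.inv hux)).div analyticAt_const (by norm_num)) ((ePQ x).mono fun z hz => hz.2)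
    exact ⟨r1.1, r2.1, r1.2, r2.2⟩
  have relH : ∀ x, ‖x - z1‖ ≤ 1 / (500 * B) → u x ≠ 0 →
      hamH α β x (P x) (Q x) = fG γ κ x (u x) (v x) + (u x)⁻¹ / 2 := by
    intro x hx hux
    obtain ⟨-, -, r1, r2⟩ := rel x hx hux
    rw [r1, r2]
    simp only [hamH, fG, fS, hγ, hκ]
    field_simp
    ring
  have PQb : ∀ x, ‖x - z1‖ ≤ 1 / (500 * B) → u x ≠ 0 → 
      ‖P x‖ ≤ (3 * B + ‖u x‖⁻¹) / 2 ∧ ‖Q x‖ ≤ (3 * B + ‖u x‖⁻¹) / 2 := by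
    intro x hx hux
    obtain ⟨-, -, r1, r2⟩ := rel x hx hux
    have f := (facts x hx).2.2.2.2.1
    rw [r1, r2, norm_div, norm_div]
    have g1 := norm_add_le (fS κ x (u x) (v x)) (u x)⁻¹
    have g2 := norm_sub_le (fS κ x (u x) (v x)) (u x)⁻¹
    rw [norm_inv] at g1 g2
    norm_num
    constructor <;> linarith
  have hu1ne : u z1 ≠ 0 := by rw [hu1]; exact inv_ne_zero hd
  have r15 : 1 / (500 * B) = 2 * (1 / (1000 * B)) := by field_simp; norm_num
  have rpos : 0 < 1 / (1000 * B) := by positivity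
  refine ⟨?_, ?_⟩
  · intro z2 hz2
    have hz2' : ‖z2 - z1‖ ≤ 1 / (500 * B) := by rw [hz2, r15]; linarith
    have hzz : ‖z1 - z1‖ ≤ 1 / (500 * B) := by simp; positivity
    have k := key z2 z1 hz2' hzz
    have hlow : 3 / (10000 * B) ≤ ‖u z2‖ := by
      have := norm_sub_le (u z2) (u z1)
      have e1 : 1 / (1000 * B) = 10 * (1 / (10000 * B)) := by field_simp; norm_num
      have e2 : 3 / (10000 * B) = 3 * (1 / (10000 * B)) := by field_simp
      rw [hz2] at k
      rw [e1] at k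
      rw [e2]
      linarith
    have hu2ne : u z2 ≠ 0 := by
      rw [← norm_pos_iff]; exact lt_of_lt_of_le (by positivity) hlow
    have hinv : ‖u z2‖⁻¹ ≤ 10000 / 3 * B := by
      have := inv_anti₀ (by positivity) hlow
      refine this.trans (le_of_eq ?_)
      field_simp
    obtain ⟨aP, aQ, -⟩ := rel z2 hz2' hu2ne
    obtain ⟨p1, p2⟩ := PQb z2 hz2' hu2ne
    refine ⟨aP, aQ, by linarith, by linarith, ?_⟩
    rw [relH z2 hz2' hu2ne, relH z1 hzz hu1ne]
    have kG := keyG z2 hz2'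
    rw [hz2] at kG
    have e3 : 9 * B ^ 2 * (1 / (1000 * B)) = 9 / 1000 * B := by field_simp
    have e4 : fG γ κ z2 (u z2) (v z2) + (u z2)⁻¹ / 2 - (fG γ κ z1 (u z1) (v z1) + (u z1)⁻¹ / 2) =
      (fG γ κ z2 (u z2) (v z2) - fG γ κ z1 (u z1) (v z1)) + (u z2)⁻¹ / 2 - (P z1 - Q z1) / 2 := by
      rw [hu1, inv_inv]; ring
    rw [e4]
    have t1 := norm_sub_le ((fG γ κ z2 (u z2) (v z2) - fG γ κ z1 (u z1) (v z1)) + (u z2)⁻¹ / 2) ((P z1 - Q z1) / 2)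
    have t2 := norm_add_le (fG γ κ z2 (u z2) (v z2) - fG γ κ z1 (u z1) (v z1)) ((u z2)⁻¹ / 2)
    rw [norm_div] at t1 t2
    rw [norm_inv] at t2
    norm_num at t1 t2
    linarith
  · intro z hz'
    have hsub : ∀ x ∈ Metric.closedBall z (1 / (1000 * B)), ‖x - z1‖ ≤ 1 / (500 * B) := by
      intro x hx
      rw [Metric.mem_closedBall, dist_eq_norm] at hx
      have := norm_add_le (x - z) (z - z1)
      rw [sub_add_sub_cancel] at this
      linarith
    have hcont : ContinuousOn (fun x => ‖u x‖) (Metric.closedBall z (1 / (1000 * B))) :=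
      fun x hx => (facts x (hsub x hx)).1.continuousAt.norm.continuousWithinAt
    obtain ⟨y, hy, hmin⟩ := (isCompact_closedBall z (1 / (1000 * B))).exists_isMinOn
      ⟨z, Metric.mem_closedBall_self rpos.le⟩ hcont
    refine ⟨y, fun x hx hxy => ?_⟩
    have hx' : x ∈ Metric.closedBall z (1 / (1000 * B)) := by simpa [dist_eq_norm] using hx
    have k := key x y (hsub x hx') (hsub y hy)
    have m : ‖u y‖ ≤ ‖u x‖ := hmin hx'
    have t := norm_sub_le (u x) (u y)
    have hxyp : 0 < ‖x - y‖ := norm_pos_iff.2 (sub_ne_zero.2 hxy)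
    have low : ‖x - y‖ / 5 ≤ ‖u x‖ := by linarith
    have hne : u x ≠ 0 := by rw [← norm_pos_iff]; linarith
    have hinv : ‖u x‖⁻¹ ≤ 5 / ‖x - y‖ := by
      have := inv_anti₀ (by positivity) low
      refine this.trans (le_of_eq ?_)
      field_simp
    obtain ⟨p1, p2⟩ := PQb x (hsub x hx') hne
    have : 0 < 5 / ‖x - y‖ := by positivity
    constructor <;> linarith


def ChartC (α β : ℂ) (P Q : ℂ → ℂ) (z1 : ℂ) (B : ℝ) : Prop :=
  (∀ z2, ‖z2 - z1‖ = 1 / (1000 * B) → AnalyticAt ℂ P z2 ∧ AnalyticAt ℂ Q z2 ∧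
      ‖P z2‖ ≤ 10000 * B ∧ ‖Q z2‖ ≤ 10000 * B ∧
      ‖hamH α β z2 (P z2) (Q z2) - hamH α β z1 (P z1) (Q z1)‖ ≤ 20000 * B) ∧
    ∀ z, ‖z - z1‖ ≤ 1 / (1000 * B) → LocAt P Q z (1 / (1000 * B)) B

lemma rot_sys {α β ζ : ℂ} {P Q : ℂ → ℂ} (hζ : ζ ^ 3 = 1) (h : HSys α β P Q) :
    HSys (ζ * α) (ζ ^ 2 * β) (fun z => ζ * P z) (fun z => ζ ^ 2 * Q z) := by
  have h0 : ζ ≠ 0 := by rintro rfl; norm_num at hζ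
  refine ⟨fun x => ?_, fun x => ?_, fun z => ?_⟩
  · exact (meromorphicNFAt_mul_iff_right (g := fun _ => ζ) (f := P) analyticAt_const h0).2 (h.nP x)
  · exact (meromorphicNFAt_mul_iff_right (g := fun _ => ζ ^ 2) (f := Q) analyticAt_const (pow_ne_zero 2 h0)).2 (h.nQ x)
  · filter_upwards [h.ev z] with x ⟨a, b, c, d⟩
    refine ⟨analyticAt_const.mul a, analyticAt_const.mul b, ?_, ?_⟩
    · rw [deriv_const_mul _ a.differentiableAt, c]
      linear_combination (ζ * (Q x) ^ 2) * hζ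
    · rw [deriv_const_mul _ b.differentiableAt, d]
      ring

lemma analytic_cmul {ζ : ℂ} {P : ℂ → ℂ} {z : ℂ} (h0 : ζ ≠ 0) (h : AnalyticAt ℂ (fun z => ζ * P z) z) :
    AnalyticAt ℂ P z := by
  have := (analyticAt_const (v := ζ⁻¹)).mul h
  refine this.congr (Eventually.of_forall fun x => ?_)
  simp [h0]

lemma hamH_rot {α β ζ z p q : ℂ} (hζ : ζ ^ 3 = 1) :
    hamH (ζ * α) (ζ ^ 2 * β) z (ζ * p) (ζ ^ 2 * q) = hamH α β z p q := by
  unfold hamH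
  linear_combination (p ^ 3 / 3 + (ζ ^ 3 + 1) * q ^ 3 / 3 + z * p * q + α * q + β * p) * hζ

lemma entr {α β ζ : ℂ} {P Q : ℂ → ℂ} (hζ : ζ ^ 3 = 1) (h : HSys α β P Q) {z1 : ℂ} {B : ℝ} (hB : 30000 ≤ B)
    (hα : ‖α‖ ≤ B) (hβ : ‖β‖ ≤ B) (hz : ‖z1‖ ≤ 3 / 2 * B)
    (hP : AnalyticAt ℂ P z1) (hQ : AnalyticAt ℂ Q z1)
    (bP : ‖P z1‖ ≤ 10001 * B) (bQ : ‖Q z1‖ ≤ 10001 * B) (bH : ‖hamH α β z1 (P z1) (Q z1)‖ ≤ 2 * B ^ 3)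
    (b3 : ‖(P z1) ^ 3 + (Q z1) ^ 3‖ ≤ 460000000 * B ^ 3)
    (bS : ‖P z1 + ζ * Q z1‖ ≤ 2500 * B) (bD : 10000 * B < ‖P z1‖ ∨ 10000 * B < ‖Q z1‖) :
    ChartC α β P Q z1 B := by
  have hB0 : 0 < B := by linarith
  have h0 : ζ ≠ 0 := by rintro rfl; norm_num at hζ
  have hn : ‖ζ‖ = 1 := by
    have : ‖ζ‖ ^ 3 = 1 := by rw [← norm_pow, hζ, norm_one]
    exact (pow_eq_one_iff_of_nonneg (norm_nonneg _) (by norm_num)).1 this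
  have bS' : ‖ζ * P z1 + ζ ^ 2 * Q z1‖ ≤ 2500 * B := by
    rw [show ζ * P z1 + ζ ^ 2 * Q z1 = ζ * (P z1 + ζ * Q z1) by ring, norm_mul, hn, one_mul]
    exact bS
  have np : ‖ζ * P z1‖ = ‖P z1‖ := by rw [norm_mul, hn, one_mul]
  have nq : ‖ζ ^ 2 * Q z1‖ = ‖Q z1‖ := by rw [norm_mul, norm_pow, hn, one_pow, one_mul]
  have h3 : ‖(ζ * P z1) ^ 3 + (ζ ^ 2 * Q z1) ^ 3‖ ≤ 460000000 * B ^ 3 := by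
    rw [show (ζ * P z1) ^ 3 + (ζ ^ 2 * Q z1) ^ 3 = (P z1) ^ 3 + (Q z1) ^ 3 by
      linear_combination ((P z1) ^ 3 + (ζ ^ 3 + 1) * (Q z1) ^ 3) * hζ]
    exact b3
  have dl : 17500 * B ≤ ‖ζ * P z1 - ζ ^ 2 * Q z1‖ := by
    rw [← np, ← nq] at bD
    generalize ζ * P z1 = a at *
    generalize ζ ^ 2 * Q z1 = b at *
    have t1 : ‖2 * a‖ ≤ ‖a + b‖ + ‖a - b‖ := by
      rw [show 2 * a = (a + b) + (a - b) by ring]; exact norm_add_le _ _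
    have t2 : ‖2 * b‖ ≤ ‖a + b‖ + ‖a - b‖ := by
      rw [show 2 * b = (a + b) - (a - b) by ring]; exact norm_sub_le _ _
    rw [norm_mul] at t1 t2
    norm_num at t1 t2
    rcases bD with bD | bD <;> linarith
  have bS2 : ‖ζ * P z1 + ζ ^ 2 * Q z1‖ ≤ 13 * B := by
    generalize ζ * P z1 = a at *
    generalize ζ ^ 2 * Q z1 = b at *
    have e : a ^ 3 + b ^ 3 = (a + b) * (((a + b) ^ 2 + 3 * (a - b) ^ 2) / 4) := by ring
    have low : 200000000 * B ^ 2 ≤ ‖((a + b) ^ 2 + 3 * (a - b) ^ 2) / 4‖ := by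
      have t : ‖3 * (a - b) ^ 2‖ ≤ ‖(a + b) ^ 2 + 3 * (a - b) ^ 2‖ + ‖(a + b) ^ 2‖ := by
        have := norm_sub_le ((a + b) ^ 2 + 3 * (a - b) ^ 2) ((a + b) ^ 2)
        rwa [add_sub_cancel_left] at this
      rw [norm_mul, norm_pow, norm_pow] at t
      norm_num at t
      rw [norm_div]
      norm_num
      have t1 : (17500 * B) ^ 2 ≤ ‖a - b‖ ^ 2 := by gcongr
      have t2 : ‖a + b‖ ^ 2 ≤ (2500 * B) ^ 2 := by gcongr
      nlinarith
    rw [e, norm_mul] at h3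
    have t3 : ‖a + b‖ * (200000000 * B ^ 2) ≤ 460000000 * B ^ 3 := le_trans (by gcongr) h3
    have t4 : ‖a + b‖ * (200000000 * B ^ 2) ≤ (2.3 * B) * (200000000 * B ^ 2) := by nlinarith
    have t5 := le_of_mul_le_mul_right t4 (by positivity)
    linarith
  have cm := chart_main (rot_sys hζ h) hB (by rwa [norm_mul, hn, one_mul])
    (by rwa [norm_mul, norm_pow, hn, one_pow, one_mul]) hz (analyticAt_const.mul hP)
    (analyticAt_const.mul hQ) (np.symm ▸ bP) (nq.symm ▸ bQ) (by rw [hamH_rot hζ]; exact bH) bS2 (by linarith)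
  obtain ⟨c1, c2⟩ := cm
  refine ⟨fun z2 hz2 => ?_, fun z hz' => ?_⟩
  · obtain ⟨a1, a2, a3, a4, a5⟩ := c1 z2 hz2
    simp only [hamH_rot hζ, norm_mul, norm_pow, hn, one_pow, one_mul] at a3 a4 a5
    exact ⟨analytic_cmul h0 a1, analytic_cmul (pow_ne_zero 2 h0) a2, a3, a4, a5⟩
  · obtain ⟨y, hy⟩ := c2 z hz'
    refine ⟨y, fun x hx hxy => ?_⟩
    have := hy x hx hxy
    simpa only [norm_mul, norm_pow, hn, one_pow, one_mul] using this

lemma exists_omega : ∃ ω : ℂ, ω ^ 2 + ω + 1 = 0 := by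
  obtain ⟨s, hs⟩ := IsAlgClosed.exists_pow_nat_eq (-3 : ℂ) (n := 2) (by norm_num)
  exact ⟨(-1 + s) / 2, by linear_combination hs / 4⟩

lemma entrance {α β : ℂ} {P Q : ℂ → ℂ} (h : HSys α β P Q) {z1 : ℂ} {B : ℝ} (hB : 30000 ≤ B)
    (hα : ‖α‖ ≤ B) (hβ : ‖β‖ ≤ B) (hz : ‖z1‖ ≤ 3 / 2 * B)
    (hP : AnalyticAt ℂ P z1) (hQ : AnalyticAt ℂ Q z1)
    (bP : ‖P z1‖ ≤ 10001 * B) (bQ : ‖Q z1‖ ≤ 10001 * B) (bH : ‖hamH α β z1 (P z1) (Q z1)‖ ≤ 2 * B ^ 3)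
    (bD : 10000 * B < ‖P z1‖ ∨ 10000 * B < ‖Q z1‖) :
    ChartC α β P Q z1 B := by
  have hB0 : 0 < B := by linarith
  have b3 : ‖(P z1) ^ 3 + (Q z1) ^ 3‖ ≤ 460000000 * B ^ 3 := by
    have e : (P z1) ^ 3 + (Q z1) ^ 3 = 3 * (hamH α β z1 (P z1) (Q z1) - (z1 * P z1 * Q z1 + α * Q z1 + β * P z1)) := by
      unfold hamH; ring
    rw [e, norm_mul]
    have t := norm_sub_le (hamH α β z1 (P z1) (Q z1)) (z1 * P z1 * Q z1 + α * Q z1 + β * P z1)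
    have t2 : ‖z1 * P z1 * Q z1 + α * Q z1 + β * P z1‖ ≤ 
        (3 / 2 * B) * (10001 * B) * (10001 * B) + B * (10001 * B) + B * (10001 * B) := by
      refine norm_add₃_le.trans ?_
      simp only [norm_mul]
      gcongr
    norm_num
    nlinarith [pow_pos hB0 2]
  obtain ⟨ω, hω⟩ := exists_omega
  have h3 : ω ^ 3 = 1 := by linear_combination (ω - 1) * hω
  by_cases c0 : ‖P z1 + 1 * Q z1‖ ≤ 2500 * B
  · exact entr (one_pow 3) h hB hα hβ hz hP hQ bP bQ bH b3 c0 bD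
  by_cases c1 : ‖P z1 + ω * Q z1‖ ≤ 2500 * B
  · exact entr h3 h hB hα hβ hz hP hQ bP bQ bH b3 c1 bD
  by_cases c2 : ‖P z1 + ω ^ 2 * Q z1‖ ≤ 2500 * B
  · exact entr (by rw [← pow_mul, mul_comm, pow_mul, h3, one_pow]) h hB hα hβ hz hP hQ bP bQ bH b3 c2 bD
  exfalso
  push Not at c0 c1 c2
  have e : (P z1) ^ 3 + (Q z1) ^ 3 = (P z1 + 1 * Q z1) * (P z1 + ω * Q z1) * (P z1 + ω ^ 2 * Q z1) := by
    linear_combination (-(P z1 ^ 2 * Q z1) - P z1 * (Q z1) ^ 2 * ω - (Q z1) ^ 3 * (ω - 1)) * hω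
  rw [e, norm_mul, norm_mul] at b3
  have : (2500 * B) * (2500 * B) * (2500 * B) ≤ 
    ‖P z1 + 1 * Q z1‖ * ‖P z1 + ω * Q z1‖ * ‖P z1 + ω ^ 2 * Q z1‖ := by gcongr
  nlinarith [pow_pos hB0 3]


lemma chartA {α β : ℂ} {P Q : ℂ → ℂ} (h : HSys α β P Q) {z0 : ℂ} {B : ℝ} (hB : 30000 ≤ B)
    (hα : ‖α‖ ≤ B) (hβ : ‖β‖ ≤ B) (hz : ‖z0‖ ≤ B)
    (hP : AnalyticAt ℂ P z0) (hQ : AnalyticAt ℂ Q z0)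
    (bP : ‖P z0‖ ≤ 10000 * B) (bQ : ‖Q z0‖ ≤ 10000 * B) :
    ∀ x, ‖x - z0‖ ≤ 1 / (1000000000 * B) → AnalyticAt ℂ P x ∧ AnalyticAt ℂ Q x ∧
      ‖P x‖ ≤ 10001 * B ∧ ‖Q x‖ ≤ 10001 * B ∧ 
      ‖hamH α β x (P x) (Q x) - hamH α β z0 (P z0) (Q z0)‖ ≤ B := by
  have hB0 : 0 < B := by linarith
  have hz2 : ∀ z : ℂ, ‖z - z0‖ ≤ 1 / (1000000000 * B) → ‖z‖ ≤ 2 * B := by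
    intro z hz'
    have : 1 / (1000000000 * B) ≤ 1 := by
      rw [div_le_one (by positivity)]; linarith
    have := norm_le_norm_add_norm_sub' z z0
    linarith
  have hb : ∀ z a b g : ℂ, ‖z‖ ≤ 2 * B → ‖a‖ ≤ 10001 * B → ‖b‖ ≤ 10001 * B → ‖g‖ ≤ B →
      ‖b‖ ^ 2 + ‖z‖ * ‖a‖ + ‖g‖ ≤ 110000000 * B ^ 2 := by
    intro z a b g h1 h2 h3 h4
    calc ‖b‖ ^ 2 + ‖z‖ * ‖a‖ + ‖g‖ ≤ (10001 * B) ^ 2 + (2 * B) * (10001 * B) + B := by gcongr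
      _ ≤ _ := by nlinarith
  have key : ∀ x, ‖x - z0‖ ≤ 1 / (1000000000 * B) → AnalyticAt ℂ P x ∧ AnalyticAt ℂ Q x ∧
      ‖P x‖ ≤ 10001 * B ∧ ‖Q x‖ ≤ 10001 * B := by
    intro x hx
    have hKr : 110000000 * B ^ 2 * (1 / (1000000000 * B)) = 0.11 * B := by
      field_simp; norm_num
    have hKx : 110000000 * B ^ 2 * ‖x - z0‖ ≤ 0.11 * B := by
      rw [← hKr]; gcongr
    obtain ⟨r1, r2, r3, r4⟩ := boot h.nP h.nQ (F1 := fun z a b => -b ^ 2 - z * a - α) (F2 := fun z a b => a ^ 2 + z * b + β)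
      (by fun_prop) (by fun_prop) (fun x => (h.ev x).mono fun z hz => hz.2.2.1)
      (fun x => (h.ev x).mono fun z hz => hz.2.2.2) (z0 := z0) (ρ := 1 / (1000000000 * B))
      (M1 := 10001 * B) (M2 := 10001 * B) (K1 := 110000000 * B ^ 2) (K2 := 110000000 * B ^ 2)
      hP hQ (by positivity) (by positivity)
      (fun z a b h1 h2 h3 => by
        refine le_trans ?_ (hb z a b α (hz2 z h1) h2 h3 hα)
        refine (norm_sub_le _ _).trans ?_
        gcongr
        refine (norm_sub_le _ _).trans ?_
        simp)
      (fun z a b h1 h2 h3 => by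
        refine le_trans ?_ (hb z b a β (hz2 z h1) h3 h2 hβ)
        refine norm_add₃_le.trans ?_
        simp)
      (by rw [hKr]; linarith) (by rw [hKr]; linarith) x hx
    exact ⟨r1, r2, by linarith, by linarith⟩
  intro x hx
  obtain ⟨k1, k2, k3, k4⟩ := key x hx
  refine ⟨k1, k2, k3, k4, ?_⟩
  have hder : ∀ y ∈ Metric.closedBall z0 (1 / (1000000000 * B)),
      HasDerivWithinAt (fun y => hamH α β y (P y) (Q y)) (P y * Q y) (Metric.closedBall z0 (1 / (1000000000 * B))) y := by
    intro y hy
    rw [mem_closedBall_iff_norm] at hy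
    obtain ⟨a1, a2, -, -⟩ := key y hy
    have c1 := a1.continuousAt
    have c2 := a2.continuousAt
    have e1 := ode_at (g := fun x => -(Q x) ^ 2 - x * P x - α) a1 (by fun_prop) ((h.ev y).mono fun z hz => hz.2.2.1)
    have e2 := ode_at (g := fun x => (P x) ^ 2 + x * Q x + β) a2 (by fun_prop) ((h.ev y).mono fun z hz => hz.2.2.2)
    have d1 := a1.differentiableAt.hasDerivAt
    have d2 := a2.differentiableAt.hasDerivAt
    rw [e1] at d1
    rw [e2] at d2
    have := ((((d1.pow 3).add (d2.pow 3)).div_const 3).add (((hasDerivAt_id y).mul d1).mul d2)).add (d2.const_mul α) |>.add (d1.const_mul β)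
    refine HasDerivAt.hasDerivWithinAt ?_
    unfold hamH
    refine this.congr_deriv ?_
    simp only [Pi.mul_apply, id]
    push_cast
    ring
  have := Convex.norm_image_sub_le_of_norm_hasDerivWithin_le (C := (10001 * B) * (10001 * B)) hder
    (fun y hy => by
      rw [mem_closedBall_iff_norm] at hy
      obtain ⟨-, -, b1, b2⟩ := key y hy
      rw [norm_mul]; gcongr) (convex_closedBall _ _) (Metric.mem_closedBall_self (by positivity))
      (mem_closedBall_iff_norm.2 hx)
  refine this.trans ?_
  calc (10001 * B) * (10001 * B) * ‖x - z0‖ ≤ (10001 * B) * (10001 * B) * (1 / (1000000000 * B)) := by gcongr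
    _ = 0.100020001 * B := by field_simp; norm_num
    _ ≤ B := by linarith

lemma LocAt.mono {P Q : ℂ → ℂ} {z : ℂ} {ρ ρ' B B' : ℝ} (h : LocAt P Q z ρ B) (h1 : ρ' ≤ ρ) (h2 : B ≤ B') :
    LocAt P Q z ρ' B' := by
  obtain ⟨y, hy⟩ := h
  refine ⟨y, fun x hx hxy => ?_⟩
  have := hy x (hx.trans h1) hxy
  exact ⟨this.1.trans (by gcongr), this.2.trans (by gcongr)⟩

def Good (α β : ℂ) (P Q : ℂ → ℂ) (z : ℂ) (B : ℝ) : Prop :=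
  AnalyticAt ℂ P z ∧ AnalyticAt ℂ Q z ∧ ‖P z‖ ≤ 10000 * B ∧ ‖Q z‖ ≤ 10000 * B ∧
    ‖hamH α β z (P z) (Q z)‖ ≤ B ^ 3

lemma stepL {α β : ℂ} {P Q : ℂ → ℂ} (h : HSys α β P Q) {z0 e : ℂ} {B : ℝ} (hB : 30000 ≤ B)
    (hα : ‖α‖ ≤ B) (hβ : ‖β‖ ≤ B) (hz : ‖z0‖ ≤ B) (he : ‖e‖ = 1) (hg : Good α β P Q z0 B) :
    ∃ τ : ℝ, 1 / (2000000000 * B) ≤ τ ∧ 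
      (AnalyticAt ℂ P (z0 + τ * e) ∧ AnalyticAt ℂ Q (z0 + τ * e) ∧ ‖P (z0 + τ * e)‖ ≤ 10000 * B ∧
        ‖Q (z0 + τ * e)‖ ≤ 10000 * B ∧
        ‖hamH α β (z0 + τ * e) (P (z0 + τ * e)) (Q (z0 + τ * e))‖ ≤ B ^ 3 + 30000 * B) ∧
      ∀ s : ℝ, 0 ≤ s → s ≤ τ → LocAt P Q (z0 + s * e) (1 / (2000000000 * B)) B := by
  have hB0 : 0 < B := by linarith
  obtain ⟨gP, gQ, g1, g2, g3⟩ := hg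
  have cA := chartA h hB hα hβ hz gP gQ g1 g2
  set δ := 1 / (2000000000 * B) with hδ
  have hδ0 : 0 < δ := by positivity
  have h2δ : 1 / (1000000000 * B) = δ + δ := by rw [hδ]; field_simp; norm_num
  rw [h2δ] at cA
  have nse : ∀ s : ℝ, 0 ≤ s → ‖(s : ℂ) * e‖ = s := fun s hs => by
    rw [norm_mul, he, mul_one, Complex.norm_real, Real.norm_of_nonneg hs]
  have locA : ∀ s : ℝ, 0 ≤ s → s ≤ δ → LocAt P Q (z0 + s * e) δ B := by
    intro s h0 h1
    refine ⟨0, fun x hx _ => ?_⟩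
    have : ‖x - z0‖ ≤ δ + δ := by
      have e1 : x - z0 = (x - (z0 + s * e)) + s * e := by ring
      rw [e1]
      refine (norm_add_le _ _).trans ?_
      rw [nse s h0]; linarith
    obtain ⟨-, -, b1, b2, -⟩ := cA x this
    have : 0 ≤ 5 / ‖x - 0‖ := by positivity
    constructor <;> linarith
  obtain ⟨a1, a2, a3, a4, a5⟩ := cA (z0 + δ * e) (by rw [add_sub_cancel_left, nse δ hδ0.le]; linarith)
  have hH := norm_le_norm_add_norm_sub' (hamH α β (z0 + δ * e) (P (z0 + δ * e)) (Q (z0 + δ * e))) (hamH α β z0 (P z0) (Q z0))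
  by_cases hc : ‖P (z0 + δ * e)‖ ≤ 10000 * B ∧ ‖Q (z0 + δ * e)‖ ≤ 10000 * B
  · refine ⟨δ, le_rfl, ⟨a1, a2, hc.1, hc.2, ?_⟩, locA⟩
    linarith
  · have hδ1 : δ ≤ 1 := by
      rw [hδ, div_le_one (by positivity)]; linarith
    have B3 : B ≤ B ^ 3 := by nlinarith [sq_nonneg B]
    obtain ⟨E1, E2⟩ := entrance h hB hα hβ (z1 := z0 + δ * e) (by
        have := norm_add_le z0 (δ * e)
        rw [nse δ hδ0.le] at this; linarith) a1 a2 a3 a4 (by linarith) (by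
        by_contra hcon
        push Not at hcon
        exact hc hcon)
    set η := 1 / (1000 * B) with hη
    have hη0 : 0 < η := by positivity
    have hδη : δ ≤ η := by
      rw [hδ, hη]; gcongr; norm_num
    have ez : z0 + ((δ + η : ℝ) : ℂ) * e = z0 + δ * e + η * e := by push_cast; ring
    obtain ⟨b1, b2, b3, b4, b5⟩ := E1 (z0 + ((δ + η : ℝ) : ℂ) * e) (by rw [ez, add_sub_cancel_left, nse η hη0.le])
    have hH2 := norm_le_norm_add_norm_sub' (hamH α β (z0 + ((δ + η : ℝ) : ℂ) * e) (P (z0 + ((δ + η : ℝ) : ℂ) * e)) (Q (z0 + ((δ + η : ℝ) : ℂ) * e))) (hamH α β (z0 + δ * e) (P (z0 + δ * e)) (Q (z0 + δ * e)))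
    refine ⟨δ + η, by linarith, ⟨b1, b2, b3, b4, by linarith⟩, fun s h0 h1 => ?_⟩
    rcases le_total s δ with hs | hs
    · exact locA s h0 hs
    · refine (E2 _ ?_).mono hδη le_rfl
      have : z0 + (s : ℂ) * e - (z0 + δ * e) = ((s - δ : ℝ) : ℂ) * e := by push_cast; ring
      rw [this, nse _ (by linarith)]
      linarith

theorem loc_ray {α β : ℂ} {P Q : ℂ → ℂ} (h : HSys α β P Q) {a e : ℂ} {B0 : ℝ} (hB : 30000 ≤ B0)
    (hα : ‖α‖ ≤ B0) (hβ : ‖β‖ ≤ B0) (ha : ‖a‖ ≤ B0) (he : ‖e‖ = 1) (hg : Good α β P Q a B0)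
    {r : ℝ} (hr : 0 ≤ r) : 
    LocAt P Q (a + r * e) (1 / (2000000000 * (B0 + 10 ^ 14 * r))) (B0 + 10 ^ 14 * r) := by
  have step : ∀ t : ℝ, 0 ≤ t → Good α β P Q (a + t * e) (B0 + 10 ^ 14 * t) →
      ∃ t', t + 1 / (2000000000 * (B0 + 10 ^ 14 * t)) ≤ t' ∧ Good α β P Q (a + t' * e) (B0 + 10 ^ 14 * t') ∧
      ∀ s, t ≤ s → s ≤ t' → LocAt P Q (a + s * e) (1 / (2000000000 * (B0 + 10 ^ 14 * t))) (B0 + 10 ^ 14 * t) := by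
    intro t ht hG
    set B := B0 + 10 ^ 14 * t with hBd
    have hBB : B0 ≤ B := by rw [hBd]; linarith [show 0 ≤ (10:ℝ)^14 * t by positivity]
    have hB0 : 0 < B := by linarith
    have nte : ‖a + (t : ℂ) * e‖ ≤ B := by
      refine (norm_add_le _ _).trans ?_
      rw [norm_mul, he, mul_one, Complex.norm_real, Real.norm_of_nonneg ht]
      rw [hBd]; linarith
    obtain ⟨τ, h1, ⟨g1, g2, g3, g4, g5⟩, h3⟩ := stepL h (hB.trans hBB) (hα.trans hBB) (hβ.trans hBB) nte he hG
    have ez : ∀ s : ℝ, a + t * e + s * e = a + ((t + s : ℝ) : ℂ) * e := fun s => by push_cast; ring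
    rw [ez] at g1 g2 g3 g4 g5
    have hτ0 : 0 < τ := lt_of_lt_of_le (by positivity) h1
    have hB' : B0 + 10 ^ 14 * (t + τ) = B + 10 ^ 14 * τ := by rw [hBd]; ring
    refine ⟨t + τ, by linarith, ⟨g1, g2, ?_, ?_, ?_⟩, fun s hs hs' => ?_⟩
    · rw [hB']; linarith
    · rw [hB']; linarith
    · rw [hB']
      refine g5.trans ?_
      have hd : 30000 / B ≤ 10 ^ 14 * τ := by
        have : 10 ^ 14 * (1 / (2000000000 * B)) ≤ 10 ^ 14 * τ := by gcongr
        refine le_trans ?_ this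
        rw [div_le_iff₀ hB0]; field_simp; norm_num
      have hd2 : 30000 ≤ (10 ^ 14 * τ) * B := by rwa [div_le_iff₀ hB0] at hd
      have hd0 : 0 ≤ 10 ^ 14 * τ := by positivity
      generalize 10 ^ 14 * τ = d at hd2 hd0
      have t1 : 30000 * B ≤ d * B * B := by gcongr
      have t2 : 0 ≤ B * d ^ 2 := by positivity
      have t3 : 0 ≤ d ^ 3 := by positivity
      nlinarith
    · have := h3 (s - t) (by linarith) (by linarith)
      rwa [ez, add_sub_cancel] at this
  set S := {t : ℝ | 0 ≤ t ∧ t ≤ r ∧ Good α β P Q (a + t * e) (B0 + 10 ^ 14 * t)} with hS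
  have hS0 : (0:ℝ) ∈ S := ⟨le_rfl, hr, by simpa using hg⟩
  have hbd : BddAbove S := ⟨r, fun t ht => ht.2.1⟩
  set δ := 1 / (2000000000 * (B0 + 10 ^ 14 * r)) with hδ
  have hδ0 : 0 < δ := by positivity
  obtain ⟨t, htS, ht⟩ := exists_lt_of_lt_csSup ⟨0, hS0⟩ (show sSup S - δ < sSup S by linarith)
  obtain ⟨t0, tr, tG⟩ := htS
  obtain ⟨t', h1, h2, h3⟩ := step t t0 tG
  have hBle : B0 + 10 ^ 14 * t ≤ B0 + 10 ^ 14 * r := by gcongr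
  have hδle : δ ≤ 1 / (2000000000 * (B0 + 10 ^ 14 * t)) := by
    rw [hδ]; gcongr
  have : r < t' := by
    by_contra hcon
    push Not at hcon
    have : t' ∈ S := ⟨by linarith, hcon, h2⟩
    have := le_csSup hbd this
    linarith
  exact (h3 r tr this.le).mono hδle hBle

theorem loc_all {α β : ℂ} {P Q : ℂ → ℂ} (h : HSys α β P Q) : ∃ C : ℝ, 1 ≤ C ∧ ∀ z : ℂ, ∀ r : ℝ, ‖z‖ ≤ r → 1 ≤ r →
    LocAt P Q z (1 / (C * r)) (C * r) := by
  obtain ⟨a, aP, aQ, -, -⟩ := (h.ev 0).exists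
  set H := hamH α β a (P a) (Q a) with hH
  set B0 := 30000 + ‖α‖ + ‖β‖ + ‖a‖ + ‖P a‖ + ‖Q a‖ + ‖H‖ with hB0
  have n1 := norm_nonneg α
  have n2 := norm_nonneg β
  have n3 := norm_nonneg a
  have n4 := norm_nonneg (P a)
  have n5 := norm_nonneg (Q a)
  have n6 := norm_nonneg H
  have hB : 30000 ≤ B0 := by linarith
  have hB3 : B0 ≤ B0 ^ 3 := by nlinarith [sq_nonneg B0]
  have hg : Good α β P Q a B0 := ⟨aP, aQ, by linarith, by linarith, by rw [← hH]; linarith⟩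
  have main : ∀ z : ℂ, LocAt P Q z (1 / (2000000000 * (B0 + 10 ^ 14 * ‖z - a‖))) (B0 + 10 ^ 14 * ‖z - a‖) := by
    intro z
    by_cases hz : z = a
    · subst hz
      have := loc_ray h hB (by linarith) (by linarith) (by linarith) (e := 1) (by simp) hg (r := 0) le_rfl
      simpa using this
    · have hn : ‖z - a‖ ≠ 0 := by rwa [norm_ne_zero_iff, sub_ne_zero]
      have hn' : (‖z - a‖ : ℂ) ≠ 0 := by exact_mod_cast hn
      have := loc_ray h hB (by linarith) (by linarith) (by linarith) (e := (z - a) / ‖z - a‖) 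
        (by rw [norm_div, Complex.norm_real, norm_norm, div_self hn]) hg (r := ‖z - a‖) (norm_nonneg _)
      rwa [mul_div_cancel₀ _ hn', add_sub_cancel] at this
  refine ⟨2000000000 * (B0 + 10 ^ 14 * (1 + ‖a‖)), ?_, fun z r hz hr => ?_⟩
  · have : 0 ≤ (10:ℝ) ^ 14 * (1 + ‖a‖) := by positivity
    linarith
  · have k1 : ‖z - a‖ ≤ r * (1 + ‖a‖) := by
      have := norm_sub_le z a
      nlinarith
    have k2 : B0 + 10 ^ 14 * ‖z - a‖ ≤ (B0 + 10 ^ 14 * (1 + ‖a‖)) * r := by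
      have : B0 ≤ B0 * r := by nlinarith
      nlinarith
    have p0 : 0 ≤ (10:ℝ) ^ 14 * ‖z - a‖ := by positivity
    refine (main z).mono ?_ ?_
    · apply one_div_le_one_div_of_le (by positivity)
      nlinarith
    · nlinarith


lemma circ_low {r θ φ : ℝ} (hr : 1 ≤ r) (h : |θ - φ| ≤ 1) :
    |θ - φ| / 2 ≤ ‖circleMap 0 r θ - circleMap 0 r φ‖ := by
  have e : circleMap 0 r θ - circleMap 0 r φ = circleMap 0 r φ * (Complex.exp (Complex.I * ((θ - φ : ℝ) : ℂ)) - 1) := by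
    simp only [circleMap, zero_add]
    rw [mul_sub, mul_one, mul_assoc, ← Complex.exp_add]
    congr 3
    push_cast; ring
  rw [e, norm_mul, norm_circleMap_zero, Complex.norm_exp_I_mul_ofReal_sub_one, abs_of_nonneg (show 0 ≤ r by linarith)]
  have pi3 := Real.pi_gt_three
  have pi4 := Real.pi_le_four
  have h2 : |(θ - φ) / 2| = |θ - φ| / 2 := by rw [abs_div]; norm_num
  have := Real.mul_abs_le_abs_sin (x := (θ - φ) / 2) (by rw [h2]; linarith)
  rw [h2] at this
  have h3 : 1 / 2 * (|θ - φ| / 2) ≤ 2 / Real.pi * (|θ - φ| / 2) := by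
    refine mul_le_mul_of_nonneg_right ?_ (by positivity)
    rw [div_le_div_iff₀ (by norm_num) (by linarith)]; linarith
  rw [norm_mul]
  norm_num
  have h4 : |θ - φ| / 2 ≤ 2 * |Real.sin ((θ - φ) / 2)| := by linarith
  have : 0 ≤ 2 * |Real.sin ((θ - φ) / 2)| := by positivity
  nlinarith

lemma ulogu {u l : ℝ} (hu : 0 ≤ u) (hl : 0 < l) : -(u * Real.log u) ≤ -(u * Real.log l) + l - u := by
  rcases hu.eq_or_lt with h | h
  · subst h; simp; exact hl.le
  · have := Real.log_le_sub_one_of_pos (show 0 < l / u by positivity)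
    rw [Real.log_div hl.ne' h.ne'] at this
    have h2 : u * (Real.log l - Real.log u) ≤ u * (l / u - 1) := by gcongr
    have : u * (l / u - 1) = l - u := by field_simp
    linarith

lemma arc_est {f : ℂ → ℂ} {r a b D : ℝ} {y : ℂ} (hr : 1 ≤ r) (hab : a < b) (hl : b - a ≤ 1) (hD : 0 ≤ D)
    (hf : ∀ θ ∈ Set.Icc a b, circleMap 0 r θ ≠ y → ‖f (circleMap 0 r θ)‖ ≤ D + 5 / ‖circleMap 0 r θ - y‖)
    (hint : IntervalIntegrable (fun θ => Real.posLog ‖f (circleMap 0 r θ)‖) MeasureTheory.volume a b) :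
    ∫ θ in a..b, Real.posLog ‖f (circleMap 0 r θ)‖ ≤ (b - a) * (Real.log (D + 20) - Real.log (b - a) + 2) := by
  obtain ⟨φ, hφ, hmin⟩ := isCompact_Icc.exists_isMinOn (Set.nonempty_Icc.2 hab.le)
    (f := fun θ => ‖circleMap 0 r θ - y‖) (by fun_prop)
  have pt : ∀ θ ∈ Set.Icc a b, θ ≠ φ → Real.posLog ‖f (circleMap 0 r θ)‖ ≤ Real.log (D + 20) - Real.log (θ - φ) := by
    intro θ hθ hne
    have hpos : 0 < |θ - φ| := abs_pos.2 (sub_ne_zero.2 hne)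
    have hle1 : |θ - φ| ≤ 1 := by
      rw [abs_le]; constructor <;> linarith [hθ.1, hθ.2, hφ.1, hφ.2]
    have h1 := circ_low hr hle1
    have h2 : ‖circleMap 0 r φ - y‖ ≤ ‖circleMap 0 r θ - y‖ := hmin hθ
    have h3 : ‖circleMap 0 r θ - circleMap 0 r φ‖ ≤ ‖circleMap 0 r θ - y‖ + ‖circleMap 0 r φ - y‖ := by
      have := norm_sub_le (circleMap 0 r θ - y) (circleMap 0 r φ - y)
      simpa using this
    have h4 : |θ - φ| / 4 ≤ ‖circleMap 0 r θ - y‖ := by linarith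
    have h5 : circleMap 0 r θ ≠ y := by
      intro hc
      rw [hc, sub_self, norm_zero] at h4
      linarith
    have h6 := hf θ hθ h5
    have h7 : ‖f (circleMap 0 r θ)‖ ≤ (D + 20) / |θ - φ| := by
      refine h6.trans ?_
      have : 5 / ‖circleMap 0 r θ - y‖ ≤ 5 / (|θ - φ| / 4) := by gcongr
      have e : 5 / (|θ - φ| / 4) = 20 / |θ - φ| := by field_simp; norm_num
      have : D ≤ D / |θ - φ| := by
        rw [le_div_iff₀ hpos]; nlinarith
      rw [add_div]; linarith
    have h8 : 1 ≤ (D + 20) / |θ - φ| := by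
      rw [le_div_iff₀ hpos]; linarith
    have h9 := Real.posLog_le_posLog (norm_nonneg _) h7
    rw [Real.posLog_eq_log (x := (D + 20) / |θ - φ|) (by rwa [abs_of_nonneg (by linarith)]), Real.log_div (by linarith) hpos.ne', Real.log_abs] at h9
    exact h9
  have hlogi : IntervalIntegrable (fun θ => Real.log (θ - φ)) MeasureTheory.volume a b := by
    have := (intervalIntegral.intervalIntegrable_log' (a := a - φ) (b := b - φ)).comp_sub_right φ
    simpa using this
  have hmono : ∫ θ in a..b, Real.posLog ‖f (circleMap 0 r θ)‖ ≤ ∫ θ in a..b, (Real.log (D + 20) - Real.log (θ - φ)) := by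
    refine intervalIntegral.integral_mono_ae_restrict hab.le hint (intervalIntegrable_const.sub hlogi) ?_
    filter_upwards [MeasureTheory.ae_restrict_mem measurableSet_Icc, MeasureTheory.ae_restrict_of_ae (MeasureTheory.volume.ae_ne φ)] with θ h1 h2
    exact pt θ h1 h2
  refine hmono.trans ?_
  rw [intervalIntegral.integral_sub intervalIntegrable_const hlogi, intervalIntegral.integral_const,
    intervalIntegral.integral_comp_sub_right (fun x => Real.log x), integral_log]
  have u1 := ulogu (u := b - φ) (l := b - a) (by linarith [hφ.2]) (by linarith)
  have u2 := ulogu (u := φ - a) (l := b - a) (by linarith [hφ.1]) (by linarith)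
  have e : Real.log (a - φ) = Real.log (φ - a) := by rw [← Real.log_neg_eq_log, neg_sub]
  rw [e, smul_eq_mul]
  linarith

theorem circ_est {f : ℂ → ℂ} (hf : MeromorphicOn f Set.univ) {C : ℝ} (hC : 1 ≤ C)
    (hloc : ∀ z : ℂ, ∀ r : ℝ, ‖z‖ ≤ r → 1 ≤ r → ∃ y, ∀ x, ‖x - z‖ ≤ 1 / (C * r) → x ≠ y →
      ‖f x‖ ≤ 20000 * (C * r) + 5 / ‖x - y‖) {r : ℝ} (hr : 1 ≤ r) :
    ∫ θ in (0:ℝ)..(2 * Real.pi), Real.posLog ‖f (circleMap 0 r θ)‖ ≤ 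
      2 * Real.pi * (Real.log (20020 * C) + Real.log (20 * C) + 3 * Real.log r + 2) := by
  have pi3 := Real.pi_gt_three
  have pi4 := Real.pi_le_four
  have hci : CircleIntegrable (fun z => Real.posLog ‖f z‖) 0 r :=
    MeromorphicOn.circleIntegrable_posLog_norm (fun x _ => hf x trivial)
  have hci' : IntervalIntegrable (fun θ => Real.posLog ‖f (circleMap 0 r θ)‖) MeasureTheory.volume 0 (2 * Real.pi) := hci
  have hCr : 1 ≤ C * r := by nlinarith
  have hCr2 : 1 ≤ C * r ^ 2 := by nlinarith
  set n : ℕ := ⌈2 * Real.pi * (C * r ^ 2)⌉₊ with hn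
  have n1 : 2 * Real.pi * (C * r ^ 2) ≤ n := Nat.le_ceil _
  have n2 : (n : ℝ) < 2 * Real.pi * (C * r ^ 2) + 1 := Nat.ceil_lt_add_one (by positivity)
  have n0 : (0:ℝ) < n := lt_of_lt_of_le (by positivity) n1
  set l : ℝ := 2 * Real.pi / n with hl
  have l0 : 0 < l := by positivity
  have ll : l * (C * r ^ 2) ≤ 1 := by
    rw [hl, div_mul_eq_mul_div, div_le_one n0]; exact n1
  have l1 : l ≤ 1 := by nlinarith
  have nl : n * l = 2 * Real.pi := by rw [hl]; field_simp
  have hlog : -Real.log l ≤ Real.log (20 * C) + 2 * Real.log r := by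
    have : -Real.log l = Real.log (n / (2 * Real.pi)) := by rw [hl, ← Real.log_inv, inv_div]
    rw [this, show 2 * Real.log r = Real.log (r ^ 2) by rw [Real.log_pow]; norm_num, ← Real.log_mul (by positivity) (by positivity)]
    apply Real.log_le_log (by positivity)
    rw [div_le_iff₀ (by positivity)]
    have : 1 ≤ Real.pi * (C * r ^ 2) := by nlinarith
    nlinarith
  have hlog2 : Real.log (20000 * (C * r) + 20) ≤ Real.log (20020 * C) + Real.log r := by
    rw [← Real.log_mul (by positivity) (by positivity)]
    apply Real.log_le_log (by positivity)
    nlinarith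
  have mem : ∀ k : ℕ, k ≤ n → (k : ℝ) * l ∈ Set.uIcc 0 (2 * Real.pi) := by
    intro k hk
    rw [Set.uIcc_of_le (by positivity)]
    refine ⟨by positivity, ?_⟩
    rw [← nl]; gcongr
  have hii : ∀ k : ℕ, k < n → IntervalIntegrable (fun θ => Real.posLog ‖f (circleMap 0 r θ)‖) MeasureTheory.volume 
      ((k : ℝ) * l) (((k + 1 : ℕ) : ℝ) * l) := fun k hk =>
    hci'.mono_set (Set.uIcc_subset_uIcc (mem k hk.le) (mem (k+1) hk))
  have hsum := intervalIntegral.sum_integral_adjacent_intervals (a := fun k : ℕ => (k : ℝ) * l) hii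
  simp only [nl, Nat.cast_zero, zero_mul] at hsum
  rw [← hsum]
  have each : ∀ k ∈ Finset.range n, ∫ θ in ((k : ℝ) * l)..(((k + 1 : ℕ) : ℝ) * l), Real.posLog ‖f (circleMap 0 r θ)‖ ≤ 
      l * (Real.log (20020 * C) + Real.log (20 * C) + 3 * Real.log r + 2) := by
    intro k hk
    have hb : ((k + 1 : ℕ) : ℝ) * l - (k : ℝ) * l = l := by push_cast; ring
    obtain ⟨y, hy⟩ := hloc (circleMap 0 r ((k : ℝ) * l)) r (by rw [norm_circleMap_zero, abs_of_nonneg (by linarith)]) hr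
    have := arc_est (f := f) (D := 20000 * (C * r)) (y := y) hr (a := (k : ℝ) * l) (b := ((k + 1 : ℕ) : ℝ) * l) (by linarith) (by linarith)
      (by positivity) (fun θ hθ hne => hy _ (by
        have e : circleMap 0 r θ - circleMap 0 r (k * l) = circleMap 0 r (k * l) * (Complex.exp (Complex.I * ((θ - k * l : ℝ) : ℂ)) - 1) := by
          simp only [circleMap, zero_add]
          rw [mul_sub, mul_one, mul_assoc, ← Complex.exp_add]
          congr 3
          push_cast; ring
        rw [e, norm_mul, norm_circleMap_zero, abs_of_nonneg (show 0 ≤ r by linarith)]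
        have h1 := Real.norm_exp_I_mul_ofReal_sub_one_le (x := θ - k * l)
        rw [Real.norm_of_nonneg (by linarith [hθ.1])] at h1
        have h2 : θ - k * l ≤ l := by linarith [hθ.2]
        have h3 : r * ‖Complex.exp (Complex.I * ((θ - k * l : ℝ) : ℂ)) - 1‖ ≤ r * l := by
          gcongr; exact h1.trans h2
        refine h3.trans ?_
        rw [le_div_iff₀ (by positivity)]
        linarith) hne) (hii k (Finset.mem_range.1 hk))
    rw [hb] at this
    refine this.trans ?_
    gcongr
    linarith
  refine (Finset.sum_le_sum each).trans ?_
  rw [Finset.sum_const, Finset.card_range, nsmul_eq_mul, ← mul_assoc, nl]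

lemma prox_circ (f : ℂ → ℂ) (r : ℝ) : proximity f r = (2 * Real.pi)⁻¹ * ∫ θ in (0:ℝ)..(2 * Real.pi), Real.posLog ‖f (circleMap 0 r θ)‖ := by
  simp [proximity, circleMap, logPlus, Real.posLog]

lemma prox_nonneg (f : ℂ → ℂ) (r : ℝ) : 0 ≤ proximity f r := by
  rw [prox_circ]
  have : 0 ≤ ∫ θ in (0:ℝ)..(2 * Real.pi), Real.posLog ‖f (circleMap 0 r θ)‖ :=
    intervalIntegral.integral_nonneg (by positivity) fun _ _ => Real.posLog_nonneg
  positivity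

theorem prox_O {f g : ℂ → ℂ} (hf : MeromorphicOn f Set.univ) (hfg : ∀ r : ℝ, 1 ≤ r → proximity g r = proximity f r)
    {C : ℝ} (hC : 1 ≤ C)
    (hloc : ∀ z : ℂ, ∀ r : ℝ, ‖z‖ ≤ r → 1 ≤ r → ∃ y, ∀ x, ‖x - z‖ ≤ 1 / (C * r) → x ≠ y →
      ‖f x‖ ≤ 20000 * (C * r) + 5 / ‖x - y‖) : proximity g =O[atTop] Real.log := by
  set K := Real.log (20020 * C) + Real.log (20 * C) + 2 with hK
  have K0 : 0 ≤ K := by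
    have := Real.log_nonneg (show 1 ≤ 20020 * C by linarith)
    have := Real.log_nonneg (show 1 ≤ 20 * C by linarith)
    linarith
  refine IsBigO.of_bound (K + 3) ?_
  filter_upwards [eventually_ge_atTop (Real.exp 1)] with r hr
  have hr1 : 1 ≤ r := le_trans (by simp) hr
  have hl : 1 ≤ Real.log r := by rwa [Real.le_log_iff_exp_le (by linarith)]
  rw [Real.norm_of_nonneg (prox_nonneg _ _), Real.norm_of_nonneg (by linarith), hfg r hr1, prox_circ]
  have := circ_est hf hC hloc hr1
  rw [inv_mul_le_iff₀ (by positivity)]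
  refine this.trans ?_
  gcongr
  nlinarith


lemma prox_congr {f : ℂ → ℂ} (hf : MeromorphicOn f Set.univ) {r : ℝ} (hr : 1 ≤ r) :
    proximity f r = proximity (toMeromorphicNFOn f Set.univ) r := by
  rw [prox_circ, prox_circ]
  have h1 := toMeromorphicNFOn_eqOn_codiscrete hf
  have h2 : (fun z => Real.posLog ‖f z‖) =ᶠ[codiscreteWithin (Metric.sphere (0:ℂ) |r|)]
      (fun z => Real.posLog ‖toMeromorphicNFOn f Set.univ z‖) := by
    have := h1.filter_mono (codiscreteWithin_mono (Set.subset_univ (Metric.sphere (0:ℂ) |r|)))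
    filter_upwards [this] with z hz
    rw [hz]
  exact Real.circleAverage_congr_codiscreteWithin h2 (by linarith)

lemma ham_sys {α β : ℂ} {p q : ℂ → ℂ} (h : IsHamSolution α β p q) :
    HSys α β (toMeromorphicNFOn p Set.univ) (toMeromorphicNFOn q Set.univ) := by
  obtain ⟨hp, hq, ho⟩ := h
  refine ⟨fun x => meromorphicNFOn_toMeromorphicNFOn _ _ (Set.mem_univ x), fun x => meromorphicNFOn_toMeromorphicNFOn _ _ (Set.mem_univ x), fun z => ?_⟩
  filter_upwards [ne_ev (hp.toMeromorphicNFOn_eq_self_on_nhdsNE (Set.mem_univ z)),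
    ne_ev (hq.toMeromorphicNFOn_eq_self_on_nhdsNE (Set.mem_univ z)),
    (hp z trivial).eventually_analyticAt, (hq z trivial).eventually_analyticAt] with x e1 e2 a1 a2
  have e1' : toMeromorphicNFOn p Set.univ =ᶠ[𝓝 x] p := e1
  have e2' : toMeromorphicNFOn q Set.univ =ᶠ[𝓝 x] q := e2
  rw [e1'.deriv_eq, e2'.deriv_eq, e1'.eq_of_nhds, e2'.eq_of_nhds]
  exact ⟨a1.congr e1'.symm, a2.congr e2'.symm, ho x a1 a2⟩


/-- For a transcendental solution `(p, q)` of the Hamiltonian system,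
`m(r, p) + m(r, q) = O(log r)`, hence `T(r, p) = N(r, p) + O(log r)` and
`T(r, q) = N(r, q) + O(log r)`. -/
theorem stmt_8 (α β : ℂ) (p q : ℂ → ℂ) (h : IsHamSolution α β p q)
    (htr : ¬ IsRationalFn p) :
    (fun r => proximity p r + proximity q r) =O[atTop] Real.log ∧
    (fun r => nevT p r - countingN p r) =O[atTop] Real.log ∧
    (fun r => nevT q r - countingN q r) =O[atTop] Real.log := by

  have hs := ham_sys h
  obtain ⟨C, hC, hloc⟩ := loc_all hs
  have hp : proximity p =O[atTop] Real.log := by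
    refine prox_O (f := toMeromorphicNFOn p Set.univ) (fun x _ => (hs.nP x).meromorphicAt)
      (fun r hr => prox_congr h.1 hr) hC fun z r hz hr => ?_
    obtain ⟨y, hy⟩ := hloc z r hz hr
    exact ⟨y, fun x hx hxy => (hy x hx hxy).1⟩
  have hq : proximity q =O[atTop] Real.log := by
    refine prox_O (f := toMeromorphicNFOn q Set.univ) (fun x _ => (hs.nQ x).meromorphicAt)
      (fun r hr => prox_congr h.2.1 hr) hC fun z r hz hr => ?_
    obtain ⟨y, hy⟩ := hloc z r hz hr
    exact ⟨y, fun x hx hxy => (hy x hx hxy).2⟩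
  refine ⟨hp.add hq, ?_, ?_⟩
  · simpa only [nevT, add_sub_cancel_right] using hp
  · simpa only [nevT, add_sub_cancel_right] using hq
end

section
/- Let α, β ∈ ℂ and let (p, q) be a transcendental solution on ℂ of the Hamiltonian system. For each cube root of unity ρ let Λ^ρ denote the set of poles of p at which the residue of p equals ρ, and let Λ be the set of all poles of p. Then for each ρ with ρ³ = 1, n(r, Λ^ρ) = (1/3)·n(r, Λ) + O(r²) as r → ∞. In particular, if for some cube root of unity ρ the set Λ^ρ is finite, then T(r, p) + T(r, q) = O(r²). -/
open Filter Topology Asymptotics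

open ComplexConjugate
noncomputable def hamE (α β z p q : ℂ) : ℂ := (p^3+q^3)/3 + z*p*q + α*q + β*p
noncomputable def hamD (p q : ℂ) : ℂ := p * conj p + q * conj q + 1
noncomputable def hamPhi (p q : ℂ) : ℂ := 4*p^3*conj p*conj q / (hamD p q)^2
noncomputable def hamV (α β z p q : ℂ) : ℂ := hamE α β z p q + hamPhi p q
noncomputable def hamPhi' (p q u v : ℂ) : ℂ :=
  4*(3*p^2*u*conj p*conj q + p^3*conj u*conj q + p^3*conj p*conj v)/(hamD p q)^2
   - 8*p^3*conj p*conj q*(u*conj p+p*conj u+v*conj q+q*conj v)/(hamD p q)^3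

lemma hamD_eq (p q : ℂ) : hamD p q = ((‖p‖^2+‖q‖^2+1 : ℝ) : ℂ) := by
  unfold hamD
  rw [Complex.mul_conj', Complex.mul_conj']; push_cast; ring

lemma hamD_norm (p q : ℂ) : ‖hamD p q‖ = ‖p‖^2+‖q‖^2+1 := by
  rw [hamD_eq, Complex.norm_real, Real.norm_of_nonneg (by positivity)]

lemma hamD_ne (p q : ℂ) : hamD p q ≠ 0 := by
  rw [← norm_pos_iff, hamD_norm]; positivity

lemma hamPhi_norm (p q : ℂ) : ‖hamPhi p q‖ ≤ 4 * ‖q‖ := by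
  unfold hamPhi
  rw [norm_div, norm_pow, hamD_norm, div_le_iff₀ (by positivity)]
  simp only [norm_mul, norm_pow, RCLike.norm_conj]
  norm_num
  have ha := norm_nonneg p
  have hb := norm_nonneg q
  set a := ‖p‖
  set b := ‖q‖
  have : a^4 ≤ (a^2+b^2+1)^2 := by nlinarith [sq_nonneg a, sq_nonneg b, mul_nonneg (sq_nonneg a) (sq_nonneg b)]
  nlinarith

/-- comparability -/
lemma ham_cmp {α β z p q : ℂ} {L : ℝ} (hL : 1 ≤ L) (hz : ‖z‖ ≤ L) (hα : ‖α‖ ≤ L^2)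
    (hβ : ‖β‖ ≤ L^2) (hV : ‖hamV α β z p q‖ ≤ L^3) (hS : 100 * L ≤ ‖p‖+‖q‖) :
    ‖p^3+q^3‖ ≤ L * (‖p‖+‖q‖)^2 ∧ |‖p‖-‖q‖| ≤ 4/3*L := by
  have h1 : p^3+q^3 = 3 * (hamV α β z p q - hamPhi p q - z*p*q - α*q - β*p) := by
    unfold hamV hamE; ring
  have h2 : ‖p^3+q^3‖ ≤ 3*(L^3 + 4*‖q‖ + L*‖p‖*‖q‖ + L^2*‖q‖+L^2*‖p‖) := by
    rw [h1, norm_mul]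
    have e1 := norm_sub_le (hamV α β z p q - hamPhi p q - z*p*q - α*q) (β*p)
    have e2 := norm_sub_le (hamV α β z p q - hamPhi p q - z*p*q) (α*q)
    have e3 := norm_sub_le (hamV α β z p q - hamPhi p q) (z*p*q)
    have e4 := norm_sub_le (hamV α β z p q) (hamPhi p q)
    have e5 := hamPhi_norm p q
    rw [norm_mul] at e1 e2 e3
    rw [norm_mul] at e3
    have e6 : ‖β‖*‖p‖ ≤ L^2*‖p‖ := by gcongr
    have e7 : ‖α‖*‖q‖ ≤ L^2*‖q‖ := by gcongr
    have e8 : ‖z‖*‖p‖*‖q‖ ≤ L*‖p‖*‖q‖ := by gcongr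
    norm_num
    linarith
  have ha := norm_nonneg p
  have hb := norm_nonneg q
  have h3 : |‖p‖^3-‖q‖^3| ≤ ‖p^3+q^3‖ := by
    have := abs_norm_sub_norm_le (p^3) (-q^3)
    simpa [norm_pow] using this
  set a := ‖p‖
  set b := ‖q‖
  have hE : ‖p^3+q^3‖ ≤ L*(a+b)^2 := by
    refine h2.trans ?_
    have f1 : L^3*10000 ≤ L*(a+b)^2 := by nlinarith [mul_le_mul hS hS (by positivity) (by positivity)]
    have f2 : b*100 ≤ L*(a+b)^2 := by
      have : 100 ≤ (a+b) := by linarith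
      nlinarith [mul_le_mul_of_nonneg_left this (by positivity : 0 ≤ a+b), sq_nonneg (a+b), mul_le_mul_of_nonneg_right hL (sq_nonneg (a+b))]
    have f3 : L*a*b*4 ≤ L*(a+b)^2 := by nlinarith [mul_nonneg (by linarith : 0 ≤ L) (sq_nonneg (a-b))]
    have f4 : L^2*(a+b)*100 ≤ L*(a+b)^2 := by
      have := mul_le_mul_of_nonneg_left hS (by positivity : 0 ≤ L*(a+b))
      nlinarith
    nlinarith
  refine ⟨hE, ?_⟩
  have h4 := h3.trans hE
  have h5 : a^3-b^3 = (a-b)*(a^2+a*b+b^2) := by ring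
  rw [h5, abs_mul, abs_of_nonneg (by positivity : 0 ≤ a^2+a*b+b^2)] at h4
  have h6 : (3/4)*(a+b)^2 ≤ a^2+a*b+b^2 := by nlinarith [sq_nonneg (a-b)]
  have h7 : 0 < (a+b)^2 := by
    have : 0 < a+b := by linarith
    positivity
  have h8 := mul_le_mul_of_nonneg_left h6 (abs_nonneg (a-b))
  have : |a-b| * (a+b)^2 ≤ 4/3*L*(a+b)^2 := by nlinarith
  exact le_of_mul_le_mul_right this h7

lemma hamPhi'_norm (p q u v : ℂ) : ‖hamPhi' p q u v‖ ≤ 32*(‖u‖+‖v‖) := by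
  unfold hamPhi'
  have ha := norm_nonneg p
  have hb := norm_nonneg q
  have hu := norm_nonneg u
  have hv := norm_nonneg v
  have hD : 0 < ‖p‖^2+‖q‖^2+1 := by positivity
  have hab : ‖p‖*‖q‖ ≤ ‖p‖^2+‖q‖^2+1 := by nlinarith [sq_nonneg (‖p‖-‖q‖)]
  have haa : ‖p‖^2 ≤ ‖p‖^2+‖q‖^2+1 := by nlinarith
  have hbb : ‖q‖^2 ≤ ‖p‖^2+‖q‖^2+1 := by nlinarith
  have h1 : ‖4*(3*p^2*u*conj p*conj q + p^3*conj u*conj q + p^3*conj p*conj v)/(hamD p q)^2‖ ≤ 16*(‖u‖+‖v‖) := by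
    rw [norm_div, norm_pow, hamD_norm, div_le_iff₀ (by positivity), norm_mul]
    have e := norm_add₃_le (a := 3*p^2*u*conj p*conj q) (b := p^3*conj u*conj q) (c := p^3*conj p*conj v)
    simp only [norm_mul, norm_pow, RCLike.norm_conj] at e
    norm_num at e ⊢
    set a := ‖p‖
    set b := ‖q‖
    set D := a^2+b^2+1
    have f1 : a^2*(a*b) ≤ D*D := mul_le_mul haa hab (by positivity) (by positivity)
    have f2 : a^2*a^2 ≤ D*D := mul_le_mul haa haa (by positivity) (by positivity)
    have g1 := mul_le_mul_of_nonneg_right f1 hu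
    have g2 := mul_le_mul_of_nonneg_right f2 hv
    nlinarith [mul_nonneg (mul_nonneg hD.le hD.le) hu, mul_nonneg (mul_nonneg hD.le hD.le) hv]
  have h2 : ‖8*p^3*conj p*conj q*(u*conj p+p*conj u+v*conj q+q*conj v)/(hamD p q)^3‖ ≤ 16*(‖u‖+‖v‖) := by
    rw [norm_div, norm_pow, hamD_norm, div_le_iff₀ (by positivity), norm_mul]
    have e := norm_add₄_le (a := u*conj p) (b := p*conj u) (c := v*conj q) (d := q*conj v)
    simp only [norm_mul, norm_pow, RCLike.norm_conj] at e ⊢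
    norm_num at e ⊢
    set a := ‖p‖
    set b := ‖q‖
    set D := a^2+b^2+1
    calc 8*a^3*a*b*‖u*conj p+p*conj u+v*conj q+q*conj v‖ ≤ 8*a^3*a*b*(‖u‖ * a + a * ‖u‖ + ‖v‖ * b + b * ‖v‖) := by gcongr
      _ = 16*(a^2*a^2*(a*b)*‖u‖ + a^2*a^2*b^2*‖v‖) := by ring
      _ ≤ 16*(D*D*D*‖u‖ + D*D*D*‖v‖) := by gcongr
      _ = _ := by ring
  refine (norm_sub_le _ _).trans ?_
  linarith

set_option maxHeartbeats 2000000 in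
lemma ham_deriv_bound {α β z p q e : ℂ} {L : ℝ} (hL : 1 ≤ L) (hz : ‖z‖ ≤ L) (hα : ‖α‖ ≤ L^2)
    (hβ : ‖β‖ ≤ L^2) (hV : ‖hamV α β z p q‖ ≤ L^3) (he : ‖e‖ = 1) :
    ‖e*(p*q) + hamPhi' p q (e*(-q^2-z*p-α)) (e*(p^2+z*q+β))‖ ≤ 10^7*L^2 := by
  have ha := norm_nonneg p
  have hb := norm_nonneg q
  have hpd : ‖-q^2-z*p-α‖ ≤ ‖q‖^2+L*‖p‖+L^2 := by
    have e1 := norm_sub_le (-q^2-z*p) α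
    have e2 := norm_sub_le (-q^2) (z*p)
    rw [norm_neg, norm_pow, norm_mul] at e2
    have : ‖z‖*‖p‖ ≤ L*‖p‖ := by gcongr
    linarith
  have hqd : ‖p^2+z*q+β‖ ≤ ‖p‖^2+L*‖q‖+L^2 := by
    have e1 := norm_add_le (p^2+z*q) β
    have e2 := norm_add_le (p^2) (z*q)
    rw [norm_pow, norm_mul] at e2
    have : ‖z‖*‖q‖ ≤ L*‖q‖ := by gcongr
    linarith
  rcases le_total (‖p‖+‖q‖) (100*L) with hS | hS
  · have h1 := hamPhi'_norm p q (e*(-q^2-z*p-α)) (e*(p^2+z*q+β))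
    rw [norm_mul e, norm_mul e, he, one_mul, one_mul] at h1
    have h2 := norm_add_le (e*(p*q)) (hamPhi' p q (e*(-q^2-z*p-α)) (e*(p^2+z*q+β)))
    rw [norm_mul e, he, one_mul, norm_mul] at h2
    have h3 : (‖p‖+‖q‖)^2 ≤ (100*L)^2 := by gcongr
    have h4 : L*(‖p‖+‖q‖) ≤ L*(100*L) := by gcongr
    nlinarith [sq_nonneg (‖p‖-‖q‖), mul_nonneg ha hb]
  · obtain ⟨hE, hd⟩ := ham_cmp hL hz hα hβ hV hS
    have hφ := hamPhi_norm p q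
    have hH : ‖hamE α β z p q‖ ≤ L^3 + 4*‖q‖ := by
      have : hamE α β z p q = hamV α β z p q - hamPhi p q := by unfold hamV; ring
      rw [this]; refine (norm_sub_le _ _).trans ?_; linarith
    have hd' := abs_le.1 hd
    have hSpos : 0 < ‖p‖+‖q‖ := by linarith
    have hp0 : p ≠ 0 := by rw [← norm_pos_iff]; linarith
    have hq0 : q ≠ 0 := by rw [← norm_pos_iff]; linarith
    have hD0 := hamD_ne p q
    set Gc : ℂ := (2*p*(-q^2-z*p-α)*q - p^2*(p^2+z*q+β))/q^2 with hGc
    set X : ℂ := p^3+q^3+2*z*p*q+β*p+α*q with hX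
    set A : ℂ := p * conj p with hA
    set B : ℂ := q * conj q with hB
    set u := e*(-q^2-z*p-α) with hu
    set v := e*(p^2+z*q+β) with hv
    set A' : ℂ := u*conj p+p*conj u with hA'
    set B' : ℂ := v*conj q+q*conj v with hB'
    set D := hamD p q with hDdef
    have hDAB : D = A + B + 1 := rfl
    have key : e*(p*q) + hamPhi' p q u v = e*(-3*hamE α β z p q*p/q^2 + α*p/q+2*β*p^2/q^2)
        - e*Gc*(((A-B)^2+2*(A+B)+1)/D^2)
        + p^2/q*(4*((A-B)*(p*q*(conj e*conj X)+conj p*conj q*(e*X))+A'*B+A*B')/D^3) := by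
      have k1 : e*(p*q) + e*Gc = e*(-3*hamE α β z p q*p/q^2 + α*p/q+2*β*p^2/q^2) := by
        rw [hGc]; unfold hamE; field_simp; ring
      have k2 : ((A-B)^2+2*(A+B)+1)/D^2 = 1 - 4*A*B/D^2 := by
        rw [eq_sub_iff_add_eq, ← add_div, div_eq_one_iff_eq (pow_ne_zero _ hD0), hDAB]; ring
      have k3 : p*q*(conj e*conj X)+conj p*conj q*(e*X) = A*B'-A'*B := by
        rw [hA,hB,hA',hB',hu,hv,hX]; simp only [map_mul, map_add, map_sub, map_neg, map_pow, map_ofNat]; ring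
      have k4 : hamPhi' p q u v = e*Gc*(4*A*B/D^2) + p^2/q*(4*((A-B)*(A*B'-A'*B)+A'*B+A*B')/D^3) := by
        have k5 : e*Gc = (2*p*u*q-p^2*v)/q^2 := by rw [hGc, hu, hv]; ring
        rw [k5]
        unfold hamPhi'
        rw [← hDdef]
        have hD3 : (D^3 : ℂ) ≠ 0 := pow_ne_zero _ hD0
        field_simp
        rw [hDAB, hA, hB, hA', hB']
        ring
      rw [k2, k3, k4, ← k1]; ring
    rw [key]
    clear_value u v
    clear key
    have hSa : ‖p‖ ≤ ‖p‖+‖q‖ := by linarith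
    have hSb : ‖q‖ ≤ ‖p‖+‖q‖ := by linarith
    have hab2 : ‖p‖/‖q‖ ≤ 2 := by
      rw [div_le_iff₀ (by linarith)]; linarith
    have hb49 : 49*L ≤ ‖q‖ := by linarith
    have hb0 : 0 < ‖q‖ := by linarith
    have hpdS : ‖-q^2-z*p-α‖ ≤ 2*(‖p‖+‖q‖)^2 := by nlinarith
    have hqdS : ‖p^2+z*q+β‖ ≤ 2*(‖p‖+‖q‖)^2 := by nlinarith
    have huS : ‖u‖ ≤ 2*(‖p‖+‖q‖)^2 := by rw [hu, norm_mul, he, one_mul]; exact hpdS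
    have hvS : ‖v‖ ≤ 2*(‖p‖+‖q‖)^2 := by rw [hv, norm_mul, he, one_mul]; exact hqdS
    have hDn : ‖D‖ = ‖p‖^2+‖q‖^2+1 := hamD_norm p q
    have hDS : (‖p‖+‖q‖)^2/2 ≤ ‖D‖ := by rw [hDn]; nlinarith [sq_nonneg (‖p‖-‖q‖)]
    have hAB : ‖A-B‖ ≤ 4/3*L*(‖p‖+‖q‖) := by
      have : A - B = (((‖p‖-‖q‖)*(‖p‖+‖q‖) : ℝ) : ℂ) := by
        rw [hA, hB, Complex.mul_conj', Complex.mul_conj']; push_cast; ring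
      rw [this, Complex.norm_real, Real.norm_eq_abs, abs_mul, abs_of_pos hSpos]
      gcongr
    have hAn : ‖A‖ = ‖p‖^2 := by rw [hA, norm_mul, RCLike.norm_conj]; ring
    have hBn : ‖B‖ = ‖q‖^2 := by rw [hB, norm_mul, RCLike.norm_conj]; ring
    have t1 : ‖e*(-3*hamE α β z p q*p/q^2 + α*p/q+2*β*p^2/q^2)‖ ≤ 40*L^2 := by
      rw [norm_mul, he, one_mul]
      refine (norm_add₃_le).trans ?_
      simp only [norm_mul, norm_div, norm_pow, norm_neg]
      norm_num
      have e1 : 3*‖hamE α β z p q‖*‖p‖/‖q‖^2 ≤ 30*L^2 := by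
        have : 3*‖hamE α β z p q‖*‖p‖/‖q‖^2 = 3*(‖hamE α β z p q‖/‖q‖)*(‖p‖/‖q‖) := by
          field_simp
        rw [this]
        have h5 : ‖hamE α β z p q‖/‖q‖ ≤ 5*L^2 := by
          rw [div_le_iff₀ hb0]
          have w1 : L^2*L ≤ L^2*‖q‖ := by gcongr; linarith
          have w2 : 1*‖q‖ ≤ L^2*‖q‖ := by gcongr; nlinarith only [hL]
          linarith only [w1, w2, hH]
        calc 3*(‖hamE α β z p q‖/‖q‖)*(‖p‖/‖q‖) ≤ 3*(5*L^2)*2 := by gcongr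
          _ = _ := by ring
      have e2 : ‖α‖*‖p‖/‖q‖ ≤ 2*L^2 := by
        rw [mul_div_assoc]
        calc ‖α‖*(‖p‖/‖q‖) ≤ L^2*2 := by gcongr
          _ = _ := by ring
      have e3 : 2*‖β‖*‖p‖^2/‖q‖^2 ≤ 8*L^2 := by
        rw [mul_div_assoc, ← div_pow]
        calc 2*‖β‖*(‖p‖/‖q‖)^2 ≤ 2*L^2*2^2 := by gcongr
          _ = _ := by ring
      linarith
    set S := ‖p‖+‖q‖ with hSdef
    have hS100 : 100 ≤ S := by linarith
    have hL2 : 1 ≤ L^2 := by nlinarith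
    have hS2 : 10000 ≤ S^2 := by nlinarith
    have t2 : ‖e*Gc*(((A-B)^2+2*(A+B)+1)/D^2)‖ ≤ 320*L^2 := by
      rw [norm_mul, norm_mul, he, one_mul]
      have g1 : ‖Gc‖ ≤ 16*S^2 := by
        rw [hGc, norm_div, norm_pow, div_le_iff₀ (by positivity)]
        refine (norm_sub_le _ _).trans ?_
        simp only [norm_mul, norm_pow]
        norm_num only [RCLike.norm_ofNat]
        have hp2 : ‖p‖ ≤ 2*‖q‖ := by linarith
        calc 2*‖p‖*‖-q^2-z*p-α‖*‖q‖ + ‖p‖^2*‖p^2+z*q+β‖ ≤ 2*(2*‖q‖)*(2*S^2)*‖q‖ + (2*‖q‖)^2*(2*S^2) := by gcongr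
          _ = _ := by ring
      have g2 : ‖((A-B)^2+2*(A+B)+1)/D^2‖ ≤ 20*L^2/S^2 := by
        rw [norm_div, norm_pow, div_le_div_iff₀ (by rw [hDn]; positivity) (by positivity)]
        have g3 : ‖(A-B)^2+2*(A+B)+1‖ ≤ 5*L^2*S^2 := by
          refine (norm_add₃_le).trans ?_
          rw [norm_pow, norm_mul]
          have : ‖A+B‖ ≤ S^2 := by
            refine (norm_add_le _ _).trans ?_
            rw [hAn, hBn]; nlinarith
          have h4 : ‖A-B‖^2 ≤ (4/3*L*S)^2 := by gcongr
          have h5 : S^2 ≤ L^2*S^2 := by nlinarith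
          norm_num
          nlinarith
        have g4 : (S^2/2)^2 ≤ ‖D‖^2 := by gcongr
        calc ‖(A-B)^2+2*(A+B)+1‖*S^2 ≤ 5*L^2*S^2*S^2 := by gcongr
          _ = 20*L^2*(S^2/2)^2 := by ring
          _ ≤ _ := by gcongr
      calc ‖Gc‖*‖((A-B)^2+2*(A+B)+1)/D^2‖ ≤ 16*S^2*(20*L^2/S^2) := by gcongr
        _ = _ := by field_simp; ring
    have t3 : ‖p^2/q*(4*((A-B)*(p*q*(conj e*conj X)+conj p*conj q*(e*X))+A'*B+A*B')/D^3)‖ ≤ 640*L^2 := by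
      rw [norm_mul]
      have g1 : ‖p^2/q‖ ≤ 2*S := by
        rw [norm_div, norm_pow, div_le_iff₀ hb0]; nlinarith
      have hXn : ‖X‖ ≤ 2*L*S^2 := by
        rw [hX]
        refine (norm_add₄_le).trans ?_
        simp only [norm_mul]
        norm_num only [RCLike.norm_ofNat]
        have f1 : 2*‖z‖*‖p‖*‖q‖ ≤ 2*L*‖p‖*‖q‖ := by gcongr
        have f2 : ‖β‖*‖p‖ ≤ L^2*‖p‖ := by gcongr
        have f3 : ‖α‖*‖q‖ ≤ L^2*‖q‖ := by gcongr
        have f4 : L^2*S*100 ≤ L*S^2 := by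
          have := mul_le_mul_of_nonneg_left hS (by positivity : 0 ≤ L*S)
          nlinarith
        have f5 : L*‖p‖*‖q‖*4 ≤ L*S^2 := by
          have := mul_nonneg (by linarith : 0 ≤ L) (sq_nonneg (‖p‖-‖q‖))
          rw [hSdef]; nlinarith
        nlinarith
      have hpq : ‖p‖*‖q‖ ≤ S^2/4 := by rw [hSdef]; nlinarith [sq_nonneg (‖p‖-‖q‖)]
      have g2 : ‖p*q*(conj e*conj X)+conj p*conj q*(e*X)‖ ≤ L*S^4 := by
        refine (norm_add_le _ _).trans ?_
        simp only [norm_mul, RCLike.norm_conj, he, one_mul]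
        calc ‖p‖*‖q‖*‖X‖+‖p‖*‖q‖*‖X‖ ≤ S^2/4*(2*L*S^2)+S^2/4*(2*L*S^2) := by gcongr
          _ = _ := by ring
      have hA'n : ‖A'‖ ≤ 4*S^3 := by
        rw [hA']
        refine (norm_add_le _ _).trans ?_
        simp only [norm_mul, RCLike.norm_conj]
        calc ‖u‖*‖p‖+‖p‖*‖u‖ ≤ 2*S^2*S+S*(2*S^2) := by gcongr
          _ = _ := by ring
      have hB'n : ‖B'‖ ≤ 4*S^3 := by
        rw [hB']
        refine (norm_add_le _ _).trans ?_
        simp only [norm_mul, RCLike.norm_conj]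
        calc ‖v‖*‖q‖+‖q‖*‖v‖ ≤ 2*S^2*S+S*(2*S^2) := by gcongr
          _ = _ := by ring
      have g3 : ‖4*((A-B)*(p*q*(conj e*conj X)+conj p*conj q*(e*X))+A'*B+A*B')/D^3‖ ≤ 320*L^2/S := by
        rw [norm_div, norm_pow, div_le_div_iff₀ (by rw [hDn]; positivity) (by positivity)]
        have g4 : (S^2/2)^3 ≤ ‖D‖^3 := by gcongr
        have g5 : ‖4*((A-B)*(p*q*(conj e*conj X)+conj p*conj q*(e*X))+A'*B+A*B')‖ ≤ 40*L^2*S^5 := by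
          rw [norm_mul]
          have g6 := norm_add₃_le (a := (A-B)*(p*q*(conj e*conj X)+conj p*conj q*(e*X))) (b := A'*B) (c := A*B')
          rw [norm_mul (A-B), norm_mul A', norm_mul A, hAn, hBn] at g6
          have g7 : ‖A-B‖*‖p*q*(conj e*conj X)+conj p*conj q*(e*X)‖ ≤ (4/3*L*S)*(L*S^4) := by gcongr
          have g8 : ‖A'‖*‖q‖^2 ≤ 4*S^3*S^2 := by gcongr
          have g9 : ‖p‖^2*‖B'‖ ≤ S^2*(4*S^3) := by gcongr
          have g10 : S^5 ≤ L^2*S^5 := by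
            have : 0 ≤ S^5 := by positivity
            nlinarith
          norm_num only [RCLike.norm_ofNat]
          have r1 : (4/3*L*S)*(L*S^4) = 4/3*(L^2*S^5) := by ring
          have r2 : 4*S^3*S^2 = 4*S^5 := by ring
          have r3 : S^2*(4*S^3) = 4*S^5 := by ring
          have r4 : 40*L^2*S^5 = 40*(L^2*S^5) := by ring
          have r5 : 0 ≤ L^2*S^5 := by positivity
          rw [r1] at g7
          rw [r2] at g8
          rw [r3] at g9
          rw [r4]
          linarith only [g6, g7, g8, g9, g10, r5]
        calc _ ≤ 40*L^2*S^5*S := by gcongr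
          _ = 320*L^2*(S^2/2)^3 := by ring
          _ ≤ _ := by gcongr
      calc _ ≤ 2*S*(320*L^2/S) := by gcongr
        _ = _ := by field_simp; ring
    refine (norm_add_le _ _).trans ?_
    have := norm_sub_le (e*(-3*hamE α β z p q*p/q^2 + α*p/q+2*β*p^2/q^2)) (e*Gc*(((A-B)^2+2*(A+B)+1)/D^2))
    linarith only [t1, t2, t3, this, hL2]

structure HamSol (α β : ℂ) (P Q : ℂ → ℂ) (Λ : Set ℂ) : Prop where
  dP : ∀ z ∉ Λ, HasDerivAt P (-(Q z)^2 - z*P z - α) z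
  dQ : ∀ z ∉ Λ, HasDerivAt Q ((P z)^2+z*Q z+β) z
  ct : Λ.Countable
  iso : ∀ a, ∀ᶠ z in 𝓝[≠] a, z ∉ Λ
  blow : ∀ a ∈ Λ, Tendsto (fun z => ‖P z‖+‖Q z‖) (𝓝[≠] a) atTop

lemma ham_hasDeriv {α β e : ℂ} {Z P Q : ℝ → ℂ} {t : ℝ} (hZ : HasDerivAt Z e t)
    (hP : HasDerivAt P (e*(-(Q t)^2 - Z t*P t - α)) t)
    (hQ : HasDerivAt Q (e*((P t)^2+Z t*Q t+β)) t) :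
    HasDerivAt (fun s => hamV α β (Z s) (P s) (Q s))
      (e*(P t*Q t) + hamPhi' (P t) (Q t) (e*(-(Q t)^2 - Z t*P t - α)) (e*((P t)^2+Z t*Q t+β))) t := by
  have hD0 := hamD_ne (P t) (Q t)
  have hPc : HasDerivAt (fun s => conj (P s)) (conj (e*(-(Q t)^2 - Z t*P t - α))) t := hP.star
  have hQc : HasDerivAt (fun s => conj (Q s)) (conj (e*((P t)^2+Z t*Q t+β))) t := hQ.star
  have h1 := ((((hP.pow 3).add (hQ.pow 3)).div_const 3).add ((hZ.mul hP).mul hQ)).add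
    (hQ.const_mul α) |>.add (hP.const_mul β)
  have hD : HasDerivAt (fun s => hamD (P s) (Q s)) _ t := ((hP.mul hPc).add (hQ.mul hQc)).add_const 1
  have h2 := ((((hP.pow 3).const_mul 4).mul hPc).mul hQc).div (hD.pow 2) (pow_ne_zero 2 hD0)
  have h3 := h1.add h2
  refine (h3.congr_deriv ?_).congr_of_eventuallyEq (Eventually.of_forall fun s => ?_)
  · set pd := -(Q t)^2 - Z t*P t - α
    set qd := (P t)^2+Z t*Q t+β
    unfold hamPhi'
    have hk : e*(P t*Q t) = (((3:ℕ) : ℂ)*P t^2*(e*pd)+((3:ℕ):ℂ)*Q t^2*(e*qd))/3 + ((e*P t+Z t*(e*pd))*Q t+Z t*P t*(e*qd)) + α*(e*qd)+β*(e*pd) := by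
      simp only [pd, qd]; push_cast; ring
    rw [hk]
    simp only [Pi.mul_apply, Pi.pow_apply]
    congr 1
    set u := e*pd
    set v := e*qd
    field_simp
    push_cast
    ring
  · simp [hamV, hamE, hamPhi]

lemma HamSol.contV {α β P Q Λ} (h : HamSol α β P Q Λ) {z : ℂ} (hz : z ∉ Λ) :
    ContinuousAt (fun z => hamV α β z (P z) (Q z)) z := by
  have hP := (h.dP z hz).continuousAt
  have hQ := (h.dQ z hz).continuousAt
  have hD0 := hamD_ne (P z) (Q z)
  unfold hamV hamE hamPhi hamD at *
  fun_prop (disch := simp [hD0])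

set_option maxHeartbeats 1000000 in
lemma HamSol.bound {α β P Q Λ} (h : HamSol α β P Q Λ) :
    ∃ A : ℝ, 1 ≤ A ∧ ‖α‖ ≤ A ∧ ‖β‖ ≤ A ∧ ∀ z ∉ Λ, ‖hamV α β z (P z) (Q z)‖ ≤ (A*(1+‖z‖))^3 := by
  obtain ⟨b, hb⟩ : ∃ b, b ∉ Λ := (h.ct.dense_compl ℝ).nonempty
  set V := fun z => hamV α β z (P z) (Q z) with hVdef
  set A : ℝ := 10^7+1+‖b‖+‖α‖+‖β‖+‖V b‖ with hA
  have n1 := norm_nonneg b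
  have n2 := norm_nonneg α
  have n3 := norm_nonneg β
  have n4 := norm_nonneg (V b)
  have hA1 : 1 ≤ A := by simp only [hA]; linarith
  have hA7 : 10^7 < A := by simp only [hA]; linarith
  have hAA : A ≤ A^2 := by nlinarith
  have ray : ∀ θ : ℝ, (∀ t : ℝ, 0 ≤ t → circleMap b t θ ∉ Λ) → ∀ s, 0 ≤ s →
      ‖V (circleMap b s θ)‖ ≤ (A*(1+s))^3 := by
    intro θ hθ s hs
    set e := Complex.exp (θ*Complex.I) with he
    have hen : ‖e‖ = 1 := Complex.norm_exp_ofReal_mul_I θ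
    have hZ : ∀ t : ℝ, HasDerivAt (fun t : ℝ => circleMap b t θ) e t := by
      intro t
      have := ((Complex.ofRealCLM.hasDerivAt (x := t)).mul_const e).const_add b
      simpa [circleMap] using this
    have hder : ∀ t : ℝ, 0 ≤ t → HasDerivAt (fun t : ℝ => V (circleMap b t θ)) _ t := fun t ht =>
      ham_hasDeriv (α := α) (β := β) (Z := fun t : ℝ => circleMap b t θ)
        (P := fun t : ℝ => P (circleMap b t θ)) (Q := fun t : ℝ => Q (circleMap b t θ)) (hZ t)
        (((h.dP _ (hθ t ht)).comp t (hZ t)).congr_deriv (mul_comm _ _))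
        (((h.dQ _ (hθ t ht)).comp t (hZ t)).congr_deriv (mul_comm _ _))
    have hB : ∀ x : ℝ, HasDerivAt (fun t : ℝ => (A*(1+t))^3) (3*A^3*(1+x)^2) x := by
      intro x
      have := (((hasDerivAt_id x).const_add 1).const_mul A).pow 3
      refine this.congr_deriv ?_
      simp; ring
    refine image_norm_le_of_norm_deriv_right_lt_deriv_boundary' (a := 0) (b := s)
      (f := fun t : ℝ => V (circleMap b t θ)) (B := fun t : ℝ => (A*(1+t))^3)
      (fun t ht => (hder t ht.1).continuousAt.continuousWithinAt)
      (fun t ht => (hder t ht.1).hasDerivWithinAt) ?_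
      (fun t _ => (hB t).continuousAt.continuousWithinAt)
      (fun t _ => (hB t).hasDerivWithinAt) ?_ ⟨hs, le_rfl⟩
    · have : ‖V b‖ ≤ A := by simp only [hA]; linarith
      have h3 : A ≤ A^3 := by nlinarith
      simpa [circleMap] using this.trans h3
    · intro x hx hVx
      have hx0 : 0 ≤ x := hx.1
      have hLA : A ≤ A*(1+x) := by nlinarith only [hx0, hA1]
      have hL1 : 1 ≤ A*(1+x) := by linarith
      have hL2 : A*(1+x) ≤ (A*(1+x))^2 := by nlinarith only [hL1]
      refine (ham_deriv_bound (L := A*(1+x)) hL1 ?_ ?_ ?_ hVx.le hen).trans_lt ?_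
      · have : ‖circleMap b x θ‖ ≤ ‖b‖ + x := by
          unfold circleMap
          refine (norm_add_le _ _).trans ?_
          rw [norm_mul, Complex.norm_exp_ofReal_mul_I, Complex.norm_real, Real.norm_of_nonneg hx0]
          simp
        have h4 : ‖b‖ ≤ A := by simp only [hA]; linarith
        have h5 : 1*x ≤ A*x := by gcongr
        linarith only [this, h4, h5]
      · have : ‖α‖ ≤ A := by simp only [hA]; linarith
        linarith
      · have : ‖β‖ ≤ A := by simp only [hA]; linarith
        linarith
      · have : 0 < A^2*(1+x)^2 := by positivity
        nlinarith only [this, hA7]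
  have all : ∀ z ∉ Λ, ‖V z‖ ≤ (A*(1+‖z-b‖))^3 := by
    intro z hz
    obtain ⟨θ₀, hθ₀⟩ : ∃ θ₀ : ℝ, circleMap b ‖z-b‖ θ₀ = z := by
      refine ⟨(z-b).arg, ?_⟩
      unfold circleMap
      rw [Complex.norm_mul_exp_arg_mul_I]; ring
    have hbad : (circleMap 0 1 ⁻¹' ((fun a => (a-b)/(‖a-b‖:ℂ)) '' Λ)).Countable :=
      (h.ct.image _).preimage_circleMap 0 one_ne_zero
    have hd := hbad.dense_compl ℝ
    have hcl : ∃ᶠ θ in 𝓝 θ₀, θ ∈ (circleMap 0 1 ⁻¹' ((fun a => (a-b)/(‖a-b‖:ℂ)) '' Λ))ᶜ :=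
      mem_closure_iff_frequently.1 (hd θ₀)
    have hc : Tendsto (fun θ => ‖V (circleMap b ‖z-b‖ θ)‖) (𝓝 θ₀) (𝓝 ‖V z‖) := by
      have h1 : ContinuousAt V (circleMap b ‖z-b‖ θ₀) := by rw [hθ₀]; exact h.contV hz
      have h2 : ContinuousAt (fun θ => V (circleMap b ‖z-b‖ θ)) θ₀ :=
        ContinuousAt.comp (f := circleMap b ‖z-b‖) h1 (continuous_circleMap _ _).continuousAt
      have := h2.norm
      simpa [ContinuousAt, hθ₀] using this
    refine le_of_tendsto_of_frequently hc (hcl.mono fun θ hθ => ray θ ?_ _ (norm_nonneg _))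
    intro t ht hmem
    rcases ht.eq_or_lt with rfl | ht
    · exact hb (by simpa [circleMap] using hmem)
    · refine hθ ⟨_, hmem, ?_⟩
      simp only [circleMap, add_sub_cancel_left, zero_add, norm_mul, Complex.norm_exp_ofReal_mul_I,
        Complex.norm_real, Real.norm_of_nonneg ht.le]
      have : (t:ℂ) ≠ 0 := by exact_mod_cast ht.ne'
      field_simp
      simp
  refine ⟨A*(1+‖b‖), by nlinarith, ?_, ?_, fun z hz => (all z hz).trans ?_⟩
  · have : ‖α‖ ≤ A := by simp only [hA]; linarith
    nlinarith
  · have : ‖β‖ ≤ A := by simp only [hA]; linarith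
    nlinarith
  · have := norm_sub_le z b
    have n5 := norm_nonneg z
    have : A*(1+‖z-b‖) ≤ A*(1+‖b‖)*(1+‖z‖) := by
      rw [mul_assoc]; gcongr; nlinarith
    gcongr

lemma ham_loc {α β z p q : ℂ} {L : ℝ} (hL : 1 ≤ L) (hz : ‖z‖ ≤ L) (hα : ‖α‖ ≤ L^2)
    (hβ : ‖β‖ ≤ L^2) (hV : ‖hamV α β z p q‖ ≤ L^3) (hS : 100 * L ≤ ‖p‖+‖q‖) :
    ‖q‖ ≤ 2*‖p‖ ∧ 49*L ≤ ‖p‖ ∧ ‖p^3+q^3‖ ≤ 5*L*‖p‖^2 ∧ 1/2 ≤ ‖(q^2+z*p+α)/p^2‖ ∧ ‖(q^2+z*p+α)/p^2‖ ≤ 2 := by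
  obtain ⟨hE, hd⟩ := ham_cmp hL hz hα hβ hV hS
  have hd' := abs_le.1 hd
  have ha : 49*L ≤ ‖p‖ := by linarith
  have hp0 : 0 < ‖p‖ := by linarith
  have hq1 : ‖q‖ ≤ 1.03*‖p‖ := by linarith
  have hq2 : 0.97*‖p‖ ≤ ‖q‖ := by linarith
  have h1 : ‖z*p+α‖ ≤ 0.03*‖p‖^2 := by
    have e1 := norm_add_le (z*p) α
    rw [norm_mul] at e1
    have e2 : ‖z‖*‖p‖ ≤ L*‖p‖ := by gcongr
    have e3 : 49*L*‖p‖ ≤ ‖p‖*‖p‖ := by gcongr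
    have e4 : (49*L)^2 ≤ ‖p‖^2 := by gcongr
    nlinarith only [e1, e2, e3, e4, hα]
  have h2 : ‖q‖^2 ≤ (1.03*‖p‖)^2 := by gcongr
  have h3 : (0.97*‖p‖)^2 ≤ ‖q‖^2 := by gcongr
  have hpp : 0 < ‖p‖^2 := by positivity
  refine ⟨by linarith, ha, hE.trans ?_, ?_, ?_⟩
  · have : (‖p‖+‖q‖)^2 ≤ 5*‖p‖^2 := by nlinarith only [hq1, hp0, norm_nonneg q]
    calc L*(‖p‖+‖q‖)^2 ≤ L*(5*‖p‖^2) := by gcongr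
      _ = _ := by ring
  · rw [norm_div, norm_pow, le_div_iff₀ hpp, add_assoc]
    have := norm_sub_le_norm_add (q^2) (z*p+α)
    rw [norm_pow] at this
    nlinarith only [this, h1, h3, hpp]
  · rw [norm_div, norm_pow, div_le_iff₀ hpp, add_assoc]
    have := norm_add_le (q^2) (z*p+α)
    rw [norm_pow] at this
    nlinarith only [this, h1, h2, hpp]

noncomputable def hamX (P : ℂ → ℂ) (Λ : Set ℂ) : ℂ → ℂ := Λᶜ.indicator (fun z => (P z)⁻¹)

lemma hamX_mem {P : ℂ → ℂ} {Λ : Set ℂ} {a : ℂ} (h : a ∈ Λ) : hamX P Λ a = 0 := by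
  simp [hamX, h]
lemma hamX_not {P : ℂ → ℂ} {Λ : Set ℂ} {a : ℂ} (h : a ∉ Λ) : hamX P Λ a = (P a)⁻¹ := by
  simp [hamX, h]

section
variable {α β : ℂ} {P Q : ℂ → ℂ} {Λ : Set ℂ}

lemma HamSol.nhds (h : HamSol α β P Q Λ) {z : ℂ} (hz : z ∉ Λ) : ∀ᶠ w in 𝓝 z, w ∉ Λ := by
  have := h.iso z
  rw [eventually_nhdsWithin_iff] at this
  filter_upwards [this] with w hw
  by_cases hwz : w = z
  · rwa [hwz]
  · exact hw hwz

/-- the scale bound -/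
def HamScale (α β : ℂ) (P Q : ℂ → ℂ) (Λ : Set ℂ) (A : ℝ) : Prop :=
  1 ≤ A ∧ ∀ w z L, z ∉ Λ → ‖z-w‖ ≤ 1 → L = A*(2+‖w‖) →
    1 ≤ L ∧ ‖z‖ ≤ L ∧ ‖α‖ ≤ L^2 ∧ ‖β‖ ≤ L^2 ∧ ‖hamV α β z (P z) (Q z)‖ ≤ L^3

lemma HamSol.scale (h : HamSol α β P Q Λ) : ∃ A, HamScale α β P Q Λ A := by
  obtain ⟨A, hA, hα, hβ, hb⟩ := h.bound
  refine ⟨A, hA, ?_⟩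
  rintro w z L hz hzw rfl
  have n1 := norm_nonneg w
  have n2 := norm_nonneg z
  have h1 : A ≤ A*(2+‖w‖) := by nlinarith
  have h2 : ‖z‖ ≤ ‖w‖+1 := by
    have := norm_sub_norm_le z w
    linarith
  have h3 : A*(2+‖w‖) ≤ (A*(2+‖w‖))^2 := by nlinarith
  refine ⟨by linarith, ?_, by linarith, by linarith, (hb z hz).trans ?_⟩
  · nlinarith
  · have : A*(1+‖z‖) ≤ A*(2+‖w‖) := mul_le_mul_of_nonneg_left (by linarith) (by linarith)
    gcongr

lemma HamSol.tendP (h : HamSol α β P Q Λ) {a : ℂ} (ha : a ∈ Λ) :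
    Tendsto (fun z => ‖P z‖) (𝓝[≠] a) atTop := by
  obtain ⟨A, hA⟩ := h.scale
  have hb := h.blow a ha
  have : ∀ᶠ z in 𝓝[≠] a, (‖P z‖+‖Q z‖)/3 ≤ ‖P z‖ := by
    have hn : ∀ᶠ z in 𝓝[≠] a, ‖z-a‖ ≤ 1 := by
      apply eventually_nhdsWithin_of_eventually_nhds
      filter_upwards [Metric.closedBall_mem_nhds a one_pos] with z hz
      simpa [dist_eq_norm] using hz
    filter_upwards [h.iso a, hn, hb.eventually_ge_atTop (100*(A*(2+‖a‖)))] with z h1 h2 h3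
    obtain ⟨e1,e2,e3,e4,e5⟩ := hA.2 a z _ h1 h2 rfl
    have := (ham_loc e1 e2 e3 e4 e5 h3).1
    linarith
  exact tendsto_atTop_mono' _ this (hb.atTop_div_const (by norm_num))

lemma HamSol.dX (h : HamSol α β P Q Λ) {z : ℂ} (hz : z ∉ Λ) (hP : P z ≠ 0) :
    HasDerivAt (hamX P Λ) (((Q z)^2+z*P z+α)/(P z)^2) z := by
  have h1 := (h.dP z hz).inv hP
  refine (h1.congr_deriv (by ring)).congr_of_eventuallyEq ?_
  filter_upwards [h.nhds hz] with w hw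
  simp [hamX_not hw]

lemma HamSol.anX (h : HamSol α β P Q Λ) {a : ℂ} (ha : a ∈ Λ) : AnalyticAt ℂ (hamX P Λ) a := by
  have ht := h.tendP ha
  apply Complex.analyticAt_of_differentiable_on_punctured_nhds_of_continuousAt
  · filter_upwards [h.iso a, ht.eventually_gt_atTop 0] with z h1 h2
    exact (h.dX h1 (norm_pos_iff.1 h2)).differentiableAt
  · rw [continuousAt_iff_punctured_nhds, hamX_mem ha]
    rw [tendsto_zero_iff_norm_tendsto_zero]
    refine (tendsto_inv_atTop_zero.comp ht).congr' ?_
    filter_upwards [h.iso a] with z h1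
    simp [hamX_not h1]

lemma HamSol.derivX_cube (h : HamSol α β P Q Λ) {a : ℂ} (ha : a ∈ Λ) :
    (deriv (hamX P Λ) a)^3 = 1 := by
  obtain ⟨A, hA⟩ := h.scale
  have hb := h.blow a ha
  have ht := h.tendP ha
  have hX := h.anX ha
  have t1 : Tendsto (deriv (hamX P Λ)) (𝓝[≠] a) (𝓝 (deriv (hamX P Λ) a)) :=
    hX.deriv.continuousAt.continuousWithinAt.tendsto
  have t2 : Tendsto (hamX P Λ) (𝓝[≠] a) (𝓝 0) := by
    have := hX.continuousAt.continuousWithinAt.tendsto (s := {a}ᶜ)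
    rwa [hamX_mem ha] at this
  have t3 : Tendsto (fun z : ℂ => z) (𝓝[≠] a) (𝓝 a) := tendsto_id.mono_left nhdsWithin_le_nhds
  have t4 : Tendsto (fun z => deriv (hamX P Λ) z - z*hamX P Λ z - α*(hamX P Λ z)^2) (𝓝[≠] a)
      (𝓝 (deriv (hamX P Λ) a - a*0 - α*0^2)) :=
    (t1.sub (t3.mul t2)).sub ((t2.pow 2).const_mul α)
  have t5 : Tendsto (fun z => (Q z/P z)^2) (𝓝[≠] a) (𝓝 (deriv (hamX P Λ) a)) := by
    simp only [mul_zero, sub_zero, ne_eq, OfNat.ofNat_ne_zero, not_false_eq_true, zero_pow] at t4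
    refine t4.congr' ?_
    filter_upwards [h.iso a, ht.eventually_gt_atTop 0] with z h1 h2
    have h2 := norm_pos_iff.1 h2
    rw [(h.dX h1 h2).deriv, hamX_not h1]
    field_simp; ring
  have t6 : Tendsto (fun z => 1+(Q z/P z)^3) (𝓝[≠] a) (𝓝 0) := by
    have hn : ∀ᶠ z in 𝓝[≠] a, ‖z-a‖ ≤ 1 := by
      apply eventually_nhdsWithin_of_eventually_nhds
      filter_upwards [Metric.closedBall_mem_nhds a one_pos] with z hz
      simpa [dist_eq_norm] using hz
    have t7 : Tendsto (fun z => (5*(A*(2+‖a‖)))/‖P z‖) (𝓝[≠] a) (𝓝 0) := ht.const_div_atTop _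
    refine squeeze_zero_norm' ?_ t7
    filter_upwards [h.iso a, hn, hb.eventually_ge_atTop (100*(A*(2+‖a‖))), ht.eventually_gt_atTop 0] with z h1 h2 h3 h4
    obtain ⟨e1,e2,e3,e4,e5⟩ := hA.2 a z _ h1 h2 rfl
    have h5 := (ham_loc e1 e2 e3 e4 e5 h3).2.2.1
    have hP := norm_pos_iff.1 h4
    have : 1+(Q z/P z)^3 = (P z^3+Q z^3)/P z^3 := by field_simp
    rw [this, norm_div, norm_pow, div_le_div_iff₀ (by positivity) h4]
    calc _ ≤ 5*(A*(2+‖a‖))*‖P z‖^2*‖P z‖ := by gcongr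
      _ = _ := by ring
  have t8 : Tendsto (fun z => ((Q z/P z)^2)^3) (𝓝[≠] a) (𝓝 1) := by
    have := (t6.sub_const 1).pow 2
    simp only [zero_sub, even_two, Even.neg_pow, one_pow] at this
    refine this.congr fun z => ?_
    ring
  exact tendsto_nhds_unique (t5.pow 3) t8

lemma HamSol.residue (h : HamSol α β P Q Λ) {a : ℂ} (ha : a ∈ Λ) :
    ∃ ρ : ℂ, ρ^3 = 1 ∧ Tendsto (fun z => (z-a)*P z) (𝓝[≠] a) (𝓝 ρ) := by
  have hc := h.derivX_cube ha
  have hX := (h.anX ha).differentiableAt.hasDerivAt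
  have h0 : deriv (hamX P Λ) a ≠ 0 := by
    intro h0; rw [h0] at hc; simp at hc
  refine ⟨(deriv (hamX P Λ) a)⁻¹, by rw [inv_pow, hc, inv_one], ?_⟩
  rw [hasDerivAt_iff_tendsto_slope] at hX
  refine (hX.inv₀ h0).congr' ?_
  filter_upwards [h.iso a] with z h1
  simp [slope_def_field, hamX_mem ha, hamX_not h1]

lemma HamSol.derivX_bd (h : HamSol α β P Q Λ) {A : ℝ} (hA : HamScale α β P Q Λ A) {w z : ℂ}
    (hzw : ‖z-w‖ ≤ 1) (hz : z ∈ Λ ∨ 100*(A*(2+‖w‖)) ≤ ‖P z‖) :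
    DifferentiableAt ℂ (hamX P Λ) z ∧ 1/2 ≤ ‖deriv (hamX P Λ) z‖ ∧ ‖deriv (hamX P Λ) z‖ ≤ 2 := by
  by_cases hzΛ : z ∈ Λ
  · have hc := h.derivX_cube hzΛ
    have h1 : ‖deriv (hamX P Λ) z‖ = 1 := Complex.norm_eq_one_of_pow_eq_one hc (by norm_num)
    exact ⟨(h.anX hzΛ).differentiableAt, by rw [h1]; norm_num, by rw [h1]; norm_num⟩
  · have hz := hz.resolve_left hzΛ
    obtain ⟨e1,e2,e3,e4,e5⟩ := hA.2 w z _ hzΛ hzw rfl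
    obtain ⟨-, f2, -, f4, f5⟩ := ham_loc e1 e2 e3 e4 e5 (hz.trans (by linarith [norm_nonneg (Q z)]))
    have hP : P z ≠ 0 := norm_pos_iff.1 (by linarith)
    have := h.dX hzΛ hP
    rw [this.deriv]
    exact ⟨this.differentiableAt, f4, f5⟩

lemma HamSol.ball (h : HamSol α β P Q Λ) {A : ℝ} (hA : HamScale α β P Q Λ A) {w : ℂ} {L : ℝ}
    (hL : L = A*(2+‖w‖)) (hw : w ∈ Λ ∨ 400*L ≤ ‖P w‖) :
    ∀ z ∈ Metric.ball w (1/(400*L)), z ∈ Λ ∨ 100*L < ‖P z‖ := by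
  have hA1 := hA.1
  have hL1 : 1 ≤ L := by rw [hL]; nlinarith [norm_nonneg w]
  set δ := 1/(400*L) with hδ
  have hδ1 : δ ≤ 1 := by rw [hδ, div_le_one (by positivity)]; linarith
  have hcl : IsClosed {z | z ∉ Λ ∧ ‖P z‖ ≤ 100*L} := by
    rw [← isOpen_compl_iff, isOpen_iff_mem_nhds]
    intro z hz
    by_cases hzΛ : z ∈ Λ
    · have := (h.tendP hzΛ).eventually_gt_atTop (100*L)
      rw [eventually_nhdsWithin_iff] at this
      filter_upwards [this] with y hy
      by_cases hyz : y = z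
      · rw [hyz]; exact hz
      · intro h1; exact absurd h1.2 (not_le.2 (hy hyz))
    · have h1 : 100*L < ‖P z‖ := by
        by_contra h1; exact hz ⟨hzΛ, not_lt.1 h1⟩
      filter_upwards [(h.dP z hzΛ).continuousAt.norm.eventually_const_lt h1] with y hy
      intro h1; exact absurd h1.2 (not_le.2 hy)
  have hcomp : IsCompact (Metric.closedBall w δ ∩ {z | z ∉ Λ ∧ ‖P z‖ ≤ 100*L}) :=
    (isCompact_closedBall w δ).inter_right hcl
  by_contra hcon
  push Not at hcon
  obtain ⟨z0, hz0, hz0Λ, hz0P⟩ := hcon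
  obtain ⟨zs, hzs, hmin⟩ := hcomp.exists_isMinOn ⟨z0, Metric.ball_subset_closedBall hz0, hz0Λ, hz0P⟩
    (f := fun z => dist z w) (by fun_prop)
  set d := dist zs w with hd
  have hdδ : d ≤ δ := hzs.1
  have hball : ∀ z ∈ Metric.ball w d, z ∈ Λ ∨ 100*L < ‖P z‖ := by
    intro z hz
    by_contra hcon
    push Not at hcon
    have hz' : dist z w < d := hz
    have := hmin (a := z) ⟨hz'.le.trans hdδ, hcon⟩
    simp only [Set.mem_ofPred_eq] at this
    linarith
  have hwne : zs ≠ w := by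
    rintro rfl
    rcases hw with hw | hw
    · exact hzs.2.1 hw
    · have := hzs.2.2; linarith
  have hd0 : 0 < d := dist_pos.2 hwne
  have hXw : ‖hamX P Λ w‖ ≤ δ := by
    rcases hw with hw | hw
    · rw [hamX_mem hw, norm_zero]; positivity
    · by_cases hwΛ : w ∈ Λ
      · rw [hamX_mem hwΛ, norm_zero]; positivity
      · rw [hamX_not hwΛ, norm_inv, hδ, one_div]; gcongr
  have hbd : ∀ z ∈ Metric.ball w d, DifferentiableAt ℂ (hamX P Λ) z ∧ ‖deriv (hamX P Λ) z‖ ≤ 2 := by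
    intro z hz
    have hz' : ‖z-w‖ < d := by rw [← dist_eq_norm]; exact hz
    have := h.derivX_bd hA (w := w) (z := z) (by linarith) (by rw [← hL]; exact (hball z hz).imp id le_of_lt)
    exact ⟨this.1, this.2.2⟩
  have hPz : ∀ z ∈ Metric.ball w d, z ∉ Λ → 400*L/3 ≤ ‖P z‖ := by
    intro z hz hzΛ
    have h1 := (convex_ball w d).norm_image_sub_le_of_norm_deriv_le (fun z hz => (hbd z hz).1)
      (fun z hz => (hbd z hz).2) (Metric.mem_ball_self hd0) hz
    have hz' : ‖z-w‖ < d := by rw [← dist_eq_norm]; exact hz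
    have h2 : ‖hamX P Λ z‖ ≤ 3*δ := by
      have := norm_sub_norm_le (hamX P Λ z) (hamX P Λ w)
      linarith
    rw [hamX_not hzΛ, norm_inv] at h2
    have hPpos : 0 < ‖P z‖ := by
      have := (hball z hz).resolve_left hzΛ
      linarith
    rw [hδ, inv_le_comm₀ hPpos (by positivity)] at h2
    refine le_trans (le_of_eq ?_) h2
    field_simp
  have hzcl : zs ∈ closure (Metric.ball w d) := by
    rw [closure_ball w hd0.ne', Metric.mem_closedBall]
  have hfr := mem_closure_iff_frequently.1 hzcl
  have : 400*L/3 ≤ ‖P zs‖ := by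
    have ht : Tendsto (fun z => ‖P z‖) (𝓝 zs) (𝓝 ‖P zs‖) :=
      (h.dP zs hzs.2.1).continuousAt.norm.tendsto
    refine ge_of_tendsto_of_frequently (α := ℝ) ht ?_
    exact (hfr.and_eventually (h.nhds hzs.2.1)).mono fun z hz => hPz z hz.1 hz.2
  have := hzs.2.2
  linarith

lemma HamSol.inj (h : HamSol α β P Q Λ) {A : ℝ} (hA : HamScale α β P Q Λ A) {w : ℂ} {L : ℝ}
    (hL : L = A*(2+‖w‖)) (hw : w ∈ Λ ∨ 400*L ≤ ‖P w‖) :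
    ∀ z ∈ Metric.ball w (1/(16000*L)), 3/8*‖z-w‖ ≤ ‖hamX P Λ z - hamX P Λ w‖ := by
  have hA1 := hA.1
  have hL1 : 1 ≤ L := by rw [hL]; nlinarith [norm_nonneg w]
  have hb := h.ball hA hL hw
  set δ := 1/(400*L) with hδ
  have hδ0 : 0 < δ := by positivity
  have hδ1 : δ ≤ 1 := by rw [hδ, div_le_one (by positivity)]; linarith
  have hδ' : 1/(16000*L) = δ/40 := by rw [hδ]; field_simp; norm_num
  rw [hδ']
  set X := hamX P Λ with hX
  have hbd : ∀ z ∈ Metric.ball w δ, DifferentiableAt ℂ X z ∧ 1/2 ≤ ‖deriv X z‖ ∧ ‖deriv X z‖ ≤ 2 := by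
    intro z hz
    have hz' : ‖z-w‖ < δ := by rw [← dist_eq_norm]; exact hz
    exact h.derivX_bd hA (w := w) (z := z) (by linarith) (by rw [← hL]; exact (hb z hz).imp id le_of_lt)
  have hdX : DifferentiableOn ℂ X (Metric.ball w δ) := fun z hz => (hbd z hz).1.differentiableWithinAt
  have hdd : DifferentiableOn ℂ (deriv X) (Metric.ball w δ) := hdX.deriv Metric.isOpen_ball
  have hww := hbd w (Metric.mem_ball_self hδ0)
  have hclose : ∀ z ∈ Metric.ball w (δ/40), ‖deriv X z - deriv X w‖ ≤ 1/8 := by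
    intro z hz
    have hz1 : z ∈ Metric.ball w δ := Metric.ball_subset_ball (by linarith) hz
    have := Complex.dist_le_div_mul_dist_of_mapsTo_ball (R₂ := 5) hdd (fun y hy => by
      rw [Metric.mem_closedBall, dist_eq_norm]
      have := norm_sub_le (deriv X y) (deriv X w)
      have := (hbd y hy).2.2
      have := hww.2.2
      linarith) hz1
    rw [dist_eq_norm] at this
    refine this.trans ?_
    have hz2 : dist z w ≤ δ/40 := le_of_lt hz
    calc 5/δ*dist z w ≤ 5/δ*(δ/40) := by gcongr
      _ = 1/8 := by field_simp; norm_num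
  intro z hz
  have hsub : Metric.ball w (δ/40) ⊆ Metric.ball w δ := Metric.ball_subset_ball (by linarith)
  have key := (convex_ball w (δ/40)).norm_image_sub_le_of_norm_hasDerivWithin_le
    (f := fun y => X y - deriv X w * y) (f' := fun y => deriv X y - deriv X w) (C := 1/8)
    (fun y hy => (((hbd y (hsub hy)).1.hasDerivAt).sub (((hasDerivAt_id y).const_mul (deriv X w)).congr_deriv (mul_one _))).hasDerivWithinAt)
    hclose (Metric.mem_ball_self (by positivity)) hz
  have e1 : (X z - deriv X w*z) - (X w - deriv X w*w) = (X z - X w) - deriv X w*(z-w) := by ring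
  rw [e1] at key
  have e2 := norm_sub_norm_le (deriv X w*(z-w)) (X z - X w)
  rw [norm_sub_rev (deriv X w*(z-w)), norm_mul] at e2
  have e3 : 1/2*‖z-w‖ ≤ ‖deriv X w‖*‖z-w‖ := by gcongr; exact hww.2.1
  linarith

lemma HamSol.near (h : HamSol α β P Q Λ) {A : ℝ} (hA : HamScale α β P Q Λ A) {w : ℂ} {L : ℝ}
    (hL : L = A*(2+‖w‖)) (hwΛ : w ∉ Λ) (hw : 200000*L ≤ ‖P w‖) :
    ∃ a ∈ Λ, ‖w-a‖ ≤ 8/‖P w‖ ∧ ‖P w‖ ≤ 3/‖w-a‖ := by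
  have hA1 := hA.1
  have hL1 : 1 ≤ L := by rw [hL]; nlinarith [norm_nonneg w]
  have hinj := h.inj hA hL (Or.inr (by linarith))
  have hP0 : 0 < ‖P w‖ := by linarith
  set s := 8/‖P w‖ with hs
  have hs0 : 0 < s := by positivity
  have hsδ : s < 1/(16000*L) := by
    rw [hs, div_lt_div_iff₀ hP0 (by positivity)]; linarith
  have hex : ∃ a ∈ Λ, ‖w-a‖ ≤ s := by
    by_contra hcon
    push Not at hcon
    have hn : ∀ z ∈ Metric.closedBall w s, z ∉ Λ := by
      intro z hz hzΛ
      have h1 := hcon z hzΛ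
      rw [Metric.mem_closedBall, dist_eq_norm, norm_sub_rev] at hz
      linarith
    have hd : DiffContOnCl ℂ P (Metric.ball w s) := by
      apply DifferentiableOn.diffContOnCl
      rw [closure_ball w hs0.ne']
      exact fun z hz => (h.dP z (hn z hz)).differentiableAt.differentiableWithinAt
    have hle := Complex.norm_le_of_forall_mem_frontier_norm_le (C := ‖P w‖/2) Metric.isBounded_ball hd
      (fun z hz => by
        rw [frontier_ball w hs0.ne'] at hz
        have hzs : ‖z-w‖ = s := by rw [← dist_eq_norm]; exact hz
        have hzn := hn z (Metric.sphere_subset_closedBall hz)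
        have h1 := hinj z (by rw [Metric.mem_ball, dist_eq_norm, hzs]; exact hsδ)
        rw [hamX_not hzn, hamX_not hwΛ, hzs] at h1
        have h2 := norm_sub_le (P z)⁻¹ (P w)⁻¹
        rw [norm_inv, norm_inv] at h2
        have h3 : 2/‖P w‖ ≤ ‖P z‖⁻¹ := by
          have : 3/8*s = 2/‖P w‖+‖P w‖⁻¹ := by rw [hs]; field_simp; norm_num
          linarith
        have hPz : 0 < ‖P z‖ := by
          have : 0 < ‖P z‖⁻¹ := lt_of_lt_of_le (by positivity) h3
          exact inv_pos.1 this
        rw [le_inv_comm₀ (by positivity) hPz] at h3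
        refine h3.trans (le_of_eq ?_)
        rw [inv_div]) (subset_closure (Metric.mem_ball_self hs0))
    linarith
  obtain ⟨a, ha, has⟩ := hex
  refine ⟨a, ha, has, ?_⟩
  have hne : w ≠ a := by rintro rfl; exact hwΛ ha
  have hwa : 0 < ‖w-a‖ := norm_pos_iff.2 (sub_ne_zero.2 hne)
  have h1 := hinj a (by rw [Metric.mem_ball, dist_eq_norm, norm_sub_rev]; linarith)
  rw [hamX_mem ha, hamX_not hwΛ, zero_sub, norm_neg, norm_inv, norm_sub_rev] at h1
  rw [le_div_iff₀ hwa]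
  rw [le_inv_comm₀ (by positivity) hP0] at h1
  have h2 := mul_le_mul_of_nonneg_right h1 hwa.le
  refine h2.trans ?_
  rw [mul_inv, mul_assoc, inv_mul_cancel₀ hwa.ne']; norm_num

lemma HamSol.main (h : HamSol α β P Q Λ) :
    ∃ C c : ℝ, 1 ≤ C ∧ 0 < c ∧ c ≤ 1 ∧
      (∀ w ∉ Λ, (‖P w‖ ≤ C*(1+‖w‖) ∧ ‖Q w‖ ≤ C*(1+‖w‖)) ∨
        ∃ a ∈ Λ, ‖w-a‖*(1+‖w‖) ≤ 1 ∧ ‖P w‖ ≤ C/‖w-a‖ ∧ ‖Q w‖ ≤ C/‖w-a‖) ∧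
      (∀ a ∈ Λ, ∀ b ∈ Λ, a ≠ b → c ≤ ‖b-a‖*(1+‖a‖)) := by
  obtain ⟨A, hA⟩ := h.scale
  have hA1 := hA.1
  refine ⟨800000*A, 1/(32000*A), by linarith, by positivity, ?_, ?_, ?_⟩
  · rw [div_le_one (by positivity)]; linarith
  · intro w hw
    have n1 := norm_nonneg w
    set L := A*(2+‖w‖) with hL
    have hL2 : L ≤ 2*A*(1+‖w‖) := by rw [hL]; nlinarith
    obtain ⟨e1,e2,e3,e4,e5⟩ := hA.2 w w L hw (by simp) hL
    have hQ : ‖Q w‖ ≤ 100*L ∨ ‖Q w‖ ≤ 2*‖P w‖ := by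
      rcases le_total (100*L) (‖P w‖+‖Q w‖) with h1 | h1
      · exact Or.inr (ham_loc e1 e2 e3 e4 e5 h1).1
      · left; linarith [norm_nonneg (P w)]
    rcases le_total (200000*L) (‖P w‖) with hP | hP
    · right
      obtain ⟨a, ha, h1, h2⟩ := h.near hA hL hw hP
      have hne : w ≠ a := by rintro rfl; exact hw ha
      have hwa : 0 < ‖w-a‖ := norm_pos_iff.2 (sub_ne_zero.2 hne)
      refine ⟨a, ha, ?_, h2.trans (by gcongr; linarith), ?_⟩
      · have h3 : 1+‖w‖ ≤ L := by rw [hL]; nlinarith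
        have h4 : 8/‖P w‖ ≤ 1/L := by
          rw [div_le_div_iff₀ (by linarith) (by linarith)]; linarith
        calc ‖w-a‖*(1+‖w‖) ≤ 1/L*L := by
              gcongr
              exact h1.trans h4
          _ = 1 := by field_simp
      · have : ‖Q w‖ ≤ 2*(3/‖w-a‖) := by
          rcases hQ with hQ | hQ <;> linarith
        refine this.trans ?_
        rw [← mul_div_assoc]; exact (div_le_div_iff_of_pos_right hwa).2 (by linarith)
    · left
      constructor
      · nlinarith
      · rcases hQ with hQ | hQ <;> nlinarith
  · intro a ha b hb hab
    have n1 := norm_nonneg a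
    by_contra hcon
    push Not at hcon
    have hinj := h.inj hA rfl (Or.inl ha) b (by
      rw [Metric.mem_ball, dist_eq_norm, lt_div_iff₀ (by positivity)]
      rw [lt_div_iff₀ (by positivity)] at hcon
      have : 0 ≤ ‖b-a‖*A := by positivity
      nlinarith)
    rw [hamX_mem ha, hamX_mem hb, sub_zero, norm_zero] at hinj
    have : 0 < ‖b-a‖ := norm_pos_iff.2 (sub_ne_zero.2 hab.symm)
    linarith
end

def HamSep (Λ : Set ℂ) (c : ℝ) : Prop :=
  0 < c ∧ c ≤ 1 ∧ ∀ a ∈ Λ, ∀ b ∈ Λ, a ≠ b → c ≤ ‖b-a‖*(1+‖a‖)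

lemma ham_finite {Λ : Set ℂ} (iso : ∀ a : ℂ, ∀ᶠ z in 𝓝[≠] a, z ∉ Λ) (r : ℝ) :
    (Λ ∩ Metric.closedBall (0:ℂ) r).Finite := by
  by_contra hcon
  obtain ⟨x, -, hx⟩ := Set.Infinite.exists_accPt_of_subset_isCompact hcon
    (isCompact_closedBall (0:ℂ) r) Set.inter_subset_right
  rw [accPt_iff_frequently_nhdsNE] at hx
  exact hx ((iso x).mono fun z hz hz' => hz hz'.1)

lemma ham_annulus {Λ : Set ℂ} {c : ℝ} (hs : HamSep Λ c) {r : ℝ} (hr : 2 ≤ r) (F : Finset ℂ)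
    (hF : ∀ a ∈ F, a ∈ Λ ∧ r - 2/r ≤ ‖a‖ ∧ ‖a‖ ≤ r + 2/r) :
    (F.card : ℝ) ≤ 768/c^2 * r^2 := by
  obtain ⟨hc, hc1, hs⟩ := hs
  have hr0 : 0 < r := by linarith
  have hir : 1/r ≤ 1/2 := by gcongr
  have hir0 : 0 < 1/r := by positivity
  have h2r : 2/r = 2*(1/r) := by ring
  have h3r : 3/r = 3*(1/r) := by ring
  set s := c/(8*r) with hsdef
  have hs0 : 0 < s := by positivity
  have hsr : s ≤ 1/r := by
    rw [hsdef, div_le_div_iff₀ (by positivity) hr0]; nlinarith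
  have hdisj : (F : Set ℂ).PairwiseDisjoint (fun a => Metric.ball a s) := by
    intro a ha b hb hab
    apply Metric.ball_disjoint_ball
    have h1 := hs a (hF a ha).1 b (hF b hb).1 hab
    have h2 := (hF a ha).2.2
    rw [dist_comm, dist_eq_norm]
    have h4 : c ≤ ‖b-a‖*(4*r) := h1.trans (by gcongr; linarith)
    have : s + s = c/(4*r) := by rw [hsdef]; field_simp; norm_num
    rw [this, div_le_iff₀ (by positivity)]
    exact h4
  have hR2 : 0 ≤ r - 3/r := by rw [h3r]; linarith
  have hsub : (⋃ a ∈ F, Metric.ball a s) ∪ Metric.ball 0 (r-3/r) ⊆ Metric.ball (0:ℂ) (r+3/r) := by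
    apply Set.union_subset
    · refine Set.iUnion₂_subset fun a ha => ?_
      apply Metric.ball_subset_ball'
      rw [dist_zero_right]
      have := (hF a ha).2.2
      linarith
    · apply Metric.ball_subset_ball; rw [h3r]; linarith
  have hd2 : Disjoint (⋃ a ∈ F, Metric.ball a s) (Metric.ball (0:ℂ) (r-3/r)) := by
    rw [Set.disjoint_iUnion₂_left]
    intro a ha
    apply Metric.ball_disjoint_ball
    rw [dist_zero_right]
    have := (hF a ha).2.1
    linarith
  have hm := MeasureTheory.measure_mono (μ := MeasureTheory.volume) hsub
  rw [MeasureTheory.measure_union hd2 Metric.isOpen_ball.measurableSet,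
    MeasureTheory.measure_biUnion_finset hdisj (fun a _ => Metric.isOpen_ball.measurableSet)] at hm
  simp only [Complex.volume_ball, Finset.sum_const, nsmul_eq_mul] at hm
  rw [← mul_assoc, ← add_mul] at hm
  have hm2 := (ENNReal.mul_le_mul_iff_left (by simp [NNReal.pi_ne_zero]) (by simp)).1 hm
  rw [← ENNReal.ofReal_pow hs0.le, ← ENNReal.ofReal_pow hR2, ← ENNReal.ofReal_pow (by positivity),
    ← ENNReal.ofReal_natCast, ← ENNReal.ofReal_mul (by positivity),
    ← ENNReal.ofReal_add (by positivity) (by positivity),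
    ENNReal.ofReal_le_ofReal_iff (by positivity)] at hm2
  have e : (r+3/r)^2 - (r-3/r)^2 = 12 := by field_simp; ring
  have h5 : (F.card:ℝ)*s^2 ≤ 12 := by linarith
  rw [hsdef, div_pow, ← mul_div_assoc, div_le_iff₀ (by positivity)] at h5
  rw [div_mul_eq_mul_div, le_div_iff₀ (by positivity)]
  linarith

lemma ham_removable {f : ℂ → ℂ} {s : Set ℂ} {a : ℂ} (hs : s ∈ 𝓝 a)
    (hd : DifferentiableOn ℂ f (s \ {a}))
    (hl : Tendsto (fun z => (z-a)*f z) (𝓝[≠] a) (𝓝 0)) :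
    DifferentiableOn ℂ (Function.update f a (limUnder (𝓝[≠] a) f)) s := by
  apply Complex.differentiableOn_update_limUnder_of_isLittleO hs hd
  have h2 : Tendsto (fun z => (z-a)*(f z - f a)) (𝓝[≠] a) (𝓝 0) := by
    have h3 : Tendsto (fun z => (z-a)*f a) (𝓝[≠] a) (𝓝 0) := by
      have : Tendsto (fun z => (z-a)*f a) (𝓝 a) (𝓝 ((a-a)*f a)) :=
        Continuous.tendsto (by fun_prop) a
      simpa using this.mono_left nhdsWithin_le_nhds
    simpa [mul_sub] using hl.sub h3
  rw [isLittleO_iff_tendsto']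
  · refine h2.congr fun z => ?_
    rw [div_inv_eq_mul, mul_comm]
  · filter_upwards [self_mem_nhdsWithin] with z hz hz'
    exact absurd hz' (inv_ne_zero (sub_ne_zero.2 hz))

lemma ham_residue_thm (res : ℂ → ℂ) {t : ℝ} (ht : 0 < t) (F : Finset ℂ) : ∀ (f : ℂ → ℂ),
    (∀ a ∈ F, a ∈ Metric.ball (0:ℂ) t) →
    (∀ z ∈ Metric.closedBall (0:ℂ) t, z ∉ F → DifferentiableAt ℂ f z) →
    (∀ a ∈ F, Tendsto (fun z => (z-a)*f z) (𝓝[≠] a) (𝓝 (res a))) →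
    (∮ z in C(0, t), f z) = 2*Real.pi*Complex.I * ∑ a ∈ F, res a := by
  classical
  induction F using Finset.induction_on with
  | empty =>
    intro f _ hd _
    rw [Finset.sum_empty, mul_zero]
    apply Complex.circleIntegral_eq_zero_of_differentiable_on_off_countable ht.le Set.countable_empty
    · exact fun z hz => (hd z hz (by simp)).continuousAt.continuousWithinAt
    · exact fun z hz => hd z (Metric.ball_subset_closedBall hz.1) (by simp)
  | insert a F ha ih =>
    intro f hF hd hl
    have hat := hF a (by simp)
    set g : ℂ → ℂ := fun z => f z - res a * (z-a)⁻¹ with hg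
    set G := Function.update g a (limUnder (𝓝[≠] a) g) with hG
    have hGe : ∀ z, z ≠ a → G z = g z := fun z hz => Function.update_of_ne hz _ _
    have hgd : ∀ z ∈ Metric.closedBall (0:ℂ) t, z ≠ a → z ∉ F → DifferentiableAt ℂ g z := by
      intro z hz hza hzF
      apply (hd z hz (by simp [hza, hzF])).sub
      apply DifferentiableAt.const_mul
      exact (differentiableAt_id.sub_const a).inv (sub_ne_zero.2 hza)
    have hga : Tendsto (fun z => (z-a)*g z) (𝓝[≠] a) (𝓝 0) := by
      have := (hl a (by simp)).sub (tendsto_const_nhds (x := res a))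
      rw [sub_self] at this
      refine this.congr' ?_
      filter_upwards [self_mem_nhdsWithin] with z hz
      have : z - a ≠ 0 := sub_ne_zero.2 hz
      simp only [hg]; field_simp
    have hGa : DifferentiableAt ℂ G a := by
      have hU : IsOpen (Metric.ball (0:ℂ) t ∩ (F:Set ℂ)ᶜ) :=
        Metric.isOpen_ball.inter F.finite_toSet.isClosed.isOpen_compl
      have hm : Metric.ball (0:ℂ) t ∩ (F:Set ℂ)ᶜ ∈ 𝓝 a := hU.mem_nhds ⟨hat, by simpa using ha⟩
      refine (ham_removable hm ?_ hga).differentiableAt hm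
      intro z hz
      exact (hgd z (Metric.ball_subset_closedBall hz.1.1) hz.2 (by simpa using hz.1.2)).differentiableWithinAt
    have key := ih G (fun b hb => hF b (by simp [hb])) (fun z hz hzF => by
        by_cases hza : z = a
        · rw [hza]; exact hGa
        · refine (hgd z hz hza hzF).congr_of_eventuallyEq ?_
          filter_upwards [isOpen_ne.mem_nhds hza] with y hy using hGe y hy) (fun b hb => by
        have hba : b ≠ a := by rintro rfl; exact ha hb
        have h1 := hl b (by simp [hb])
        have h2 : Tendsto (fun z => (z-b)*(res a * (z-a)⁻¹)) (𝓝[≠] b) (𝓝 0) := by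
          have : ContinuousAt (fun z => (z-b)*(res a * (z-a)⁻¹)) b := by
            have : b - a ≠ 0 := sub_ne_zero.2 hba
            fun_prop (disch := assumption)
          have := this.tendsto.mono_left (nhdsWithin_le_nhds (s := {b}ᶜ))
          simpa using this
        have h3 := h1.sub h2
        rw [sub_zero] at h3
        refine h3.congr' ?_
        filter_upwards [nhdsWithin_le_nhds (isOpen_ne.mem_nhds hba)] with y hy
        rw [hGe y hy, hg]; ring)
    rw [Finset.sum_insert ha]
    have hsp : ∀ z ∈ Metric.sphere (0:ℂ) t, z ≠ a := by
      rintro z hz rfl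
      rw [mem_sphere_iff_norm, sub_zero] at hz
      rw [Metric.mem_ball, dist_zero_right] at hat
      linarith
    have hspF : ∀ z ∈ Metric.sphere (0:ℂ) t, z ∉ F := by
      intro z hz hzF
      have := hF z (by simp [hzF])
      rw [mem_sphere_iff_norm, sub_zero] at hz
      rw [Metric.mem_ball, dist_zero_right] at this
      linarith
    have e1 : (∮ z in C(0, t), G z) = ∮ z in C(0, t), g z :=
      circleIntegral.integral_congr ht.le fun z hz => hGe z (hsp z hz)
    have i1 : CircleIntegrable f 0 t := by
      apply ContinuousOn.circleIntegrable ht.le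
      exact fun z hz => (hd z (Metric.sphere_subset_closedBall hz)
        (by simp [hsp z hz, hspF z hz])).continuousAt.continuousWithinAt
    have i2 : CircleIntegrable (fun z => res a*(z-a)⁻¹) 0 t := by
      apply ContinuousOn.circleIntegrable ht.le
      intro z hz
      have : z - a ≠ 0 := sub_ne_zero.2 (hsp z hz)
      apply ContinuousAt.continuousWithinAt
      fun_prop (disch := assumption)
    have e2 : (∮ z in C(0, t), g z) = (∮ z in C(0, t), f z) - ∮ z in C(0, t), res a*(z-a)⁻¹ :=
      circleIntegral.integral_sub i1 i2
    rw [circleIntegral.integral_const_mul, circleIntegral.integral_sub_inv_of_mem_ball hat] at e2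
    rw [← e1, key] at e2
    linear_combination -e2

lemma ham_lint_polar (f : ℂ → ENNReal) (hf : Measurable f) :
    ∫⁻ w, f w = ∫⁻ t in Set.Ioi (0:ℝ), ∫⁻ θ in Set.Ioo (-Real.pi) Real.pi,
      ENNReal.ofReal t * f (circleMap 0 t θ) := by
  rw [← Complex.lintegral_comp_polarCoord_symm]
  have : polarCoord.target = Set.Ioi (0 : ℝ) ×ˢ Set.Ioo (-Real.pi) Real.pi := rfl
  rw [this, MeasureTheory.Measure.volume_eq_prod, ← MeasureTheory.Measure.prod_restrict,
    MeasureTheory.lintegral_prod]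
  · have : ∀ t θ : ℝ, Complex.polarCoord.symm (t, θ) = circleMap 0 t θ := by
      intro t θ
      rw [Complex.polarCoord_symm_apply, circleMap, Complex.exp_mul_I]
      simp
    simp only [this, smul_eq_mul]
  · apply Measurable.aemeasurable
    have : Measurable (fun p : ℝ × ℝ => Complex.polarCoord.symm p) := by
      simp only [Complex.polarCoord_symm_apply]
      fun_prop
    simp only [smul_eq_mul]
    exact (ENNReal.measurable_ofReal.comp measurable_fst).mul (hf.comp this)

noncomputable def hamK (s : ℝ) (u : ℂ) : ENNReal :=
  (Metric.closedBall (0:ℂ) s).indicator (fun u => ENNReal.ofReal (‖u‖⁻¹)) u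

lemma hamK_meas (s : ℝ) : Measurable (hamK s) := by
  unfold hamK
  apply Measurable.indicator _ Metric.isClosed_closedBall.measurableSet
  fun_prop

lemma hamK_int (s : ℝ) : ∫⁻ w, hamK s w = ENNReal.ofReal (2*Real.pi*s) := by
  rw [ham_lint_polar _ (hamK_meas s)]
  have : ∀ t ∈ Set.Ioi (0:ℝ), (∫⁻ θ in Set.Ioo (-Real.pi) Real.pi,
      ENNReal.ofReal t * hamK s (circleMap 0 t θ)) =
      (Set.Iic s).indicator (fun _ => ENNReal.ofReal (2*Real.pi)) t := by
    intro t ht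
    have ht' : (0:ℝ) < t := ht
    have : ∀ θ, ENNReal.ofReal t * hamK s (circleMap 0 t θ) = (Set.Iic s).indicator (fun _ => (1:ENNReal)) t := by
      intro θ
      unfold hamK Set.indicator
      simp only [Metric.mem_closedBall, dist_zero_right, norm_circleMap_zero, abs_of_pos ht', Set.mem_Iic]
      split_ifs
      · rw [← ENNReal.ofReal_mul ht'.le, mul_inv_cancel₀ ht'.ne', ENNReal.ofReal_one]
      · simp
    simp only [this, MeasureTheory.lintegral_const, MeasureTheory.Measure.restrict_apply_univ, Real.volume_Ioo]
    unfold Set.indicator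
    split_ifs
    · rw [one_mul]; congr 1; ring
    · simp
  rw [MeasureTheory.setLIntegral_congr_fun measurableSet_Ioi this,
    MeasureTheory.lintegral_indicator measurableSet_Iic, MeasureTheory.lintegral_const,
    MeasureTheory.Measure.restrict_restrict measurableSet_Iic,
    MeasureTheory.Measure.restrict_apply_univ, Set.Iic_inter_Ioi, Real.volume_Ioc,
    ← ENNReal.ofReal_mul (by positivity)]
  simp

structure HamPole (P : ℂ → ℂ) (Λ : Set ℂ) (res : ℂ → ℂ) (C c : ℝ) : Prop where
  dif : ∀ z, z ∉ Λ → DifferentiableAt ℂ P z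
  iso : ∀ a : ℂ, ∀ᶠ z in 𝓝[≠] a, z ∉ Λ
  sep : HamSep Λ c
  hC : 1 ≤ C
  bd : ∀ w, w ∉ Λ → ‖P w‖ ≤ C*(1+‖w‖) ∨ ∃ a ∈ Λ, ‖w-a‖*(1+‖w‖) ≤ 1 ∧ ‖P w‖ ≤ C/‖w-a‖
  lim : ∀ a ∈ Λ, Tendsto (fun z => (z-a)*P z) (𝓝[≠] a) (𝓝 (res a))
  nrm : ∀ a ∈ Λ, ‖res a‖ = 1

lemma ham_circle_le {f : ℂ → ℂ} {t : ℝ} (ht : 0 < t) {Ψ : ℂ → ENNReal}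
    (hΨ : ∀ w, ‖w‖ = t → ‖f w‖ₑ ≤ Ψ w) :
    ‖∮ z in C(0, t), f z‖ₑ ≤ ∫⁻ θ in Set.Ioo (-Real.pi) Real.pi,
      ENNReal.ofReal t * Ψ (circleMap 0 t θ) := by
  have hper : Function.Periodic (fun θ => deriv (circleMap 0 t) θ • f (circleMap 0 t θ)) (2*Real.pi) := by
    intro θ
    simp only [deriv_circleMap, periodic_circleMap (0:ℂ) t θ]
  have h1 := hper.intervalIntegral_add_eq 0 (-Real.pi)
  have e : -Real.pi + 2*Real.pi = Real.pi := by ring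
  rw [zero_add, e] at h1
  rw [circleIntegral, h1, intervalIntegral.integral_of_le (by linarith [Real.pi_pos])]
  refine (MeasureTheory.enorm_integral_le_lintegral_enorm _).trans ?_
  rw [MeasureTheory.setLIntegral_congr MeasureTheory.Ioo_ae_eq_Ioc.symm]
  apply MeasureTheory.lintegral_mono
  intro θ
  simp only [deriv_circleMap, enorm_smul, enorm_mul]
  have e1 : ‖circleMap 0 t θ‖ₑ = ENNReal.ofReal t := by
    rw [← ofReal_norm, norm_circleMap_zero, abs_of_pos ht]
  have e2 : ‖Complex.I‖ₑ = 1 := by rw [← ofReal_norm]; simp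
  rw [e1, e2, mul_one]
  gcongr
  exact hΨ _ (by rw [norm_circleMap_zero, abs_of_pos ht])

lemma HamPole.sum_bound {P : ℂ → ℂ} {Λ : Set ℂ} {res : ℂ → ℂ} {C c : ℝ} (h : HamPole P Λ res C c)
    {r : ℝ} (hr : 2 ≤ r) :
    ‖∑ a ∈ (ham_finite h.iso r).toFinset, res a‖ ≤ (3*C + 2*C*(768/c^2)) * r^2 := by
  classical
  have hr0 : 0 < r := by linarith
  have hir : 1/r ≤ 1/2 := by gcongr
  have hir0 : 0 < 1/r := by positivity
  have h2r : 2/r = 2*(1/r) := by ring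
  have hC := h.hC
  set A := ((ham_finite h.iso (r+2/r)).toFinset).filter (fun a => r-2/r ≤ ‖a‖) with hA
  have hAmem : ∀ a, a ∈ A ↔ a ∈ Λ ∧ r-2/r ≤ ‖a‖ ∧ ‖a‖ ≤ r+2/r := by
    intro a
    simp only [hA, Finset.mem_filter, Set.Finite.mem_toFinset, Set.mem_inter_iff,
      Metric.mem_closedBall, dist_zero_right]
    tauto
  have hN := ham_annulus h.sep hr A (fun a ha => (hAmem a).1 ha)
  set N : ℝ := (A.card : ℝ) with hNdef
  set S : ℝ → ℂ := fun t => ∑ a ∈ (ham_finite h.iso t).toFinset, res a with hS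
  set R := r+1/r with hR
  set Ann : Set ℂ := Metric.closedBall 0 R \ Metric.ball 0 r with hAnn
  have hAnnM : MeasurableSet Ann :=
    Metric.isClosed_closedBall.measurableSet.diff Metric.isOpen_ball.measurableSet
  set Ψ : ℂ → ENNReal := fun w => Ann.indicator (fun _ => ENNReal.ofReal (C*(2+r))) w +
    ∑ a ∈ A, ENNReal.ofReal C * hamK (1/r) (w-a) with hΨ
  have hM1 : Measurable (Ann.indicator (fun _ => ENNReal.ofReal (C*(2+r)))) :=
    measurable_const.indicator hAnnM
  have hM2 : ∀ a : ℂ, Measurable (fun w => ENNReal.ofReal C * hamK (1/r) (w-a)) := fun a =>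
    ((hamK_meas _).comp (measurable_id.sub_const a)).const_mul _
  have hM3 : Measurable Ψ := hM1.add (Finset.measurable_sum _ fun a _ => hM2 a)
  have hPΨ : ∀ w, w ∉ Λ → r ≤ ‖w‖ → ‖w‖ ≤ R → ‖P w‖ₑ ≤ Ψ w := by
    intro w hw h1 h2
    rw [← ofReal_norm]
    rcases h.bd w hw with hb | ⟨a, ha, hb1, hb2⟩
    · refine le_trans ?_ le_self_add
      have : w ∈ Ann := by
        simp only [hAnn, Set.mem_sdiff, Metric.mem_closedBall, Metric.mem_ball, dist_zero_right, not_lt]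
        exact ⟨h2, h1⟩
      rw [Set.indicator_of_mem this]
      apply ENNReal.ofReal_le_ofReal
      refine hb.trans (mul_le_mul_of_nonneg_left ?_ (by linarith))
      linarith
    · have hwa : ‖w-a‖ ≤ 1/r := by
        rw [le_div_iff₀ hr0]
        refine le_trans ?_ hb1
        gcongr
        linarith
      have hd := abs_le.1 (abs_norm_sub_norm_le w a)
      have haA : a ∈ A := by
        rw [hAmem]
        refine ⟨ha, ?_, ?_⟩ <;> linarith
      refine le_trans ?_ le_add_self
      refine le_trans ?_ (Finset.single_le_sum (f := fun a => ENNReal.ofReal C * hamK (1/r) (w-a))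
        (fun _ _ => zero_le) haA)
      have : hamK (1/r) (w-a) = ENNReal.ofReal (‖w-a‖⁻¹) := by
        unfold hamK
        rw [Set.indicator_of_mem]
        simpa using hwa
      simp only [this]
      rw [← ENNReal.ofReal_mul (by linarith), ← div_eq_mul_inv]
      exact ENNReal.ofReal_le_ofReal hb2
  have hpi : ((NNReal.pi : NNReal) : ENNReal) = ENNReal.ofReal Real.pi := by
    rw [← NNReal.coe_real_pi, ENNReal.ofReal_coe_nnreal]
  have hvol : MeasureTheory.volume Ann = ENNReal.ofReal ((R^2-r^2)*Real.pi) := by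
    rw [hAnn, MeasureTheory.measure_sdiff (Metric.ball_subset_closedBall.trans
      (Metric.closedBall_subset_closedBall (by linarith)))
      Metric.isOpen_ball.measurableSet.nullMeasurableSet (by
        rw [Complex.volume_ball]; exact ENNReal.mul_ne_top (by simp) (by simp)),
      Complex.volume_ball, Complex.volume_closedBall, hpi, ← ENNReal.ofReal_pow (by positivity),
      ← ENNReal.ofReal_pow (by positivity), ← ENNReal.ofReal_mul (by positivity),
      ← ENNReal.ofReal_mul (by positivity), ← ENNReal.ofReal_sub _ (by positivity), sub_mul]
  have hint : ∫⁻ w, Ψ w = ENNReal.ofReal (C*(2+r)*((R^2-r^2)*Real.pi) + N*(C*(2*Real.pi*(1/r)))) := by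
    have hRr : 0 ≤ R^2-r^2 := by rw [hR]; nlinarith
    rw [hΨ, MeasureTheory.lintegral_add_left hM1, MeasureTheory.lintegral_finsetSum _ (fun a _ => hM2 a),
      MeasureTheory.lintegral_indicator hAnnM, MeasureTheory.setLIntegral_const, hvol,
      ← ENNReal.ofReal_mul (by positivity), ENNReal.ofReal_add (by positivity) (by positivity)]
    congr 1
    have : ∀ a : ℂ, ∫⁻ w, ENNReal.ofReal C * hamK (1/r) (w-a) = ENNReal.ofReal (C*(2*Real.pi*(1/r))) := by
      intro a
      have hm : Measurable (fun w => hamK (1/r) (w-a)) :=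
        (hamK_meas _).comp (measurable_id.sub_const a)
      rw [MeasureTheory.lintegral_const_mul _ hm,
        MeasureTheory.lintegral_sub_right_eq_self (fun w => hamK (1/r) w) a, hamK_int,
        ← ENNReal.ofReal_mul (by linarith)]
    simp only [this, Finset.sum_const, nsmul_eq_mul]
    rw [ENNReal.ofReal_mul (p := N) (by positivity), hNdef, ENNReal.ofReal_natCast]
  have hbad : (norm '' (Λ ∩ Metric.closedBall (0:ℂ) R)).Finite := (ham_finite h.iso R).image _
  have hcirc : ∀ t, r ≤ t → t ≤ R → t ∉ norm '' (Λ ∩ Metric.closedBall (0:ℂ) R) →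
      ENNReal.ofReal (2*Real.pi*(‖S r‖-N)) ≤ ∫⁻ θ in Set.Ioo (-Real.pi) Real.pi,
      ENNReal.ofReal t * Ψ (circleMap 0 t θ) := by
    intro t hrt htR htb
    have ht0 : 0 < t := by linarith
    have hnΛ : ∀ w, ‖w‖ = t → w ∉ Λ := by
      intro w hw hwΛ
      exact htb ⟨w, ⟨hwΛ, by simpa [hw] using htR⟩, hw⟩
    have hle := ham_circle_le (f := P) ht0 (Ψ := Ψ) (fun w hw => hPΨ w (hnΛ w hw) (by linarith) (by linarith))
    refine le_trans ?_ hle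
    rw [ham_residue_thm res ht0 (ham_finite h.iso t).toFinset P]
    · rw [← ofReal_norm]
      apply ENNReal.ofReal_le_ofReal
      have e : ‖2*(Real.pi:ℂ)*Complex.I‖ = 2*Real.pi := by
        simp [abs_of_pos Real.pi_pos]
      rw [norm_mul, e]
      gcongr
      have hsub : (ham_finite h.iso r).toFinset ⊆ (ham_finite h.iso t).toFinset := by
        intro a
        simp only [Set.Finite.mem_toFinset, Set.mem_inter_iff, Metric.mem_closedBall]
        exact fun h => ⟨h.1, h.2.trans hrt⟩
      have hsd := Finset.sum_sdiff (f := res) hsub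
      have hdiff : ‖∑ a ∈ (ham_finite h.iso t).toFinset \ (ham_finite h.iso r).toFinset, res a‖ ≤ N := by
        have hsA : (ham_finite h.iso t).toFinset \ (ham_finite h.iso r).toFinset ⊆ A := by
          intro a
          simp only [Finset.mem_sdiff, Set.Finite.mem_toFinset, Set.mem_inter_iff,
            Metric.mem_closedBall, dist_zero_right, hAmem]
          rintro ⟨⟨h1, h2⟩, h3⟩
          have h4 : r < ‖a‖ := by
            by_contra h4
            exact h3 ⟨h1, not_lt.1 h4⟩
          refine ⟨h1, ?_, ?_⟩ <;> linarith
        refine (norm_sum_le _ _).trans ?_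
        refine (Finset.sum_le_sum_of_subset_of_nonneg hsA (fun _ _ _ => norm_nonneg _)).trans ?_
        rw [Finset.sum_congr rfl (fun a ha => h.nrm a ((hAmem a).1 ha).1)]
        simp [hNdef]
      have h5 : S r = S t - ∑ a ∈ (ham_finite h.iso t).toFinset \ (ham_finite h.iso r).toFinset, res a := by
        simp only [hS]; rw [← hsd]; ring
      have h6 := norm_sub_le (S t) (∑ a ∈ (ham_finite h.iso t).toFinset \ (ham_finite h.iso r).toFinset, res a)
      rw [← h5] at h6
      change ‖S r‖ - N ≤ ‖S t‖
      linarith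
    · intro a ha
      simp only [Set.Finite.mem_toFinset, Set.mem_inter_iff,
            Metric.mem_closedBall, dist_zero_right] at ha
      rw [Metric.mem_ball, dist_zero_right]
      exact lt_of_le_of_ne ha.2 fun h => hnΛ a h ha.1
    · intro z hz hz'
      apply h.dif
      intro hzΛ
      exact hz' (by simpa using ⟨hzΛ, by simpa using hz⟩)
    · intro a ha
      apply h.lim
      simp only [Set.Finite.mem_toFinset, Set.mem_inter_iff] at ha
      exact ha.1
  have hI : ∫⁻ t in Set.Icc r R, ENNReal.ofReal (2*Real.pi*(‖S r‖-N)) ≤ ∫⁻ w, Ψ w := by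
    rw [ham_lint_polar _ hM3]
    calc _ ≤ ∫⁻ t in Set.Icc r R, ∫⁻ θ in Set.Ioo (-Real.pi) Real.pi,
          ENNReal.ofReal t * Ψ (circleMap 0 t θ) := by
          apply MeasureTheory.lintegral_mono_ae
          have h1 : ∀ᵐ t ∂(MeasureTheory.volume.restrict (Set.Icc r R)),
              t ∉ norm '' (Λ ∩ Metric.closedBall (0:ℂ) R) :=
            MeasureTheory.ae_restrict_of_ae (MeasureTheory.measure_eq_zero_iff_ae_notMem.1
              (hbad.measure_zero MeasureTheory.volume))
          filter_upwards [h1, MeasureTheory.ae_restrict_mem measurableSet_Icc] with t h1 h2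
          exact hcirc t h2.1 h2.2 h1
      _ ≤ _ := by
          apply MeasureTheory.lintegral_mono_set
          intro t ht
          exact lt_of_lt_of_le hr0 ht.1
  rw [MeasureTheory.setLIntegral_const, hint, Real.volume_Icc, mul_comm,
    ← ENNReal.ofReal_mul (by rw [hR]; linarith), ENNReal.ofReal_le_ofReal_iff] at hI
  · have hpi0 := Real.pi_pos
    have e1 : R - r = 1/r := by rw [hR]; ring
    have e2 : R^2-r^2 = 2 + (1/r)^2 := by rw [hR]; field_simp; ring
    rw [e1, e2] at hI
    have h7 : (1/r)^2 ≤ 1 := by nlinarith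
    have hN0 : 0 ≤ N := by positivity
    have h8 : 2*Real.pi*(‖S r‖-N) ≤ r*(C*(2+r)*((2+(1/r)^2)*Real.pi)) + N*(C*(2*Real.pi)) := by
      have := mul_le_mul_of_nonneg_left hI hr0.le
      have e3 : r*(1/r*(2*Real.pi*(‖S r‖-N))) = 2*Real.pi*(‖S r‖-N) := by field_simp
      have e4 : r*(N*(C*(2*Real.pi*(1/r)))) = N*(C*(2*Real.pi)) := by field_simp
      rw [e3, mul_add, e4] at this
      exact this
    have h9 : r*(C*(2+r)*((2+(1/r)^2)*Real.pi)) ≤ r*(C*(2*r)*(3*Real.pi)) := by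
      gcongr <;> linarith
    have h10 : ‖S r‖ - N ≤ 3*C*r^2 + N*C := by
      have : 2*Real.pi*(‖S r‖-N) ≤ 2*Real.pi*(3*C*r^2 + N*C) := by nlinarith
      exact le_of_mul_le_mul_left this (by positivity)
    change ‖S r‖ ≤ _
    have h11 : N*C ≤ 768/c^2*r^2*C := by gcongr
    have h12 : N ≤ N*C := by nlinarith
    nlinarith
  · have hRr : 0 ≤ R^2-r^2 := by rw [hR]; nlinarith
    positivity

lemma ham_cube {u : ℂ} (hu : u^3 = 1) : u = 1 ∨ u.re = -1/2 := by
  have h1 : (u-1)*(u^2+u+1) = 0 := by linear_combination hu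
  rcases mul_eq_zero.1 h1 with h | h
  · left; exact sub_eq_zero.1 h
  · right
    have hn : ‖u‖ = 1 := by
      have : ‖u‖^3 = 1 := by rw [← norm_pow, hu, norm_one]
      exact (pow_eq_one_iff_of_nonneg (norm_nonneg _) (by norm_num)).1 this
    have h2 : u*conj u = 1 := by rw [Complex.mul_conj', hn]; norm_num
    have h3 : u + 1 + conj u = 0 := by linear_combination conj u * h + (-u-1) * h2
    have := congrArg Complex.re h3
    simp at this
    linarith

lemma ham_setCount {S : Set ℂ} {r : ℝ} (h : (S ∩ Metric.closedBall (0:ℂ) r).Finite) :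
    setCount S r = (h.toFinset.card : ℝ) := by
  unfold setCount
  rw [Set.ncard_eq_toFinset_card _ h]

lemma HamPole.count {P : ℂ → ℂ} {Λ : Set ℂ} {res : ℂ → ℂ} {C c : ℝ} (h : HamPole P Λ res C c)
    (h3 : ∀ a ∈ Λ, res a^3 = 1) {ρ : ℂ} (hρ : ρ^3 = 1) {r : ℝ} (hr : 2 ≤ r) :
    |setCount {z | z ∈ Λ ∧ res z = ρ} r - 1/3*setCount Λ r| ≤ (3*C + 2*C*(768/c^2)) * r^2 := by
  classical
  have hf := ham_finite h.iso r
  have hf2 : ({z | z ∈ Λ ∧ res z = ρ} ∩ Metric.closedBall (0:ℂ) r).Finite :=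
    hf.subset fun z hz => ⟨hz.1.1, hz.2⟩
  have hfil : hf2.toFinset = hf.toFinset.filter (fun z => res z = ρ) := by
    ext z
    simp only [Set.Finite.mem_toFinset, Finset.mem_filter, Set.mem_inter_iff, Set.mem_ofPred_eq]
    tauto
  rw [ham_setCount hf2, ham_setCount hf, hfil, Finset.natCast_card_filter]
  have hn : ‖ρ‖ = 1 := by
    have : ‖ρ‖^3 = 1 := by rw [← norm_pow, hρ, norm_one]
    exact (pow_eq_one_iff_of_nonneg (norm_nonneg _) (by norm_num)).1 this
  have h2 : ρ*conj ρ = 1 := by rw [Complex.mul_conj', hn]; norm_num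
  have key : ∀ a ∈ hf.toFinset, (if res a = ρ then (1:ℝ) else 0) = 2/3*(conj ρ * res a).re + 1/3 := by
    intro a ha
    have haΛ : a ∈ Λ := by
      simp only [Set.Finite.mem_toFinset, Set.mem_inter_iff] at ha; exact ha.1
    have hu : (conj ρ * res a)^3 = 1 := by
      rw [mul_pow, h3 a haΛ, ← map_pow, hρ]; simp
    split_ifs with hif
    · rw [hif, mul_comm (conj ρ), h2]; norm_num
    · rcases ham_cube hu with h4 | h4
      · exfalso; apply hif
        linear_combination ρ*h4 - res a * h2
      · rw [h4]; norm_num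
  rw [Finset.sum_congr rfl key, Finset.sum_add_distrib, ← Finset.mul_sum, Finset.sum_const, nsmul_eq_mul,
    ← Complex.re_sum, ← Finset.mul_sum]
  have e : ∀ x y : ℝ, 2/3*x + y*(1/3) - 1/3*y = 2/3*x := by intros; ring
  rw [e, abs_mul]
  have hb := h.sum_bound hr
  have h5 : |(conj ρ * ∑ a ∈ hf.toFinset, res a).re| ≤ ‖∑ a ∈ hf.toFinset, res a‖ := by
    refine (Complex.abs_re_le_norm _).trans ?_
    rw [norm_mul, RCLike.norm_conj, hn, one_mul]
  rw [abs_of_pos (by norm_num : (0:ℝ) < 2/3)]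
  have h6 := abs_nonneg (conj ρ * ∑ a ∈ hf.toFinset, res a).re
  have h7 : ‖∑ a ∈ hf.toFinset, res a‖ ≤ (3*C + 2*C*(768/c^2)) * r^2 := hb
  linarith

lemma ham_countable {S : Set ℂ} (iso : ∀ a : ℂ, ∀ᶠ z in 𝓝[≠] a, z ∉ S) : S.Countable := by
  have : S = ⋃ n : ℕ, S ∩ Metric.closedBall (0:ℂ) n := by
    ext z
    simp only [Set.mem_iUnion, Set.mem_inter_iff, Metric.mem_closedBall, dist_zero_right]
    refine ⟨fun h => ?_, fun ⟨n, h⟩ => h.1⟩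
    obtain ⟨n, hn⟩ := exists_nat_ge ‖z‖
    exact ⟨n, h, hn⟩
  rw [this]
  exact Set.countable_iUnion fun n => (ham_finite iso n).countable

lemma ham_prox {f : ℂ → ℂ} {Λ E : Set ℂ} {C c : ℝ} (iso : ∀ a : ℂ, ∀ᶠ z in 𝓝[≠] a, z ∉ Λ)
    (hs : HamSep Λ c) (hC : 1 ≤ C) (hE : E.Countable)
    (bd : ∀ w, w ∉ E → ‖f w‖ ≤ C*(1+‖w‖) ∨ ∃ a ∈ Λ, ‖w-a‖*(1+‖w‖) ≤ 1 ∧ ‖f w‖ ≤ C/‖w-a‖)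
    {r : ℝ} (hr : 2 ≤ r) :
    ‖proximity f r‖ ≤ (C*2 + 2*(768/c^2)) * r^2 := by
  classical
  have hr0 : 0 < r := by linarith
  have hir : 1/r ≤ 1/2 := by gcongr
  have hir0 : 0 < 1/r := by positivity
  have h2r : 2/r = 2*(1/r) := by ring
  set A := ((ham_finite iso (r+2/r)).toFinset).filter (fun a => r-2/r ≤ ‖a‖) with hA
  have hAmem : ∀ a, a ∈ A ↔ a ∈ Λ ∧ r-2/r ≤ ‖a‖ ∧ ‖a‖ ≤ r+2/r := by
    intro a
    simp only [hA, Finset.mem_filter, Set.Finite.mem_toFinset, Set.mem_inter_iff,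
      Metric.mem_closedBall, dist_zero_right]
    tauto
  have hN := ham_annulus hs hr A (fun a ha => (hAmem a).1 ha)
  set L0 := Real.log (C*(1+r)) with hL0
  have hL00 : 0 ≤ L0 := Real.log_nonneg (by nlinarith)
  set g : ℂ → ℝ := fun w => L0 + ∑ a ∈ A, (Real.log (3*r) - Real.log ‖w-a‖) with hg
  have hterm : ∀ w, ‖w‖ = r → ∀ a ∈ A, 0 ≤ Real.log (3*r) - Real.log ‖w-a‖ := by
    intro w hw a ha
    have h1 := norm_sub_le w a
    have h2 := ((hAmem a).1 ha).2.2
    rcases (norm_nonneg (w-a)).eq_or_lt with h3 | h3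
    · rw [← h3, Real.log_zero, sub_zero]; exact Real.log_nonneg (by linarith)
    · exact sub_nonneg.2 (Real.log_le_log h3 (by linarith))
  have hgb : ∀ w, ‖w‖ = r → w ∉ E → ‖logPlus ‖f w‖‖ ≤ g w := by
    intro w hw hwE
    have hlp : 0 ≤ logPlus ‖f w‖ := le_max_left _ _
    have hsum := Finset.sum_nonneg (hterm w hw)
    rw [Real.norm_of_nonneg hlp]
    apply max_le (by simp only [hg]; linarith)
    rcases (norm_nonneg (f w)).eq_or_lt with h0 | h0
    · rw [← h0, Real.log_zero]; simp only [hg]; linarith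
    rcases bd w hwE with hb | ⟨a, ha, hb1, hb2⟩
    · have := Real.log_le_log h0 hb
      rw [hw] at this
      simp only [hg]; linarith
    · have hwa : ‖w-a‖ ≤ 1/r := by
        rw [le_div_iff₀ hr0]
        refine le_trans ?_ hb1
        gcongr
        linarith
      have hd := abs_le.1 (abs_norm_sub_norm_le w a)
      have haA : a ∈ A := by
        rw [hAmem]
        refine ⟨ha, ?_, ?_⟩ <;> linarith
      have hwa0 : 0 < ‖w-a‖ := by
        rcases (norm_nonneg (w-a)).eq_or_lt with h3 | h3
        · rw [← h3, div_zero] at hb2; linarith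
        · exact h3
      have h1 := Real.log_le_log h0 hb2
      rw [Real.log_div (by linarith) hwa0.ne'] at h1
      have h2 : Real.log C ≤ L0 := Real.log_le_log (by linarith) (by nlinarith)
      have h3 := Finset.single_le_sum (f := fun a => Real.log (3*r) - Real.log ‖w-a‖) (hterm w hw) haA
      have h4 : 0 ≤ Real.log (3*r) := Real.log_nonneg (by linarith)
      simp only [hg]
      linarith
  have hci : ∀ a : ℂ, CircleIntegrable (fun w => Real.log (3*r) - Real.log ‖w-a‖) 0 r := fun a =>
    (circleIntegrable_const _ _ _).sub (circleIntegrable_log_norm_sub_const r)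
  have hcs : CircleIntegrable (fun w => ∑ a ∈ A, (Real.log (3*r) - Real.log ‖w-a‖)) 0 r := by
    have := CircleIntegrable.sum A (f := fun a w => Real.log (3*r) - Real.log ‖w-a‖) (c := 0) (R := r)
      (fun a _ => hci a)
    convert! this using 1
    ext w; simp
  have hcg : CircleIntegrable g 0 r := (circleIntegrable_const L0 0 r).add hcs
  have havg : Real.circleAverage g 0 r ≤ L0 + A.card * Real.log 3 := by
    rw [hg, Real.circleAverage_fun_add (circleIntegrable_const L0 0 r) hcs, Real.circleAverage_const,
      Real.circleAverage_fun_sum (fun a _ => hci a)]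
    gcongr
    rw [← nsmul_eq_mul]
    apply Finset.sum_le_card_nsmul
    intro a _
    rw [Real.circleAverage_fun_sub (circleIntegrable_const _ _ _) (circleIntegrable_log_norm_sub_const r),
      Real.circleAverage_const, circleAverage_log_norm_sub_const_eq_log_radius_add_posLog hr0.ne',
      Real.log_mul (by norm_num) hr0.ne']
    have := Real.posLog_nonneg (x := r⁻¹ * ‖0-a‖)
    linarith
  have hprox : ‖proximity f r‖ ≤ Real.circleAverage g 0 r := by
    rw [Real.circleAverage_def, smul_eq_mul, proximity, norm_mul, Real.norm_of_nonneg (by positivity)]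
    gcongr
    apply intervalIntegral.norm_integral_le_of_norm_le (by positivity) _ hcg
    have hz : MeasureTheory.volume (circleMap 0 r ⁻¹' E) = 0 :=
      (hE.preimage_circleMap 0 hr0.ne').measure_zero _
    filter_upwards [MeasureTheory.measure_eq_zero_iff_ae_notMem.1 hz] with θ hθ _
    have e : (r:ℂ)*Complex.exp (θ*Complex.I) = circleMap 0 r θ := by simp [circleMap]
    rw [e]
    exact hgb _ (by rw [norm_circleMap_zero, abs_of_pos hr0]) hθ
  have hl1 : L0 ≤ C*2*r^2 := by
    have := Real.log_le_sub_one_of_pos (x := C*(1+r)) (by positivity)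
    nlinarith
  have hl3 : Real.log 3 ≤ 2 := by
    have := Real.log_le_sub_one_of_pos (x := 3) (by norm_num)
    linarith
  have hl4 : (A.card:ℝ)*Real.log 3 ≤ (768/c^2*r^2)*2 := by
    gcongr
  linarith

lemma ham_nPoles {f : ℂ → ℂ} {Λ : Set ℂ} (iso : ∀ a : ℂ, ∀ᶠ z in 𝓝[≠] a, z ∉ Λ)
    (h0 : ∀ z, z ∉ Λ → poleMult f z = 0) (t : ℝ) :
    nPoles f t = ∑ a ∈ (ham_finite iso t).toFinset, (poleMult f a : ℝ) := by
  unfold nPoles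
  apply finsum_mem_eq_sum_of_inter_support_eq
  ext z
  simp only [Set.mem_inter_iff, Function.mem_support, Set.Finite.coe_toFinset]
  constructor
  · rintro ⟨h1, h2⟩
    refine ⟨⟨?_, h1⟩, h2⟩
    by_contra h3
    exact h2 (by simp [h0 z h3])
  · rintro ⟨⟨h1, h2⟩, h3⟩
    exact ⟨h2, h3⟩

lemma ham_counting {f : ℂ → ℂ} {Λ : Set ℂ} (iso : ∀ a : ℂ, ∀ᶠ z in 𝓝[≠] a, z ∉ Λ)
    (h0 : ∀ z, z ∉ Λ → poleMult f z = 0) (h1 : ∀ z ∈ Λ, poleMult f z ≤ 1) {K : ℝ}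
    (hK : ∀ r, 2 ≤ r → setCount Λ r ≤ K * r^2) :
    ∃ K', ∀ r, 2 ≤ r → ‖countingN f r‖ ≤ K' * r^2 := by
  have hK0 : 0 ≤ K := by
    have := hK 2 le_rfl
    have h2 : 0 ≤ setCount Λ 2 := by unfold setCount; positivity
    linarith
  have hn0 : ∀ t, 0 ≤ nPoles f t := by
    intro t; rw [ham_nPoles iso h0]; positivity
  have hn1 : ∀ t, nPoles f t ≤ setCount Λ t := by
    intro t
    rw [ham_nPoles iso h0, ham_setCount (ham_finite iso t)]
    refine (Finset.sum_le_card_nsmul _ _ 1 ?_).trans (by simp)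
    intro a ha
    simp only [Set.Finite.mem_toFinset, Set.mem_inter_iff] at ha
    exact_mod_cast h1 a ha.1
  have hmono : ∀ s t, s ≤ t → setCount Λ s ≤ setCount Λ t := by
    intro s t hst
    unfold setCount
    exact_mod_cast Set.ncard_le_ncard (Set.inter_subset_inter_right _
      (Metric.closedBall_subset_closedBall hst)) (ham_finite iso t)
  obtain ⟨δ, hδ0, hδ⟩ : ∃ δ > 0, ∀ z : ℂ, ‖z‖ < δ → z ≠ 0 → z ∉ Λ := by
    have := iso 0
    rw [eventually_nhdsWithin_iff, Metric.eventually_nhds_iff] at this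
    obtain ⟨δ, h1, h2⟩ := this
    exact ⟨δ, h1, fun z hz hz0 => h2 (by simpa using hz) hz0⟩
  have hsmall : ∀ t, 0 < t → t < δ → nPoles f t = nPoles f 0 := by
    intro t ht htδ
    rw [ham_nPoles iso h0, ham_nPoles iso h0]
    apply Finset.sum_congr _ fun _ _ => rfl
    ext z
    simp only [Set.Finite.mem_toFinset, Set.mem_inter_iff, Metric.mem_closedBall, dist_zero_right]
    constructor
    · rintro ⟨h1, h2⟩
      refine ⟨h1, ?_⟩
      by_contra h3
      exact hδ z (by linarith) (by rintro rfl; simp at h3) h1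
    · rintro ⟨h1, h2⟩
      exact ⟨h1, by linarith⟩
  set K3 := K*(1+4/δ^2) with hK3
  have hK30 : 0 ≤ K3 := by positivity
  have hint : ∀ t, 0 < t → ‖(nPoles f t - nPoles f 0)/t‖ ≤ K3*t := by
    intro t ht
    rw [norm_div, Real.norm_of_nonneg ht.le, div_le_iff₀ ht]
    by_cases htδ : t < δ
    · rw [hsmall t ht htδ, sub_self, norm_zero]; positivity
    · push Not at htδ
      have e1 : ‖nPoles f t - nPoles f 0‖ ≤ setCount Λ t := by
        rw [Real.norm_eq_abs, abs_le]
        have := hn0 t; have := hn0 0; have := hn1 t; have := hn1 0; have := hmono 0 t ht.le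
        constructor <;> linarith
      have e2 : setCount Λ t ≤ K*(t^2+4) := by
        rcases le_total 2 t with h2 | h2
        · refine (hK t h2).trans ?_
          gcongr; linarith
        · refine ((hmono t 2 h2).trans (hK 2 le_rfl)).trans ?_
          gcongr
          nlinarith
      have e3 : 4 ≤ 4/δ^2*t^2 := by
        rw [div_mul_eq_mul_div, le_div_iff₀ (by positivity)]
        gcongr
      have e4 : K*(t^2+4) ≤ K*(t^2+4/δ^2*t^2) := by gcongr
      calc _ ≤ K*(t^2+4/δ^2*t^2) := by linarith
        _ = K3*t*t := by rw [hK3]; ring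
  refine ⟨K3 + nPoles f 0, fun r hr => ?_⟩
  have hr0 : 0 < r := by linarith
  unfold countingN
  refine (norm_add_le _ _).trans ?_
  rw [add_mul]
  apply add_le_add
  · have := intervalIntegral.norm_integral_le_of_norm_le_const (a := 0) (b := r) (C := K3*r)
      (f := fun t => (nPoles f t - nPoles f 0)/t) (fun t ht => by
        rw [Set.uIoc_of_le hr0.le] at ht
        refine (hint t ht.1).trans ?_
        gcongr
        exact ht.2)
    rw [sub_zero, abs_of_pos hr0] at this
    calc _ ≤ K3*r*r := this
      _ = _ := by ring
  · rw [norm_mul, Real.norm_of_nonneg (hn0 0)]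
    apply mul_le_mul_of_nonneg_left _ (hn0 0)
    have := Real.log_le_sub_one_of_pos hr0
    rw [Real.norm_of_nonneg (Real.log_nonneg (by linarith))]
    nlinarith

lemma ham_nf_blow {f : ℂ → ℂ} {a : ℂ} (hf : MeromorphicNFAt f a) (ha : ¬ AnalyticAt ℂ f a) :
    Tendsto (fun z => ‖f z‖) (𝓝[≠] a) atTop := by
  rw [← hf.meromorphicOrderAt_nonneg_iff_analyticAt, not_le] at ha
  exact tendsto_norm_cobounded_atTop.comp (tendsto_cobounded_of_meromorphicOrderAt_neg ha)

lemma ham_ev_nhds {f g : ℂ → ℂ} {z : ℂ} (h : f =ᶠ[𝓝[≠] z] g) : ∀ᶠ w in 𝓝[≠] z, f =ᶠ[𝓝 w] g := by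
  filter_upwards [eventually_eventually_nhdsWithin.2 h, self_mem_nhdsWithin] with w hw hwz
  rwa [IsOpen.nhdsWithin_eq isOpen_compl_singleton hwz] at hw

lemma ham_reduce {α β : ℂ} {p q : ℂ → ℂ} (h : IsHamSolution α β p q) :
    ∃ P Q : ℂ → ℂ, ∃ Λ : Set ℂ, HamSol α β P Q Λ ∧ (∀ z, P =ᶠ[𝓝[≠] z] p) ∧ (∀ z, Q =ᶠ[𝓝[≠] z] q) := by
  obtain ⟨hp, hq, hode⟩ := h
  set P := toMeromorphicNFOn p Set.univ with hP
  set Q := toMeromorphicNFOn q Set.univ with hQ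
  have eP : ∀ z, P =ᶠ[𝓝[≠] z] p := fun z => hp.toMeromorphicNFOn_eq_self_on_nhdsNE (Set.mem_univ z)
  have eQ : ∀ z, Q =ᶠ[𝓝[≠] z] q := fun z => hq.toMeromorphicNFOn_eq_self_on_nhdsNE (Set.mem_univ z)
  have nP : ∀ z, MeromorphicNFAt P z := fun z => meromorphicNFOn_toMeromorphicNFOn p Set.univ (Set.mem_univ z)
  have nQ : ∀ z, MeromorphicNFAt Q z := fun z => meromorphicNFOn_toMeromorphicNFOn q Set.univ (Set.mem_univ z)
  set Λ : Set ℂ := {z | ¬ (AnalyticAt ℂ P z ∧ AnalyticAt ℂ Q z)} with hΛ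
  have iso : ∀ a : ℂ, ∀ᶠ z in 𝓝[≠] a, z ∉ Λ := by
    intro a
    filter_upwards [(nP a).meromorphicAt.eventually_analyticAt,
      (nQ a).meromorphicAt.eventually_analyticAt] with z h1 h2
    simp only [hΛ, Set.mem_ofPred_eq, not_not]
    exact ⟨h1, h2⟩
  have hder : ∀ z ∉ Λ, deriv P z = -(Q z)^2 - z*P z - α ∧ deriv Q z = (P z)^2+z*Q z+β := by
    intro z hz
    simp only [hΛ, Set.mem_ofPred_eq, not_not] at hz
    have hev : ∀ᶠ w in 𝓝[≠] z, deriv P w = -(Q w)^2 - w*P w - α ∧ deriv Q w = (P w)^2+w*Q w+β := by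
      filter_upwards [ham_ev_nhds (eP z), ham_ev_nhds (eQ z), iso z] with w h1 h2 h3
      simp only [hΛ, Set.mem_ofPred_eq, not_not] at h3
      rw [h1.deriv_eq, h2.deriv_eq, h1.eq_of_nhds, h2.eq_of_nhds]
      exact hode w (h3.1.congr h1) (h3.2.congr h2)
    have cP := hz.1.continuousAt
    have cQ := hz.2.continuousAt
    have cdP := hz.1.deriv.continuousAt
    have cdQ := hz.2.deriv.continuousAt
    constructor
    · have c1 : ContinuousAt (fun w => -(Q w)^2 - w*P w - α) z := by fun_prop
      exact ((cdP.eventuallyEq_nhds_iff_eventuallyEq_nhdsNE c1).1 (hev.mono fun w hw => hw.1)).eq_of_nhds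
    · have c1 : ContinuousAt (fun w => (P w)^2+w*Q w+β) z := by fun_prop
      exact ((cdQ.eventuallyEq_nhds_iff_eventuallyEq_nhdsNE c1).1 (hev.mono fun w hw => hw.2)).eq_of_nhds
  refine ⟨P, Q, Λ, ⟨?_, ?_, ham_countable iso, iso, ?_⟩, eP, eQ⟩
  · intro z hz
    have hz' := hz
    simp only [hΛ, Set.mem_ofPred_eq, not_not] at hz'
    rw [← (hder z hz).1]
    exact hz'.1.differentiableAt.hasDerivAt
  · intro z hz
    have hz' := hz
    simp only [hΛ, Set.mem_ofPred_eq, not_not] at hz'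
    rw [← (hder z hz).2]
    exact hz'.2.differentiableAt.hasDerivAt
  · intro a ha
    simp only [hΛ, Set.mem_ofPred_eq, not_and_or] at ha
    rcases ha with ha | ha
    · exact tendsto_atTop_mono (fun z => by linarith [norm_nonneg (Q z)]) (ham_nf_blow (nP a) ha)
    · exact tendsto_atTop_mono (fun z => by linarith [norm_nonneg (P z)]) (ham_nf_blow (nQ a) ha)

lemma ham_mult_le {f g : ℂ → ℂ} {a : ℂ} (hf : MeromorphicAt f a) (e : g =ᶠ[𝓝[≠] a] f) {K : ℝ}
    (hb : ∀ᶠ w in 𝓝[≠] a, ‖(w-a)*g w‖ ≤ K) : poleMult f a ≤ 1 := by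
  apply Nat.sInf_le
  simp only [Set.mem_ofPred_eq, pow_one]
  have hm : MeromorphicAt (fun w => (w-a)*f w) a := by fun_prop
  apply tendsto_nhds_of_meromorphicOrderAt_nonneg hm
  by_contra hcon
  have ht := tendsto_norm_cobounded_atTop.comp
    (tendsto_cobounded_of_meromorphicOrderAt_neg (not_le.1 hcon))
  obtain ⟨w, h1, h2, h3⟩ := ((ht.eventually_gt_atTop K).and (hb.and e)).exists
  rw [h3] at h2
  simp only [Function.comp] at h1
  linarith

lemma ham_mult_zero {f g : ℂ → ℂ} {a : ℂ} (e : g =ᶠ[𝓝[≠] a] f) (hg : ContinuousAt g a) :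
    poleMult f a = 0 := by
  apply Nat.sInf_eq_zero.2
  left
  refine ⟨g a, ?_⟩
  simp only [pow_zero, one_mul]
  exact (hg.tendsto.mono_left nhdsWithin_le_nhds).congr' e

lemma ham_near_bd {Λ : Set ℂ} {C c : ℝ} (iso : ∀ a : ℂ, ∀ᶠ z in 𝓝[≠] a, z ∉ Λ)
    (hs : HamSep Λ c) (hC : 1 ≤ C) {f : ℂ → ℂ}
    (bd : ∀ w, w ∉ Λ → ‖f w‖ ≤ C*(1+‖w‖) ∨ ∃ a ∈ Λ, ‖w-a‖*(1+‖w‖) ≤ 1 ∧ ‖f w‖ ≤ C/‖w-a‖)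
    {a : ℂ} (ha : a ∈ Λ) : ∀ᶠ w in 𝓝[≠] a, ‖(w-a)*f w‖ ≤ C*(2+‖a‖) := by
  obtain ⟨hc, hc1, hs⟩ := hs
  have hna := norm_nonneg a
  set d := c/(2*(1+‖a‖)) with hd
  have hd0 : 0 < d := by positivity
  have hd1 : d ≤ 1 := by rw [hd, div_le_one (by positivity)]; linarith
  filter_upwards [iso a, nhdsWithin_le_nhds (Metric.ball_mem_nhds a hd0), self_mem_nhdsWithin] with w h1 h2 h3
  rw [Metric.mem_ball, dist_eq_norm] at h2
  have hwa : 0 < ‖w-a‖ := norm_pos_iff.2 (sub_ne_zero.2 h3)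
  rw [norm_mul]
  rcases bd w h1 with hb | ⟨b, hb, hb1, hb2⟩
  · have h4 : ‖w‖ ≤ 1+‖a‖ := by linarith [norm_sub_norm_le w a]
    calc ‖w-a‖*‖f w‖ ≤ 1*(C*(1+‖w‖)) := by gcongr; linarith
      _ ≤ C*(2+‖a‖) := by rw [one_mul]; exact mul_le_mul_of_nonneg_left (by linarith) (by linarith)
  · have h5 : ‖w-a‖ ≤ ‖w-b‖ := by
      by_cases hab : a = b
      · rw [hab]
      · have h6 := hs a ha b hb hab
        have h7 : 2*d ≤ ‖b-a‖ := by
          have : 2*d = c/(1+‖a‖) := by rw [hd]; field_simp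
          rw [this, div_le_iff₀ (by positivity)]; exact h6
        have h8 : ‖b-a‖ ≤ ‖w-a‖+‖w-b‖ := by
          have := norm_sub_le (w-a) (w-b)
          have e : (w-a)-(w-b) = b-a := by ring
          rwa [e] at this
        linarith
    have h9 : ‖f w‖ ≤ C/‖w-a‖ := hb2.trans (by gcongr)
    rw [le_div_iff₀ hwa] at h9
    nlinarith

/-- For a transcendental solution `(p, q)` of the Hamiltonian system, the
counting functions of the poles with residue `ρ` (`ρ³ = 1`) satisfy
`n(r, Λ^ρ) = (1/3)·n(r, Λ) + O(r²)`; in particular, if one kind of poles is missing then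
`T(r, p) + T(r, q) = O(r²)`. -/
theorem stmt_9 (α β : ℂ) (p q : ℂ → ℂ) (h : IsHamSolution α β p q)
    (htr : ¬ IsRationalFn p) :
    (∀ ρ : ℂ, ρ ^ 3 = 1 →
      (fun r => setCount {z | IsPole p z ∧ HasResidue p z ρ} r
          - (1/3) * setCount {z | IsPole p z} r) =O[atTop] (fun r => r ^ 2)) ∧
    ((∃ ρ : ℂ, ρ ^ 3 = 1 ∧ {z | IsPole p z ∧ HasResidue p z ρ}.Finite) →
      (fun r => nevT p r + nevT q r) =O[atTop] (fun r => r ^ 2)) := by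
  obtain ⟨P, Q, Λ, hS, eP, eQ⟩ := ham_reduce h
  obtain ⟨hp, hq, -⟩ := h
  obtain ⟨C, c, hC, hc, hc1, hbd, hsep⟩ := hS.main
  have hsep' : HamSep Λ c := ⟨hc, hc1, hsep⟩
  have hres : ∀ a, ∃ ρ : ℂ, a ∈ Λ → (ρ^3 = 1 ∧ Tendsto (fun z => (z-a)*P z) (𝓝[≠] a) (𝓝 ρ)) := by
    intro a
    by_cases ha : a ∈ Λ
    · obtain ⟨ρ, h1⟩ := hS.residue ha
      exact ⟨ρ, fun _ => h1⟩
    · exact ⟨0, fun h => absurd h ha⟩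
  choose res hres using hres
  have bdP : ∀ w, w ∉ Λ → ‖P w‖ ≤ C*(1+‖w‖) ∨ ∃ a ∈ Λ, ‖w-a‖*(1+‖w‖) ≤ 1 ∧ ‖P w‖ ≤ C/‖w-a‖ := by
    intro w hw
    rcases hbd w hw with h1 | ⟨a, ha, h1, h2, h3⟩
    · exact Or.inl h1.1
    · exact Or.inr ⟨a, ha, h1, h2⟩
  have bdQ : ∀ w, w ∉ Λ → ‖Q w‖ ≤ C*(1+‖w‖) ∨ ∃ a ∈ Λ, ‖w-a‖*(1+‖w‖) ≤ 1 ∧ ‖Q w‖ ≤ C/‖w-a‖ := by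
    intro w hw
    rcases hbd w hw with h1 | ⟨a, ha, h1, h2, h3⟩
    · exact Or.inl h1.2
    · exact Or.inr ⟨a, ha, h1, h3⟩
  have hPole : HamPole P Λ res C c := by
    refine ⟨fun z hz => (hS.dP z hz).differentiableAt, hS.iso, hsep', hC, bdP,
      fun a ha => (hres a ha).2, fun a ha => ?_⟩
    have : ‖res a‖^3 = 1 := by rw [← norm_pow, (hres a ha).1, norm_one]
    exact (pow_eq_one_iff_of_nonneg (norm_nonneg _) (by norm_num)).1 this
  have hset : ∀ z, IsPole p z ↔ z ∈ Λ := by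
    intro z
    constructor
    · intro hz
      by_contra hzΛ
      have h1 : Tendsto (fun w => ‖p w‖) (𝓝[≠] z) (𝓝 ‖P z‖) :=
        (((hS.dP z hzΛ).continuousAt.norm.tendsto).mono_left nhdsWithin_le_nhds).congr'
          ((eP z).mono fun w hw => by rw [hw])
      exact not_tendsto_nhds_of_tendsto_atTop hz _ h1
    · intro hz
      exact (hS.tendP hz).congr' ((eP z).mono fun w hw => by rw [hw])
  have hsetΛ : {z | IsPole p z} = Λ := by ext z; exact hset z
  have hsetρ : ∀ ρ, {z | IsPole p z ∧ HasResidue p z ρ} = {z | z ∈ Λ ∧ res z = ρ} := by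
    intro ρ
    ext z
    simp only [Set.mem_ofPred_eq, hset]
    refine and_congr_right fun hz => ?_
    have h1 : Tendsto (fun w => (w-z)*p w) (𝓝[≠] z) (𝓝 (res z)) :=
      (hres z hz).2.congr' ((eP z).mono fun w hw => by rw [hw])
    constructor
    · intro h2
      exact tendsto_nhds_unique h1 h2
    · rintro rfl
      exact h1
  have h3 : ∀ a ∈ Λ, res a^3 = 1 := fun a ha => (hres a ha).1
  have hcount := fun {ρ : ℂ} (hρ : ρ^3 = 1) {r : ℝ} (hr : 2 ≤ r) => hPole.count h3 hρ hr
  rw [hsetΛ]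
  constructor
  · intro ρ hρ
    rw [hsetρ]
    refine IsBigO.of_bound (3*C + 2*C*(768/c^2)) ?_
    filter_upwards [eventually_ge_atTop (2:ℝ)] with r hr
    rw [Real.norm_eq_abs, Real.norm_of_nonneg (by positivity)]
    exact hcount hρ hr
  · rintro ⟨ρ, hρ, hfin⟩
    rw [hsetρ] at hfin
    set M : ℝ := ({z | z ∈ Λ ∧ res z = ρ}.ncard : ℝ) with hM
    set K : ℝ := 3*(M + (3*C + 2*C*(768/c^2))) with hK
    have hKb : ∀ r, 2 ≤ r → setCount Λ r ≤ K * r^2 := by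
      intro r hr
      have h4 := (abs_le.1 (hcount hρ hr)).1
      have h5 : setCount {z | z ∈ Λ ∧ res z = ρ} r ≤ M := by
        unfold setCount
        rw [hM]
        exact_mod_cast Set.ncard_le_ncard Set.inter_subset_left hfin
      have hM0 : 0 ≤ M := by positivity
      have h6 : M ≤ M*r^2 := le_mul_of_one_le_right hM0 (by nlinarith)
      rw [hK]; linarith
    have hcp : ∃ K', ∀ r, 2 ≤ r → ‖countingN p r‖ ≤ K' * r^2 :=
      ham_counting hS.iso (fun z hz => ham_mult_zero (eP z) (hS.dP z hz).continuousAt)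
        (fun z hz => ham_mult_le (hp z (Set.mem_univ z)) (eP z) (ham_near_bd hS.iso hsep' hC bdP hz)) hKb
    have hcq : ∃ K', ∀ r, 2 ≤ r → ‖countingN q r‖ ≤ K' * r^2 :=
      ham_counting hS.iso (fun z hz => ham_mult_zero (eQ z) (hS.dQ z hz).continuousAt)
        (fun z hz => ham_mult_le (hq z (Set.mem_univ z)) (eQ z) (ham_near_bd hS.iso hsep' hC bdQ hz)) hKb
    obtain ⟨K1, hK1⟩ := hcp
    obtain ⟨K2, hK2⟩ := hcq
    have hpr : ∀ (f g : ℂ → ℂ), (∀ z, g =ᶠ[𝓝[≠] z] f) →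
        (∀ w, w ∉ Λ → ‖g w‖ ≤ C*(1+‖w‖) ∨ ∃ a ∈ Λ, ‖w-a‖*(1+‖w‖) ≤ 1 ∧ ‖g w‖ ≤ C/‖w-a‖) →
        ∀ r, 2 ≤ r → ‖proximity f r‖ ≤ (C*2 + 2*(768/c^2)) * r^2 := by
      intro f g e hg r hr
      have hE : (Λ ∪ {z | g z ≠ f z}).Countable := by
        apply hS.ct.union
        apply ham_countable
        intro a
        filter_upwards [e a] with z hz hz'
        exact hz' hz
      refine ham_prox hS.iso hsep' hC hE (fun w hw => ?_) hr
      have h7 : w ∉ Λ := fun h => hw (Or.inl h)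
      have h8 : g w = f w := by
        by_contra h8
        exact hw (Or.inr h8)
      rw [← h8]
      exact hg w h7
    refine IsBigO.of_bound ((C*2 + 2*(768/c^2)) + K1 + ((C*2 + 2*(768/c^2)) + K2)) ?_
    filter_upwards [eventually_ge_atTop (2:ℝ)] with r hr
    rw [Real.norm_of_nonneg (by positivity : 0 ≤ r^2)]
    unfold nevT
    have a1 := norm_add_le (proximity p r + countingN p r) (proximity q r + countingN q r)
    have a2 := norm_add_le (proximity p r) (countingN p r)
    have a3 := norm_add_le (proximity q r) (countingN q r)
    have a4 := hpr p P eP bdP r hr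
    have a5 := hpr q Q eQ bdQ r hr
    have a6 := hK1 r hr
    have a7 := hK2 r hr
    linarith
end
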